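/- arXiv:1403.1409 — 2 statements merged into one kernel-verified Lean document; each statement's English description precedes it below -/
import Mathlib

section
/- Let K be an algebraically closed field, Z ⊂ ℙ^r a finite reduced set of points whose h-vector has value k in degree n and k−1 in degree n+1, with n ≥ k ≥ 2, and is zero in all degrees ≥ n+2. Assume that the base locus of [J]_{n+1} (J the artinian reduction of I_Z) is a zero-dimensional scheme in ℙ^{r−1} of degree k−1. Then the saturation of the ideal generated by all components of I_Z of degree ≤ n+1 is the homogeneous ideal of a reduced curve V of degree k−1; moreover, if C denotes the unmixed one-dimensional part of V, Z_1 the subset of Z lying on C, and Z_2 = Z ∖ Z_1, then the ideal generated by [I_{Z_1}]_{≤ n+1} equals I_C, Δh_{Z_1}(t) = Δh_C(t) for t ≤ n+1 and Δh_{Z_1}(t) = Δh_Z(t) for t ≥ n+1. -/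
open MvPolynomial

/-- The Hilbert function of `S/I` in degree `t`: the dimension over `K` of the image of the
space of homogeneous polynomials of degree `t` in the quotient `S/I`. -/
noncomputable def hilb {K : Type*} [Field K] {σ : Type*} (I : Ideal (MvPolynomial σ K)) (t : ℕ) : ℕ :=
  Module.finrank K
    ((homogeneousSubmodule σ K t).map (Ideal.Quotient.mkₐ K I).toLinearMap)

/-- The ideal generated by the degree-`n` component of `I`, i.e. by all homogeneous elements of
`I` of degree `n`.  Its zero locus is the base locus of the linear system `[I]_n`. -/
noncomputable def compIdeal {K : Type*} [Field K] {σ : Type*} (I : Ideal (MvPolynomial σ K)) (n : ℕ) :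
    Ideal (MvPolynomial σ K) :=
  Ideal.span ((I : Set (MvPolynomial σ K)) ∩ (homogeneousSubmodule σ K n : Set (MvPolynomial σ K)))

/-- The ideal generated by all homogeneous elements of `I` of degree at most `n`,
i.e. `⟨[I]_{≤ n}⟩`. -/
noncomputable def lowIdeal {K : Type*} [Field K] {σ : Type*} (I : Ideal (MvPolynomial σ K)) (n : ℕ) :
    Ideal (MvPolynomial σ K) :=
  Ideal.span ((I : Set (MvPolynomial σ K)) ∩
    ⋃ t ≤ n, (homogeneousSubmodule σ K t : Set (MvPolynomial σ K)))

/-- The first difference of the Hilbert function of `R/I`; for the saturated ideal of a finite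
set of points this is the `h`-vector, i.e. the Hilbert function of an artinian reduction by a
general linear form. -/
noncomputable def hvec {K : Type*} [Field K] {σ : Type*} (I : Ideal (MvPolynomial σ K)) : ℕ → ℕ
  | 0 => hilb I 0
  | t + 1 => hilb I (t + 1) - hilb I t

/-- The saturated homogeneous ideal of a (finite) set of points of `ℙ^{m-1}`, the points being
given by (nonzero) representative vectors: a polynomial lies in this ideal iff it vanishes at
every scalar multiple of every representative, i.e. iff all of its homogeneous components vanish
at the corresponding projective points. -/
noncomputable def pointsIdeal {K : Type*} [Field K] {m : ℕ} (Z : Set (Fin m → K)) :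
    Ideal (MvPolynomial (Fin m) K) :=
  ⨅ v ∈ Z, ⨅ c : K, RingHom.ker (eval (c • v))

/-- The saturation of a homogeneous ideal with respect to the irrelevant maximal ideal. -/
noncomputable def saturate {K : Type*} [Field K] {σ : Type*} (I : Ideal (MvPolynomial σ K)) :
    Ideal (MvPolynomial σ K) :=
  ⨆ N : ℕ, Submodule.colon I (((Ideal.span (Set.range (X : σ → MvPolynomial σ K))) ^ N :
    Ideal (MvPolynomial σ K)) : Set (MvPolynomial σ K))

/-- The (reduced) one-dimensional part of the projective scheme defined by a homogeneous ideal
`V`: the intersection of those minimal primes of `V` whose quotient has Krull dimension `2`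
(affine cones over curves). -/
noncomputable def curvePart {K : Type*} [Field K] {σ : Type*} (V : Ideal (MvPolynomial σ K)) :
    Ideal (MvPolynomial σ K) :=
  sInf {P | P ∈ V.minimalPrimes ∧ ringKrullDim (MvPolynomial σ K ⧸ P) = 2}

/-!
Write `I` for the ideal of `Z`, `W` for the ideal generated by the forms of degree at most `n + 1`
in `I`, and `d` for the degree of the base locus. By persistence the Hilbert function of
`R / (W + (L))` equals `d` in all degrees from `n + 1` on, so for a generic second linear form `l`
multiplication by `l` on `R / (W + (L))` is bijective in these degrees, and a Koszul argument makes
`L` a nonzerodivisor modulo `W`. Let `T` be the `K[L, l]`-torsion ideal of `W`. It is generated in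
degree at most `n + 1`, the first difference of its Hilbert function is `d` from degree `n + 1` on,
`T ∩ I = W`, and `T ≤ curvePart W ≤ √T`. Interpolation shows that a form of degree at most `n + 1`
vanishing at the points of `Z` where `T` vanishes lies in `T`. So everything follows once `T` is
radical, and then `W` is radical by `T ∩ I = W`.

Counting dimensions, every linear form `x` satisfies a relation over `K[L, l]` modulo `W` of degree
at most `d` in `x`. Over a perfect field and for generic `L` and `l`, the differentials of `L` and
`l` span the differentials of the residue fields at the two-dimensional minimal primes, so the
minimal polynomials of the variables over `K[L, l]` at these primes are separable. For each
variable, the product of the distinct ones is separable and homogeneous of degree at most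
`d ≤ n + 1`. It vanishes on the curve, hence lies in `T`. Therefore `(R / W) ⊗ Frac K[L, l]` is
unramified over `Frac K[L, l]`, hence reduced, and `T` is radical.
-/

namespace PointsCurve

attribute [local instance] MvPolynomial.gradedAlgebra

variable {K : Type*} [Field K] {σ : Type*}

section Homogeneity

theorem coe_decompose_eq_homogeneousComponent (f : MvPolynomial σ K) (t : ℕ) :
    (DirectSum.decompose (homogeneousSubmodule σ K) f t : MvPolynomial σ K) =
      homogeneousComponent t f :=
  decomposition.decompose'_apply f t

theorem homogeneousComponent_add_mul {g : MvPolynomial σ K} {d : ℕ} (hg : g.IsHomogeneous d)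
    (f : MvPolynomial σ K) (t : ℕ) :
    homogeneousComponent (t + d) (g * f) = g * homogeneousComponent t f := by
  simpa only [coe_decompose_eq_homogeneousComponent, add_comm t d] using
    DirectSum.coe_decompose_mul_add_of_left_mem (homogeneousSubmodule σ K) hg (b := f) (j := t)

theorem homogeneousComponent_mul_of_lt {g : MvPolynomial σ K} {d : ℕ} (hg : g.IsHomogeneous d)
    (f : MvPolynomial σ K) {t : ℕ} (ht : t < d) : homogeneousComponent t (g * f) = 0 := by
  simpa only [coe_decompose_eq_homogeneousComponent] using
    DirectSum.coe_decompose_mul_of_left_mem_of_not_le (homogeneousSubmodule σ K) hg (b := f)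
      ht.not_ge

theorem isHomogeneous_of_forall_homogeneousComponent_mem {I : Ideal (MvPolynomial σ K)}
    (h : ∀ f ∈ I, ∀ t, homogeneousComponent t f ∈ I) :
    I.IsHomogeneous (homogeneousSubmodule σ K) :=
  fun t f hf => by simpa only [coe_decompose_eq_homogeneousComponent] using h f hf t

theorem isHomogeneous_linear_mul {L g : MvPolynomial σ K} {t : ℕ} (hL : L.IsHomogeneous 1)
    (hg : g.IsHomogeneous t) : (L * g).IsHomogeneous (t + 1) :=
  add_comm 1 t ▸ hL.mul hg

theorem exists_isHomogeneous_of_linear_dvd {L v : MvPolynomial σ K} {t : ℕ}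
    (hL : L.IsHomogeneous 1) (hv : v.IsHomogeneous (t + 1)) (h : L ∣ v) :
    ∃ g : MvPolynomial σ K, g.IsHomogeneous t ∧ v = L * g := by
  obtain ⟨c, rfl⟩ := h
  refine ⟨homogeneousComponent t c, homogeneousComponent_isHomogeneous _ _, ?_⟩
  rw [← homogeneousComponent_add_mul hL, homogeneousComponent_eq_self hv]

theorem prime_of_linear {L : MvPolynomial σ K} (hL : L.IsHomogeneous 1) (hL0 : L ≠ 0) :
    Prime L := by
  rw [← UniqueFactorizationMonoid.irreducible_iff_prime]
  refine irreducible_of_totalDegree_eq_one (hL.totalDegree hL0) fun x hx => ?_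
  rw [isUnit_iff_ne_zero]
  rintro rfl
  exact hL0 (MvPolynomial.ext _ _ fun i => by simpa using hx i)

theorem eval_smul_of_isHomogeneous {f : MvPolynomial σ K} {t : ℕ} (hf : f.IsHomogeneous t)
    (c : K) (v : σ → K) : eval (c • v) f = c ^ t * eval v f := by
  rw [eval_eq, eval_eq, Finset.mul_sum]
  refine Finset.sum_congr rfl fun e he => ?_
  simp only [Pi.smul_apply, smul_eq_mul, mul_pow, Finset.prod_mul_distrib]
  rw [Finset.prod_pow_eq_pow_sum, ← hf.degree_eq_sum_deg_support he]
  ring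

theorem homogeneousSubmodule_mul_homogeneousSubmodule (s t : ℕ) :
    homogeneousSubmodule σ K s * homogeneousSubmodule σ K t = homogeneousSubmodule σ K (s + t) := by
  rw [← homogeneousSubmodule_one_pow K s, ← homogeneousSubmodule_one_pow K t, ← pow_add,
    homogeneousSubmodule_one_pow]

theorem mem_homogeneousSubmodule_one_mul_iff [Fintype σ] {p : Submodule K (MvPolynomial σ K)}
    {f : MvPolynomial σ K} :
    f ∈ homogeneousSubmodule σ K 1 * p ↔
      ∃ w : σ → MvPolynomial σ K, (∀ i, w i ∈ p) ∧ f = ∑ i, X i * w i := by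
  constructor
  · intro hf
    induction hf using Submodule.mul_induction_on' with
    | mem_mul_mem m hm w hw =>
      rw [homogeneousSubmodule_one_eq_span_X] at hm
      obtain ⟨c, rfl⟩ := (Submodule.mem_span_range_iff_exists_fun K).1 hm
      refine ⟨fun i => c i • w, fun i => p.smul_mem _ hw, ?_⟩
      simp only [Finset.sum_mul, smul_mul_assoc, mul_smul_comm]
    | add a _ b _ ha hb =>
      obtain ⟨v, hv, rfl⟩ := ha
      obtain ⟨w, hw, rfl⟩ := hb
      refine ⟨v + w, fun i => p.add_mem (hv i) (hw i), ?_⟩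
      simp only [Pi.add_apply, mul_add, Finset.sum_add_distrib]
  · rintro ⟨w, hw, rfl⟩
    exact Submodule.sum_mem _ fun i _ => Submodule.mul_mem_mul (isHomogeneous_X K i) (hw i)

theorem exists_eq_sum_X_mul [Fintype σ] {f : MvPolynomial σ K} {t : ℕ}
    (hf : f.IsHomogeneous (t + 1)) :
    ∃ w : σ → MvPolynomial σ K, (∀ i, (w i).IsHomogeneous t) ∧ f = ∑ i, X i * w i :=
  (mem_homogeneousSubmodule_one_mul_iff (p := homogeneousSubmodule σ K t)).1 <| by
    rwa [homogeneousSubmodule_mul_homogeneousSubmodule, add_comm]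

theorem mul_mem_of_forall_isHomogeneous_mul_mem {J : Ideal (MvPolynomial σ K)} {d t : ℕ}
    {a f : MvPolynomial σ K} (ha : a.IsHomogeneous t) (hdt : d ≤ t)
    (h : ∀ g : MvPolynomial σ K, g.IsHomogeneous d → g * f ∈ J) : a * f ∈ J := by
  rw [← mem_homogeneousSubmodule, ← Nat.sub_add_cancel hdt,
    ← homogeneousSubmodule_mul_homogeneousSubmodule] at ha
  induction ha using Submodule.mul_induction_on' with
  | mem_mul_mem b _ g hg => exact mul_assoc b g f ▸ J.mul_mem_left b (h g hg)
  | add a _ b _ ha hb => exact add_mul a b f ▸ J.add_mem ha hb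

-- Each coefficient may be replaced by its component of the complementary degree.
theorem mem_of_mem_span_of_isHomogeneous {S : Set (MvPolynomial σ K)} {f : MvPolynomial σ K}
    {t : ℕ} (hf : f.IsHomogeneous t) (hfS : f ∈ Ideal.span S) {p : Submodule K (MvPolynomial σ K)}
    (h : ∀ s ∈ S, ∃ e, s.IsHomogeneous e ∧
      ∀ u, u + e = t → ∀ a : MvPolynomial σ K, a.IsHomogeneous u → a * s ∈ p) : f ∈ p := by
  obtain ⟨c, hcS, hcf⟩ := Submodule.mem_span_set.1 hfS
  rw [← homogeneousComponent_eq_self hf, ← hcf, Finsupp.sum, map_sum]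
  refine p.sum_mem fun s hs => ?_
  obtain ⟨e, hse, hp⟩ := h s (hcS hs)
  rw [smul_eq_mul, mul_comm]
  rcases lt_or_ge t e with hlt | hge
  · rw [homogeneousComponent_mul_of_lt hse _ hlt]
    exact p.zero_mem
  · obtain ⟨u, rfl⟩ := Nat.exists_eq_add_of_le' hge
    rw [homogeneousComponent_add_mul hse, mul_comm]
    exact hp u rfl _ (homogeneousComponent_isHomogeneous u _)

theorem mem_sup_span_singleton_of_sub_mem {I : Ideal (MvPolynomial σ K)}
    {L f g : MvPolynomial σ K} (h : f - L * g ∈ I) : f ∈ I ⊔ Ideal.span {L} := by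
  rw [← sub_add_cancel f (L * g)]
  exact Ideal.add_mem _ (Ideal.mem_sup_left h)
    (Ideal.mem_sup_right (Ideal.mem_span_singleton.2 (dvd_mul_right L g)))

theorem exists_sub_linear_mul_mem {I : Ideal (MvPolynomial σ K)}
    (hI : I.IsHomogeneous (homogeneousSubmodule σ K)) {L : MvPolynomial σ K}
    (hL : L.IsHomogeneous 1) {t : ℕ} {f : MvPolynomial σ K} (hf : f.IsHomogeneous (t + 1))
    (h : f ∈ I ⊔ Ideal.span {L}) : ∃ g : MvPolynomial σ K, g.IsHomogeneous t ∧ f - L * g ∈ I := by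
  obtain ⟨a, ha, b, hb, hab⟩ := Submodule.mem_sup.1 h
  obtain ⟨c, rfl⟩ := Ideal.mem_span_singleton.1 hb
  refine ⟨homogeneousComponent t c, homogeneousComponent_isHomogeneous _ _, ?_⟩
  have hcomp := congrArg (homogeneousComponent (t + 1)) hab
  rw [map_add, homogeneousComponent_add_mul hL, homogeneousComponent_eq_self hf] at hcomp
  rw [← hcomp, add_sub_cancel_right]
  exact homogeneousComponent_mem_of_mem hI ha _

end Homogeneity

section LowDegree

variable {I J : Ideal (MvPolynomial σ K)} {n t : ℕ} {f : MvPolynomial σ K}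

theorem mem_lowIdeal (hf : f.IsHomogeneous t) (ht : t ≤ n) (h : f ∈ I) : f ∈ lowIdeal I n :=
  Ideal.subset_span ⟨h, Set.mem_iUnion₂.2 ⟨t, ht, hf⟩⟩

theorem lowIdeal_le_iff :
    lowIdeal I n ≤ J ↔ ∀ t ≤ n, ∀ f : MvPolynomial σ K, f.IsHomogeneous t → f ∈ I → f ∈ J := by
  refine ⟨fun h t ht f hf hfI => h (mem_lowIdeal hf ht hfI), fun h => Ideal.span_le.2 ?_⟩
  rintro f ⟨hfI, hf⟩
  obtain ⟨t, ht, hf⟩ := Set.mem_iUnion₂.1 hf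
  exact h t ht f hf hfI

theorem lowIdeal_le : lowIdeal I n ≤ I :=
  lowIdeal_le_iff.2 fun _ _ _ _ h => h

theorem isHomogeneous_lowIdeal (I : Ideal (MvPolynomial σ K)) (n : ℕ) :
    (lowIdeal I n).IsHomogeneous (homogeneousSubmodule σ K) := by
  refine Ideal.homogeneous_span _ _ fun f hf => ?_
  obtain ⟨t, _, hft⟩ := Set.mem_iUnion₂.1 hf.2
  exact ⟨t, hft⟩

theorem compIdeal_le_lowIdeal : compIdeal I n ≤ lowIdeal I n :=
  Ideal.span_le.2 fun _ h => mem_lowIdeal h.2 le_rfl h.1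

theorem mem_compIdeal_of_mem_lowIdeal (hf : f.IsHomogeneous t) (ht : n ≤ t)
    (h : f ∈ lowIdeal I n) : f ∈ compIdeal I n := by
  refine mem_of_mem_span_of_isHomogeneous (p := (compIdeal I n).restrictScalars K) hf h ?_
  rintro s ⟨hsI, hs⟩
  obtain ⟨e, hen, hse⟩ := Set.mem_iUnion₂.1 hs
  refine ⟨e, hse, fun u hu a ha => ?_⟩
  refine mul_mem_of_forall_isHomogeneous_mul_mem (d := n - e) ha (by omega) fun g hg => ?_
  refine Ideal.subset_span ⟨I.mul_mem_left g hsI, ?_⟩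
  exact Nat.sub_add_cancel hen ▸ hg.mul hse

theorem exists_eq_sum_X_mul_of_mem_lowIdeal [Fintype σ] (ht : n ≤ t)
    (hf : f.IsHomogeneous (t + 1)) (h : f ∈ lowIdeal I n) :
    ∃ w : σ → MvPolynomial σ K, (∀ i, (w i).IsHomogeneous t ∧ w i ∈ lowIdeal I n) ∧
      f = ∑ i, X i * w i := by
  refine (mem_homogeneousSubmodule_one_mul_iff
    (p := homogeneousSubmodule σ K t ⊓ (lowIdeal I n).restrictScalars K)).1
    (mem_of_mem_span_of_isHomogeneous hf h ?_)
  rintro s ⟨hsI, hs⟩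
  obtain ⟨e, hen, hse⟩ := Set.mem_iUnion₂.1 hs
  refine ⟨e, hse, fun u hu a ha => ?_⟩
  obtain ⟨u, rfl⟩ : ∃ v, u = v + 1 := ⟨u - 1, by omega⟩
  obtain ⟨w, hw, rfl⟩ := exists_eq_sum_X_mul ha
  rw [Finset.sum_mul]
  refine Submodule.sum_mem _ fun i _ => ?_
  rw [mul_assoc]
  refine Submodule.mul_mem_mul (isHomogeneous_X K i) ⟨?_, ?_⟩
  · exact (by omega : u + e = t) ▸ (hw i).mul hse
  · exact Ideal.mul_mem_left _ _ (mem_lowIdeal hse hen hsI)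

end LowDegree

section HilbertFunction

/-- The degree-`t` component `[I]_t` of an ideal of the polynomial ring. -/
noncomputable def gradedPiece (I : Ideal (MvPolynomial σ K)) (t : ℕ) :
    Submodule K (MvPolynomial σ K) :=
  homogeneousSubmodule σ K t ⊓ I.restrictScalars K

theorem mem_gradedPiece {I : Ideal (MvPolynomial σ K)} {t : ℕ} {f : MvPolynomial σ K} :
    f ∈ gradedPiece I t ↔ f.IsHomogeneous t ∧ f ∈ I := by
  simp [gradedPiece]

section Linear

variable {I : Ideal (MvPolynomial σ K)} {L : MvPolynomial σ K} {t : ℕ}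

theorem gradedPiece_sup_span_singleton (hI : I.IsHomogeneous (homogeneousSubmodule σ K))
    (hL : L.IsHomogeneous 1) :
    gradedPiece (I ⊔ Ideal.span {L}) (t + 1) =
      gradedPiece I (t + 1) ⊔ (homogeneousSubmodule σ K t).map (LinearMap.mulLeft K L) := by
  ext f
  rw [mem_gradedPiece, Submodule.mem_sup (p := gradedPiece I (t + 1))]
  constructor
  · rintro ⟨hf, h⟩
    obtain ⟨g, hg, hfg⟩ := exists_sub_linear_mul_mem hI hL hf h
    exact ⟨f - L * g, ⟨hf.sub (isHomogeneous_linear_mul hL hg), hfg⟩, L * g, ⟨g, hg, rfl⟩,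
      sub_add_cancel _ _⟩
  · rintro ⟨a, ha, _, ⟨g, hg, rfl⟩, rfl⟩
    refine ⟨ha.1.add (isHomogeneous_linear_mul hL hg),
      mem_sup_span_singleton_of_sub_mem (g := g) ?_⟩
    simpa using ha.2

theorem gradedPiece_inf_map_mulLeft (hL : L.IsHomogeneous 1)
    (hinj : ∀ f : MvPolynomial σ K, f.IsHomogeneous t → L * f ∈ I → f ∈ I) :
    gradedPiece I (t + 1) ⊓ (homogeneousSubmodule σ K t).map (LinearMap.mulLeft K L) =
      (gradedPiece I t).map (LinearMap.mulLeft K L) := by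
  ext f
  constructor
  · rintro ⟨ha, g, hg, rfl⟩
    exact ⟨g, ⟨hg, hinj g hg ha.2⟩, rfl⟩
  · rintro ⟨g, hg, rfl⟩
    exact ⟨⟨isHomogeneous_linear_mul hL hg.1, I.mul_mem_left _ hg.2⟩, g, hg.1, rfl⟩

end Linear

variable [Finite σ]

instance finiteDimensional_homogeneousSubmodule (t : ℕ) :
    FiniteDimensional K (homogeneousSubmodule σ K t) :=
  Module.Finite.iff_fg.2 (homogeneousSubmodule_fg σ K t)

instance finiteDimensional_gradedPiece (I : Ideal (MvPolynomial σ K)) (t : ℕ) :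
    FiniteDimensional K (gradedPiece I t) :=
  Submodule.finiteDimensional_of_le (S₂ := homogeneousSubmodule σ K t) inf_le_left

theorem hilb_add_finrank_gradedPiece (I : Ideal (MvPolynomial σ K)) (t : ℕ) :
    hilb I t + Module.finrank K (gradedPiece I t) =
      Module.finrank K (homogeneousSubmodule σ K t) := by
  let φ := (Ideal.Quotient.mkₐ K I).toLinearMap.domRestrict (homogeneousSubmodule σ K t)
  have hker : (LinearMap.ker φ).map (homogeneousSubmodule σ K t).subtype = gradedPiece I t := by
    ext f
    simp [φ, mem_gradedPiece, Ideal.Quotient.eq_zero_iff_mem, and_comm]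
  rw [hilb, ← LinearMap.range_domRestrict, ← hker, Submodule.finrank_map_subtype_eq]
  exact LinearMap.finrank_range_add_finrank_ker φ

section Comparison

variable {I J : Ideal (MvPolynomial σ K)} {t : ℕ}

theorem hilb_anti (h : ∀ f : MvPolynomial σ K, f.IsHomogeneous t → f ∈ I → f ∈ J) :
    hilb J t ≤ hilb I t := by
  have hI := hilb_add_finrank_gradedPiece I t
  have hJ := hilb_add_finrank_gradedPiece J t
  have hle : gradedPiece I t ≤ gradedPiece J t := fun f hf => ⟨hf.1, h f hf.1 hf.2⟩
  have := Submodule.finrank_mono hle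
  omega

theorem hilb_congr (h : ∀ f : MvPolynomial σ K, f.IsHomogeneous t → (f ∈ I ↔ f ∈ J)) :
    hilb I t = hilb J t :=
  le_antisymm (hilb_anti fun f hf => (h f hf).2) (hilb_anti fun f hf => (h f hf).1)

theorem mem_of_hilb_le (hIJ : I ≤ J) (hh : hilb I t ≤ hilb J t) {f : MvPolynomial σ K}
    (hf : f.IsHomogeneous t) (hfJ : f ∈ J) : f ∈ I := by
  have hI := hilb_add_finrank_gradedPiece I t
  have hJ := hilb_add_finrank_gradedPiece J t
  have hle : gradedPiece I t ≤ gradedPiece J t := fun f hf => ⟨hf.1, hIJ hf.2⟩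
  have heq := Submodule.eq_of_le_of_finrank_le hle (by omega)
  exact (mem_gradedPiece.1 (heq ▸ mem_gradedPiece.2 ⟨hf, hfJ⟩)).2

theorem hilb_eq_zero_iff :
    hilb I t = 0 ↔ ∀ f : MvPolynomial σ K, f.IsHomogeneous t → f ∈ I := by
  refine ⟨fun h f hf => mem_of_hilb_le (J := ⊤) le_top (by omega) hf trivial, fun h => ?_⟩
  have hpiece : gradedPiece I t = homogeneousSubmodule σ K t := inf_eq_left.2 h
  have := hilb_add_finrank_gradedPiece I t
  rw [hpiece] at this
  omega

theorem hilb_succ_eq_zero (h : hilb I t = 0) : hilb I (t + 1) = 0 := by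
  have := Fintype.ofFinite σ
  rw [hilb_eq_zero_iff] at h ⊢
  intro f hf
  obtain ⟨w, hw, rfl⟩ := exists_eq_sum_X_mul hf
  exact I.sum_mem fun i _ => I.mul_mem_left _ (h _ (hw i))

theorem hvec_congr (h : ∀ s ≤ t, ∀ f : MvPolynomial σ K, f.IsHomogeneous s → (f ∈ I ↔ f ∈ J)) :
    hvec I t = hvec J t := by
  cases t with
  | zero => exact hilb_congr (h 0 le_rfl)
  | succ t => exact congrArg₂ (· - ·) (hilb_congr (h _ le_rfl)) (hilb_congr (h t t.le_succ))

end Comparison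

theorem hilb_succ {I : Ideal (MvPolynomial σ K)}
    (hI : I.IsHomogeneous (homogeneousSubmodule σ K)) {L : MvPolynomial σ K}
    (hL : L.IsHomogeneous 1) (hL0 : L ≠ 0) {t : ℕ}
    (hinj : ∀ f : MvPolynomial σ K, f.IsHomogeneous t → L * f ∈ I → f ∈ I) :
    hilb I (t + 1) = hilb I t + hilb (I ⊔ Ideal.span {L}) (t + 1) := by
  have hmul : Function.Injective (LinearMap.mulLeft K L) := mul_right_injective₀ hL0
  have hsup := Submodule.finrank_sup_add_finrank_inf_eq (gradedPiece I (t + 1))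
    ((homogeneousSubmodule σ K t).map (LinearMap.mulLeft K L))
  rw [← gradedPiece_sup_span_singleton hI hL, gradedPiece_inf_map_mulLeft hL hinj,
    ← (Submodule.equivMapOfInjective _ hmul _).finrank_eq,
    ← (Submodule.equivMapOfInjective _ hmul _).finrank_eq] at hsup
  have h₀ := hilb_add_finrank_gradedPiece I t
  have h₁ := hilb_add_finrank_gradedPiece I (t + 1)
  have h₂ := hilb_add_finrank_gradedPiece (I ⊔ Ideal.span {L}) (t + 1)
  omega

end HilbertFunction

theorem exists_isHomogeneous_one_forall_notMem [Infinite K]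
    {s : Set (Submodule K (MvPolynomial σ K))} (hs : s.Finite) (h : ∀ p ∈ s, ∃ i, X i ∉ p) :
    ∃ L : MvPolynomial σ K, L.IsHomogeneous 1 ∧ ∀ p ∈ s, L ∉ p := by
  classical
  let s' := hs.toFinset.image fun p => p.comap (homogeneousSubmodule σ K 1).subtype
  have htop : ⊤ ∉ s' := by
    intro hmem
    obtain ⟨p, hp, hp'⟩ := Finset.mem_image.1 hmem
    obtain ⟨i, hi⟩ := h p (hs.mem_toFinset.1 hp)
    exact hi (hp'.ge (Submodule.mem_top (x := ⟨X i, isHomogeneous_X K i⟩)))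
  obtain ⟨L, hL⟩ := (Set.ne_univ_iff_exists_notMem _).1
    (Subspace.biUnion_ne_univ_of_top_notMem (k := K) htop)
  refine ⟨L, L.2, fun p hp hLp => hL ?_⟩
  exact Set.mem_iUnion₂.2 ⟨_, Finset.mem_image_of_mem _ (hs.mem_toFinset.2 hp), hLp⟩

section PointsIdeal

variable {m : ℕ} {Z : Set (Fin m → K)} {f : MvPolynomial (Fin m) K}

theorem mem_pointsIdeal_iff : f ∈ pointsIdeal Z ↔ ∀ v ∈ Z, ∀ c : K, eval (c • v) f = 0 := by
  simp [pointsIdeal, Submodule.mem_iInf, RingHom.mem_ker]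

theorem eval_eq_zero_of_mem_pointsIdeal (hf : f ∈ pointsIdeal Z) {v : Fin m → K} (hv : v ∈ Z) :
    eval v f = 0 := by
  simpa using mem_pointsIdeal_iff.1 hf v hv 1

theorem mem_pointsIdeal_iff_of_isHomogeneous {t : ℕ} (hf : f.IsHomogeneous t) :
    f ∈ pointsIdeal Z ↔ ∀ v ∈ Z, eval v f = 0 := by
  refine ⟨fun h v hv => eval_eq_zero_of_mem_pointsIdeal h hv, fun h => ?_⟩
  refine mem_pointsIdeal_iff.2 fun v hv c => ?_
  rw [eval_smul_of_isHomogeneous hf, h v hv, mul_zero]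

theorem pointsIdeal_anti {Z' : Set (Fin m → K)} (h : Z' ⊆ Z) : pointsIdeal Z ≤ pointsIdeal Z' :=
  biInf_mono h

theorem isHomogeneous_pointsIdeal [Infinite K] (Z : Set (Fin m → K)) :
    (pointsIdeal Z).IsHomogeneous (homogeneousSubmodule (Fin m) K) := by
  refine isHomogeneous_of_forall_homogeneousComponent_mem fun f hf t => ?_
  rw [mem_pointsIdeal_iff_of_isHomogeneous (homogeneousComponent_isHomogeneous t f)]
  intro v hv
  let q : Polynomial K := ∑ i ∈ Finset.range (f.totalDegree + 1),
    Polynomial.monomial i (eval v (homogeneousComponent i f))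
  have hq : q = 0 := by
    refine Polynomial.funext fun c => ?_
    rw [Polynomial.eval_zero, ← mem_pointsIdeal_iff.1 hf v hv c]
    conv_rhs => rw [← sum_homogeneousComponent f]
    rw [map_sum, Polynomial.eval_finsetSum]
    refine Finset.sum_congr rfl fun i _ => ?_
    rw [eval_smul_of_isHomogeneous (homogeneousComponent_isHomogeneous i f),
      Polynomial.eval_monomial, mul_comm]
  rcases le_or_gt t f.totalDegree with ht | ht
  · simpa [q, Polynomial.finsetSum_coeff, Polynomial.coeff_monomial, Nat.lt_succ_iff, ht] using
      congrArg (Polynomial.coeff · t) hq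
  · rw [homogeneousComponent_eq_zero _ _ ht, map_zero]

theorem mem_pointsIdeal_of_mul_mem {g : MvPolynomial (Fin m) K} {s t : ℕ}
    (hg : g.IsHomogeneous s) (hgZ : ∀ v ∈ Z, eval v g ≠ 0) (hf : f.IsHomogeneous t)
    (h : g * f ∈ pointsIdeal Z) : f ∈ pointsIdeal Z := by
  rw [mem_pointsIdeal_iff_of_isHomogeneous (hg.mul hf)] at h
  rw [mem_pointsIdeal_iff_of_isHomogeneous hf]
  intro v hv
  exact (mul_eq_zero.1 (map_mul (eval v) g f ▸ h v hv)).resolve_left (hgZ v hv)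

theorem isRadical_pointsIdeal (Z : Set (Fin m → K)) : (pointsIdeal Z).IsRadical :=
  Ideal.isRadical_iInf _ fun v => Ideal.isRadical_iInf _ fun _ => Ideal.isRadical_iInf _ fun c =>
    (RingHom.ker_isPrime (eval (c • v))).isRadical

end PointsIdeal

section Saturation

variable {J : Ideal (MvPolynomial σ K)} {f : MvPolynomial σ K}

theorem mem_colon_pow_span_X_iff {N : ℕ} :
    f ∈ J.colon (((Ideal.span (Set.range X)) ^ N : Ideal (MvPolynomial σ K)) :
      Set (MvPolynomial σ K)) ↔ ∀ g : MvPolynomial σ K, g.IsHomogeneous N → g * f ∈ J := by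
  rw [Submodule.mem_colon]
  constructor
  · intro h g hg
    rw [mul_comm]
    refine h g ((mem_pow_idealOfVars_iff N g).2 fun e he => ?_)
    exact (hg.degree_eq_sum_deg_support he).le
  · intro h g hg
    rw [smul_eq_mul, mul_comm]
    rw [SetLike.mem_coe, ← idealOfVars, pow_idealOfVars_eq_span] at hg
    induction hg using Submodule.span_induction with
    | mem g hg =>
      obtain ⟨e, he, rfl⟩ := hg
      exact h _ (isHomogeneous_monomial _ he)
    | zero => exact (zero_mul f).symm ▸ J.zero_mem
    | add a b _ _ ha hb => exact add_mul a b f ▸ J.add_mem ha hb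
    | smul c a _ ha => exact (smul_mul_assoc c a f) ▸ J.mul_mem_left c ha

theorem mem_saturate_iff :
    f ∈ saturate J ↔ ∃ N : ℕ, ∀ g : MvPolynomial σ K, g.IsHomogeneous N → g * f ∈ J := by
  rw [saturate, Submodule.mem_iSup_of_directed]
  · exact exists_congr fun N => mem_colon_pow_span_X_iff
  · refine Monotone.directed_le fun M N hMN f hf => ?_
    rw [mem_colon_pow_span_X_iff] at hf ⊢
    exact fun g hg => mul_mem_of_forall_isHomogeneous_mul_mem hg hMN hf

theorem le_saturate (J : Ideal (MvPolynomial σ K)) : J ≤ saturate J :=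
  fun _ hf => mem_saturate_iff.2 ⟨0, fun _ _ => J.mul_mem_left _ hf⟩

theorem saturate_eq_of_forall_linear_mul_mem {L : MvPolynomial σ K} (hL : L.IsHomogeneous 1)
    (hinj : ∀ f, L * f ∈ J → f ∈ J) : saturate J = J := by
  refine le_antisymm (fun f hf => ?_) (le_saturate J)
  obtain ⟨N, hN⟩ := mem_saturate_iff.1 hf
  have hpow : L ^ N * f ∈ J := hN _ (by simpa using hL.pow N)
  clear hN
  induction N with
  | zero => simpa using hpow
  | succ N ih => exact ih (hinj _ (by rwa [← mul_assoc, ← pow_succ']))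

theorem isHomogeneous_saturate (hJ : J.IsHomogeneous (homogeneousSubmodule σ K)) :
    (saturate J).IsHomogeneous (homogeneousSubmodule σ K) := by
  refine isHomogeneous_of_forall_homogeneousComponent_mem fun f hf t => ?_
  obtain ⟨N, hN⟩ := mem_saturate_iff.1 hf
  refine mem_saturate_iff.2 ⟨N, fun g hg => ?_⟩
  rw [← homogeneousComponent_add_mul hg]
  exact homogeneousComponent_mem_of_mem hJ (hN g hg) _

theorem mem_saturate_of_forall_X_mul_mem [Finite σ] (h : ∀ i, X i * f ∈ saturate J) :
    f ∈ saturate J := by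
  have := Fintype.ofFinite σ
  choose N hN using fun i => mem_saturate_iff.1 (h i)
  refine mem_saturate_iff.2 ⟨Finset.univ.sup N + 1, fun g hg => ?_⟩
  obtain ⟨w, hw, rfl⟩ := exists_eq_sum_X_mul hg
  rw [Finset.sum_mul]
  refine J.sum_mem fun i _ => ?_
  rw [mul_comm (X i), mul_assoc]
  exact mul_mem_of_forall_isHomogeneous_mul_mem (hw i) (Finset.le_sup (Finset.mem_univ i)) (hN i)

theorem exists_forall_mem_of_mem_saturate [Finite σ]
    (hJ : J.IsHomogeneous (homogeneousSubmodule σ K)) :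
    ∃ N, ∀ t, N ≤ t → ∀ f : MvPolynomial σ K, f.IsHomogeneous t → f ∈ saturate J → f ∈ J := by
  obtain ⟨G, hG⟩ := (isNoetherianRing_iff_ideal_fg (MvPolynomial σ K)).1 inferInstance (saturate J)
  have hmem : ∀ s ∈ G, s ∈ saturate J := fun s hs => hG.le (Ideal.subset_span hs)
  choose! N hN using fun s hs => mem_saturate_iff.1 (hmem s hs)
  refine ⟨G.sup fun s => N s + s.totalDegree, fun t ht f hf hfS => ?_⟩
  obtain ⟨c, -, hc⟩ := Submodule.mem_span_finset.1 (hG.ge hfS)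
  rw [← homogeneousComponent_eq_self hf, ← hc, map_sum]
  refine J.sum_mem fun s hs => ?_
  have hsum : c s * s = ∑ i ∈ Finset.range (s.totalDegree + 1), c s * homogeneousComponent i s := by
    rw [← Finset.mul_sum, sum_homogeneousComponent]
  rw [smul_eq_mul, hsum, map_sum]
  refine J.sum_mem fun i hi => ?_
  have hst : N s + s.totalDegree ≤ t :=
    (Finset.le_sup (f := fun s => N s + s.totalDegree) hs).trans ht
  have hit : i ≤ s.totalDegree := Finset.mem_range_succ_iff.1 hi
  obtain ⟨u, rfl⟩ := Nat.exists_eq_add_of_le' (show i ≤ t by omega)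
  rw [mul_comm, homogeneousComponent_add_mul (homogeneousComponent_isHomogeneous i s), mul_comm]
  refine mul_mem_of_forall_isHomogeneous_mul_mem (d := N s)
    (homogeneousComponent_isHomogeneous u (c s)) (by omega) fun g hg => ?_
  rw [← homogeneousComponent_add_mul hg]
  exact homogeneousComponent_mem_of_mem hJ (hN s hs g hg) _

theorem exists_X_notMem_of_mem_associatedPrimes [Finite σ] {p : Ideal (MvPolynomial σ K)}
    (hp : p ∈ associatedPrimes (MvPolynomial σ K) (MvPolynomial σ K ⧸ saturate J)) :
    ∃ i, X i ∉ p := by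
  by_contra! hX
  obtain ⟨hprime, x, hx⟩ := isAssociatedPrime_iff.1 (AssociatedPrimes.mem_iff.1 hp)
  obtain ⟨f, rfl⟩ := Ideal.Quotient.mk_surjective x
  have hf : f ∈ saturate J := mem_saturate_of_forall_X_mul_mem fun i => by
    have := hX i
    rw [hx, Submodule.mem_colon_singleton, Submodule.mem_bot] at this
    exact Ideal.Quotient.eq_zero_iff_mem.1 this
  refine hprime.ne_top ?_
  rw [hx, Ideal.Quotient.eq_zero_iff_mem.2 hf]
  simp

end Saturation

theorem mem_of_mul_mem_of_forall_notMem_associatedPrimes {A : Type*} [CommRing A]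
    [IsNoetherianRing A] {I : Ideal A} {a f : A} (ha : ∀ p ∈ associatedPrimes A (A ⧸ I), a ∉ p)
    (h : a * f ∈ I) : f ∈ I := by
  by_contra hf
  have hzd : a ∈ ⋃ p ∈ associatedPrimes A (A ⧸ I), (p : Set A) := by
    rw [biUnion_associatedPrimes_eq_zero_divisors]
    exact ⟨Ideal.Quotient.mk I f, fun h => hf (Ideal.Quotient.eq_zero_iff_mem.1 h),
      Ideal.Quotient.eq_zero_iff_mem.2 h⟩
  obtain ⟨p, hp, hap⟩ := Set.mem_iUnion₂.1 hzd
  exact ha p hp hap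

section Persistence

variable [Finite σ] {S : Ideal (MvPolynomial σ K)} {l : MvPolynomial σ K} {d : ℕ}

theorem monotone_hilb (hS : S.IsHomogeneous (homogeneousSubmodule σ K)) (hl : l.IsHomogeneous 1)
    (hl0 : l ≠ 0) (hinj : ∀ f, l * f ∈ S → f ∈ S) : Monotone (hilb S) :=
  monotone_nat_of_le_succ fun t => by
    rw [hilb_succ hS hl hl0 fun f _ => hinj f]
    exact Nat.le_add_right _ _

/- The Hilbert function of `S + (l)` is the first difference of that of `S`, and it stays zero once
it vanishes; so the Hilbert function of `S` increases strictly until it becomes constant. -/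
theorem lt_hilb_of_hilb_sup_ne_zero (hS : S.IsHomogeneous (homogeneousSubmodule σ K))
    (hl : l.IsHomogeneous 1) (hl0 : l ≠ 0) (hinj : ∀ f, l * f ∈ S → f ∈ S) {t : ℕ}
    (h : hilb (S ⊔ Ideal.span {l}) t ≠ 0) : t < hilb S t := by
  induction t with
  | zero =>
    exact (Nat.pos_of_ne_zero h).trans_le (hilb_anti fun f _ hf => Ideal.mem_sup_left hf)
  | succ t ih =>
    have := ih fun h0 => h (hilb_succ_eq_zero h0)
    rw [hilb_succ hS hl hl0 fun f _ => hinj f]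
    omega

theorem hilb_sup_span_singleton_eq_zero (hS : S.IsHomogeneous (homogeneousSubmodule σ K))
    (hl : l.IsHomogeneous 1) (hl0 : l ≠ 0) (hinj : ∀ f, l * f ∈ S → f ∈ S)
    (hd : ∃ N, ∀ t, N ≤ t → hilb S t = d) {t : ℕ} (ht : d ≤ t) :
    hilb (S ⊔ Ideal.span {l}) t = 0 := by
  obtain ⟨N, hN⟩ := hd
  have hle : hilb S t ≤ d :=
    (monotone_hilb hS hl hl0 hinj (le_max_left t N)).trans (hN _ (le_max_right t N)).le
  by_contra h
  have := lt_hilb_of_hilb_sup_ne_zero hS hl hl0 hinj h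
  omega

theorem hilb_eq_of_eventually_eq (hS : S.IsHomogeneous (homogeneousSubmodule σ K))
    (hl : l.IsHomogeneous 1) (hl0 : l ≠ 0) (hinj : ∀ f, l * f ∈ S → f ∈ S)
    (hd : ∃ N, ∀ t, N ≤ t → hilb S t = d) {t : ℕ} (ht : d ≤ t) : hilb S t = d := by
  have hconst : ∀ j, hilb S (t + j) = hilb S t := by
    intro j
    induction j with
    | zero => rfl
    | succ j ih =>
      rw [← add_assoc, hilb_succ hS hl hl0 fun f _ => hinj f, ih,
        hilb_sup_span_singleton_eq_zero hS hl hl0 hinj hd (by omega), add_zero]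
  obtain ⟨N, hN⟩ := hd
  rw [← hconst N]
  exact hN _ (by omega)

variable {B : Ideal (MvPolynomial σ K)} {n : ℕ}

theorem exists_hilb_saturate_eq (hB : B.IsHomogeneous (homogeneousSubmodule σ K))
    (hd : ∃ N, ∀ t, N ≤ t → hilb B t = d) : ∃ N, ∀ t, N ≤ t → hilb (saturate B) t = d := by
  obtain ⟨N, hN⟩ := hd
  obtain ⟨M, hM⟩ := exists_forall_mem_of_mem_saturate hB
  refine ⟨max N M, fun t ht => ?_⟩
  rw [← hN t ((le_max_left _ _).trans ht)]
  exact hilb_congr fun f hf =>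
    ⟨hM t ((le_max_right _ _).trans ht) f hf, fun h => le_saturate B h⟩

theorem exists_sub_linear_mul_mem_saturate (hB : B.IsHomogeneous (homogeneousSubmodule σ K))
    (hl : l.IsHomogeneous 1) (hl0 : l ≠ 0) (hinj : ∀ f, l * f ∈ saturate B → f ∈ saturate B)
    (hd : ∃ N, ∀ t, N ≤ t → hilb B t = d) {t : ℕ} (ht : d ≤ t + 1) {f : MvPolynomial σ K}
    (hf : f.IsHomogeneous (t + 1)) :
    ∃ g : MvPolynomial σ K, g.IsHomogeneous t ∧ f - l * g ∈ saturate B := by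
  have hS := isHomogeneous_saturate hB
  exact exists_sub_linear_mul_mem hS hl hf (hilb_eq_zero_iff.1
    (hilb_sup_span_singleton_eq_zero hS hl hl0 hinj (exists_hilb_saturate_eq hB hd) ht) f hf)

/- Modulo `l`-multiples a form of degree `t + 1` is a combination of the variables with
coefficients in `B`; the remaining `l`-multiple is divided by `l` inside the saturation. -/
theorem mem_of_mem_saturate (hB : B.IsHomogeneous (homogeneousSubmodule σ K))
    (hl : l.IsHomogeneous 1) (hl0 : l ≠ 0) (hinj : ∀ f, l * f ∈ saturate B → f ∈ saturate B)
    (hd : ∃ N, ∀ t, N ≤ t → hilb B t = d) (hn : hilb B (n + 1) = d) (hdn : d ≤ n + 1) {t : ℕ}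
    (ht : n + 1 ≤ t) {f : MvPolynomial σ K} (hf : f.IsHomogeneous t) (hfS : f ∈ saturate B) :
    f ∈ B := by
  have := Fintype.ofFinite σ
  induction t, ht using Nat.le_induction generalizing f with
  | base =>
    refine mem_of_hilb_le (le_saturate B) ?_ hf hfS
    rw [hn, hilb_eq_of_eventually_eq (isHomogeneous_saturate hB) hl hl0 hinj
      (exists_hilb_saturate_eq hB hd) hdn]
  | succ t ht ih =>
    obtain ⟨t, rfl⟩ : ∃ s, t = s + 1 := ⟨t - 1, by omega⟩
    obtain ⟨h, hh, rfl⟩ := exists_eq_sum_X_mul hf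
    choose c hc hcS using fun i =>
      exists_sub_linear_mul_mem_saturate hB hl hl0 hinj hd (by omega) (hh i)
    have hmem : ∑ i, X i * (h i - l * c i) ∈ B := B.sum_mem fun i _ =>
      B.mul_mem_left _ (ih ((hh i).sub (isHomogeneous_linear_mul hl (hc i))) (hcS i))
    have hsplit : ∑ i, X i * h i = ∑ i, X i * (h i - l * c i) + l * ∑ i, X i * c i := by
      rw [Finset.mul_sum, ← Finset.sum_add_distrib]
      exact Finset.sum_congr rfl fun i _ => by ring
    rw [hsplit] at hfS ⊢
    have hdiv := hinj _ ((Submodule.add_mem_iff_right _ (le_saturate B hmem)).1 hfS)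
    refine B.add_mem hmem (B.mul_mem_left _ (ih (IsHomogeneous.sum _ _ _ fun i _ => ?_) hdiv))
    exact isHomogeneous_linear_mul (isHomogeneous_X K i) (hc i)

theorem hilb_eq_of_hilb_eq (hB : B.IsHomogeneous (homogeneousSubmodule σ K))
    (hl : l.IsHomogeneous 1) (hl0 : l ≠ 0) (hinj : ∀ f, l * f ∈ saturate B → f ∈ saturate B)
    (hd : ∃ N, ∀ t, N ≤ t → hilb B t = d) (hn : hilb B (n + 1) = d) (hdn : d ≤ n + 1) {t : ℕ}
    (ht : n + 1 ≤ t) : hilb B t = d := by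
  rw [← hilb_eq_of_eventually_eq (isHomogeneous_saturate hB) hl hl0 hinj
    (exists_hilb_saturate_eq hB hd) (hdn.trans ht)]
  exact hilb_congr fun f hf =>
    ⟨fun h => le_saturate B h, mem_of_mem_saturate hB hl hl0 hinj hd hn hdn ht hf⟩

theorem exists_sub_linear_mul_mem_of_hilb_eq (hB : B.IsHomogeneous (homogeneousSubmodule σ K))
    (hl : l.IsHomogeneous 1) (hl0 : l ≠ 0) (hinj : ∀ f, l * f ∈ saturate B → f ∈ saturate B)
    (hd : ∃ N, ∀ t, N ≤ t → hilb B t = d) (hn : hilb B (n + 1) = d) (hdn : d ≤ n + 1) {t : ℕ}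
    (ht : n ≤ t) {f : MvPolynomial σ K} (hf : f.IsHomogeneous (t + 1)) :
    ∃ g : MvPolynomial σ K, g.IsHomogeneous t ∧ f - l * g ∈ B := by
  obtain ⟨g, hg, hgS⟩ := exists_sub_linear_mul_mem_saturate hB hl hl0 hinj hd (by omega) hf
  exact ⟨g, hg, mem_of_mem_saturate hB hl hl0 hinj hd hn hdn (Nat.succ_le_succ ht)
    (hf.sub (isHomogeneous_linear_mul hl hg)) hgS⟩

end Persistence

section Koszul

theorem mem_span_X_image_of_X_mul_mem {s : Set σ} {k : σ} (hk : k ∉ s) {w : MvPolynomial σ K}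
    (h : X k * w ∈ Ideal.span (X '' s)) : w ∈ Ideal.span (X '' s) := by
  classical
  rw [mem_ideal_span_X_image] at h ⊢
  intro e he
  obtain ⟨i, hi, hi0⟩ := h (Finsupp.single k 1 + e) (by
    rwa [mem_support_iff, coeff_X_mul, ← mem_support_iff])
  have hki : k ≠ i := fun hki => hk (hki ▸ hi)
  exact ⟨i, hi, by simpa [Finsupp.single_apply, hki] using hi0⟩

theorem exists_eq_sum_mul_X_of_mem_span {s : Finset σ} {w : MvPolynomial σ K} {t : ℕ}
    (hw : w.IsHomogeneous (t + 1)) (h : w ∈ Ideal.span (X '' (s : Set σ))) :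
    ∃ b : σ → MvPolynomial σ K, (∀ j, (b j).IsHomogeneous t) ∧ w = ∑ j ∈ s, b j * X j := by
  obtain ⟨b, hb⟩ := (Submodule.mem_span_image_finset_iff_exists_fun' _).1 h
  refine ⟨fun j => homogeneousComponent t (b j),
    fun j => homogeneousComponent_isHomogeneous _ _, ?_⟩
  rw [← homogeneousComponent_eq_self hw, ← hb, map_sum]
  refine Finset.sum_congr rfl fun j _ => ?_
  rw [smul_eq_mul, mul_comm, homogeneousComponent_add_mul (isHomogeneous_X K j), mul_comm]

-- Exactness of the Koszul complex: linear syzygies of the variables are alternating.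
theorem exists_eq_sum_sub_mul_X_of_sum_X_mul_eq_zero {t : ℕ} (s : Finset σ)
    {w : σ → MvPolynomial σ K} (hw : ∀ i ∈ s, (w i).IsHomogeneous (t + 1))
    (h : ∑ i ∈ s, X i * w i = 0) :
    ∃ a : σ → σ → MvPolynomial σ K, (∀ i j, (a i j).IsHomogeneous t) ∧
      ∀ i ∈ s, w i = ∑ j ∈ s, (a i j - a j i) * X j := by
  classical
  induction s using Finset.induction_on generalizing w with
  | empty => exact ⟨fun _ _ => 0, fun _ _ => isHomogeneous_zero _ _ _, by simp⟩
  | insert k s hk ih =>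
    rw [Finset.sum_insert hk] at h
    have hXk : X k * w k ∈ Ideal.span (X '' (s : Set σ)) := by
      rw [eq_neg_of_add_eq_zero_left h]
      exact neg_mem (Ideal.sum_mem _ fun i hi =>
        Ideal.mul_mem_right _ _ (Ideal.subset_span ⟨i, hi, rfl⟩))
    obtain ⟨b, hb, hwk⟩ := exists_eq_sum_mul_X_of_mem_span (hw k (Finset.mem_insert_self k s))
      (mem_span_X_image_of_X_mul_mem (by simpa using hk) hXk)
    obtain ⟨a, ha, haw⟩ := ih (w := fun i => w i + b i * X k)
      (fun i hi =>
        (hw i (Finset.mem_insert_of_mem hi)).add ((hb i).mul (isHomogeneous_X K k))) <| by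
        rw [← h, hwk, Finset.mul_sum, ← Finset.sum_add_distrib]
        exact Finset.sum_congr rfl fun i _ => by ring
    refine ⟨fun i j => if j = k then 0 else if i = k then b j else a i j, fun i j => ?_, ?_⟩
    · dsimp only
      split_ifs
      exacts [isHomogeneous_zero _ _ _, hb j, ha i j]
    have hne : ∀ j ∈ s, j ≠ k := fun j hj hjk => hk (hjk ▸ hj)
    intro i hi
    rw [Finset.sum_insert hk]
    rcases Finset.mem_insert.1 hi with rfl | hi
    · rw [hwk, sub_self, zero_mul, zero_add]
      exact Finset.sum_congr rfl fun j hj => by simp [hne j hj]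
    · rw [eq_sub_of_add_eq (haw i hi), sub_eq_neg_add]
      congr 1
      · simp [hne i hi]
      · exact Finset.sum_congr rfl fun j hj => by simp [hne i hi, hne j hj]

theorem sum_X_mul_sum_sub_mul_X [Fintype σ] (A : σ → σ → MvPolynomial σ K) :
    ∑ i, X i * ∑ j, (A i j - A j i) * X j = 0 := by
  simp only [sub_mul, mul_sub, Finset.mul_sum, Finset.sum_sub_distrib]
  rw [sub_eq_zero]
  conv_rhs => rw [Finset.sum_comm]
  exact Finset.sum_congr rfl fun i _ => Finset.sum_congr rfl fun j _ => by ring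

end Koszul

section NonZeroDivisor

variable {W : Ideal (MvPolynomial σ K)} {L l : MvPolynomial σ K} {t : ℕ}

theorem exists_mem_of_linear_mul_add_mem (hW : W.IsHomogeneous (homogeneousSubmodule σ K))
    (hL : L.IsHomogeneous 1) (hl : l.IsHomogeneous 1)
    (hLinj : ∀ f : MvPolynomial σ K, f.IsHomogeneous (t + 1) → L * f ∈ W → f ∈ W)
    (hlinj : ∀ f : MvPolynomial σ K, f.IsHomogeneous (t + 1) →
      l * f ∈ W ⊔ Ideal.span {L} → f ∈ W ⊔ Ideal.span {L})
    {a b : MvPolynomial σ K} (ha : a.IsHomogeneous (t + 1)) (hb : b.IsHomogeneous (t + 1))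
    (h : L * a + l * b ∈ W) :
    ∃ a' ∈ W, ∃ b' ∈ W, b'.IsHomogeneous (t + 1) ∧ L * a + l * b = L * a' + l * b' := by
  have hlb : l * b ∈ W ⊔ Ideal.span {L} := mem_sup_span_singleton_of_sub_mem (g := -a) (by
    rwa [mul_neg, sub_neg_eq_add, add_comm])
  obtain ⟨c, hc, hbc⟩ := exists_sub_linear_mul_mem hW hL hb (hlinj b hb hlb)
  have hab : L * a + l * b = L * (a + l * c) + l * (b - L * c) := by ring
  refine ⟨a + l * c, hLinj _ (ha.add (isHomogeneous_linear_mul hl hc)) ?_, b - L * c, hbc,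
    hb.sub (isHomogeneous_linear_mul hL hc), hab⟩
  rw [hab] at h
  exact (W.add_mem_iff_left (W.mul_mem_left _ hbc)).1 h

/- The difference of two presentations of `L * f` is a syzygy of the variables; the alternating
matrix expressing it is rewritten modulo `W` in terms of `L` and `l`. -/
theorem exists_linear_mul_eq_sum_X_mul [Fintype σ] (hL : L.IsHomogeneous 1)
    (hdec : ∀ f : MvPolynomial σ K, f.IsHomogeneous (t + 1) → ∃ g g' : MvPolynomial σ K,
      g.IsHomogeneous t ∧ g'.IsHomogeneous t ∧ f - L * g - l * g' ∈ W)
    {f : MvPolynomial σ K} (hf : f.IsHomogeneous (t + 2)) {w : σ → MvPolynomial σ K}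
    (hw : ∀ i, (w i).IsHomogeneous (t + 2) ∧ w i ∈ W) (hfw : L * f = ∑ i, X i * w i) :
    ∃ p q : σ → MvPolynomial σ K, (∀ i, (p i).IsHomogeneous (t + 1)) ∧
      (∀ i, (q i).IsHomogeneous (t + 1)) ∧ (∀ i, L * p i + l * q i ∈ W) ∧
      L * f = ∑ i, X i * (L * p i + l * q i) := by
  obtain ⟨φ, hφ, hfφ⟩ := exists_eq_sum_X_mul hf
  have hsyz : ∑ i, X i * (w i - L * φ i) = 0 := by
    simp only [mul_sub, Finset.sum_sub_distrib, mul_left_comm _ L, ← Finset.mul_sum]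
    rw [← hfw, ← hfφ, sub_self]
  obtain ⟨a, ha, haw⟩ := exists_eq_sum_sub_mul_X_of_sum_X_mul_eq_zero Finset.univ
    (fun i _ => (hw i).1.sub (isHomogeneous_linear_mul hL (hφ i))) hsyz
  choose c d hc hd hcd using fun i j => hdec (a i j) (ha i j)
  let A := fun i j => a i j - L * c i j - l * d i j
  let p := fun i => φ i + ∑ j, (c i j - c j i) * X j
  let q := fun i => ∑ j, (d i j - d j i) * X j
  have hpq : ∀ i, L * p i + l * q i = w i - ∑ j, (A i j - A j i) * X j := by
    intro i
    rw [eq_add_of_sub_eq (haw i (Finset.mem_univ i))]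
    simp only [p, q, A, mul_add, sub_mul, mul_sub, Finset.mul_sum, Finset.sum_sub_distrib]
    simp only [← Finset.mul_sum, mul_assoc]
    ring
  refine ⟨p, q, fun i => (hφ i).add ?_, fun i => ?_, fun i => ?_, ?_⟩
  · exact IsHomogeneous.sum _ _ _ fun j _ => ((hc i j).sub (hc j i)).mul (isHomogeneous_X K j)
  · exact IsHomogeneous.sum _ _ _ fun j _ => ((hd i j).sub (hd j i)).mul (isHomogeneous_X K j)
  · rw [hpq]
    exact W.sub_mem (hw i).2 (W.sum_mem fun j _ =>
      W.mul_mem_right _ (W.sub_mem (hcd i j) (hcd j i)))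
  · simp only [hpq, mul_sub, Finset.sum_sub_distrib]
    rw [sum_X_mul_sum_sub_mul_X, sub_zero, hfw]

theorem mem_of_linear_mul_eq_add (hL : L.IsHomogeneous 1) (hL0 : L ≠ 0) (hLl : ¬ L ∣ l)
    (hinj : ∀ f : MvPolynomial σ K, f.IsHomogeneous t → L * f ∈ W → f ∈ W)
    {f u v : MvPolynomial σ K} (hu : u ∈ W) (hv : v ∈ W) (hvt : v.IsHomogeneous (t + 1))
    (h : L * f = L * u + l * v) : f ∈ W := by
  have hdvd : L ∣ l * v := ⟨f - u, by rw [mul_sub, h]; ring⟩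
  obtain ⟨g, hg, rfl⟩ := exists_isHomogeneous_of_linear_dvd hL hvt
    (((prime_of_linear hL hL0).dvd_or_dvd hdvd).resolve_left hLl)
  have hfug : f = u + l * g := mul_left_cancel₀ hL0 (by rw [h]; ring)
  exact hfug ▸ W.add_mem hu (W.mul_mem_left _ (hinj g hg hv))

theorem mem_of_linear_mul_mem [Finite σ] (hW : W.IsHomogeneous (homogeneousSubmodule σ K)) {n : ℕ}
    (hlow : W ≤ lowIdeal W (n + 1)) (hL : L.IsHomogeneous 1) (hL0 : L ≠ 0)
    (hl : l.IsHomogeneous 1) (hLl : ¬ L ∣ l)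
    (hinj : ∀ t ≤ n + 1, ∀ f : MvPolynomial σ K, f.IsHomogeneous t → L * f ∈ W → f ∈ W)
    (hlinj : ∀ t, n + 1 ≤ t → ∀ f : MvPolynomial σ K, f.IsHomogeneous t →
      l * f ∈ W ⊔ Ideal.span {L} → f ∈ W ⊔ Ideal.span {L})
    (hdec : ∀ t, n ≤ t → ∀ f : MvPolynomial σ K, f.IsHomogeneous (t + 1) →
      ∃ g g' : MvPolynomial σ K, g.IsHomogeneous t ∧ g'.IsHomogeneous t ∧ f - L * g - l * g' ∈ W)
    {t : ℕ} {f : MvPolynomial σ K} (hf : f.IsHomogeneous t) (hLf : L * f ∈ W) : f ∈ W := by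
  have := Fintype.ofFinite σ
  induction t using Nat.strong_induction_on generalizing f with
  | _ t ih =>
  rcases Nat.lt_or_ge (n + 1) t with hlt | hge
  · obtain ⟨s, rfl⟩ : ∃ s, t = s + 2 := ⟨t - 2, by omega⟩
    have ihs : ∀ f : MvPolynomial σ K, f.IsHomogeneous (s + 1) → L * f ∈ W → f ∈ W :=
      fun f hf hLf => ih (s + 1) (by omega) hf hLf
    obtain ⟨w, hw, hfw⟩ := exists_eq_sum_X_mul_of_mem_lowIdeal (t := s + 2) (by omega)
      (isHomogeneous_linear_mul hL hf) (hlow hLf)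
    obtain ⟨p, q, hp, hq, hpqW, hfpq⟩ := exists_linear_mul_eq_sum_X_mul hL (hdec s (by omega)) hf
      (fun i => ⟨(hw i).1, lowIdeal_le (hw i).2⟩) hfw
    choose u hu v hv hvs huv using fun i =>
      exists_mem_of_linear_mul_add_mem hW hL hl ihs (hlinj (s + 1) (by omega)) (hp i) (hq i)
        (hpqW i)
    refine mem_of_linear_mul_eq_add (u := ∑ i, X i * u i) (v := ∑ i, X i * v i) hL hL0 hLl ihs
      (W.sum_mem fun i _ => W.mul_mem_left _ (hu i)) (W.sum_mem fun i _ => W.mul_mem_left _ (hv i))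
      (IsHomogeneous.sum _ _ _ fun i _ => isHomogeneous_linear_mul (isHomogeneous_X K i) (hvs i)) ?_
    rw [hfpq, Finset.mul_sum, Finset.mul_sum, ← Finset.sum_add_distrib]
    exact Finset.sum_congr rfl fun i _ => by rw [huv i]; ring
  · exact hinj t hge f hf hLf

end NonZeroDivisor

section BinaryForms

theorem exists_homogeneousComponent_ne_zero {q : MvPolynomial σ K} (hq : q ≠ 0) :
    ∃ e, homogeneousComponent e q ≠ 0 := by
  by_contra! h
  exact hq (by rw [← sum_homogeneousComponent q]; exact Finset.sum_eq_zero fun e _ => h e)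

theorem isHomogeneous_aeval_of_linear {τ : Type*} {g : τ → MvPolynomial σ K}
    (hg : ∀ i, (g i).IsHomogeneous 1) {q : MvPolynomial τ K} {e : ℕ} (hq : q.IsHomogeneous e) :
    (aeval g q).IsHomogeneous e := by
  simpa using hq.aeval g hg

theorem homogeneousComponent_aeval_of_linear {τ : Type*} {g : τ → MvPolynomial σ K}
    (hg : ∀ i, (g i).IsHomogeneous 1) (q : MvPolynomial τ K) (e : ℕ) :
    homogeneousComponent e (aeval g q) = aeval g (homogeneousComponent e q) := by
  conv_lhs => rw [← sum_homogeneousComponent q]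
  have hcomp : ∀ i, homogeneousComponent e (aeval g (homogeneousComponent i q)) =
      if e = i then aeval g (homogeneousComponent e q) else 0 := by
    intro i
    rw [homogeneousComponent_of_mem
      (isHomogeneous_aeval_of_linear hg (homogeneousComponent_isHomogeneous i q))]
    split_ifs with h
    exacts [h ▸ rfl, rfl]
  simp only [map_sum, hcomp, Finset.sum_ite_eq]
  split_ifs with he
  · rfl
  · rw [homogeneousComponent_eq_zero, map_zero]
    simpa using he

theorem exists_ne_zero_eq_C {q : MvPolynomial σ K} (hq : q.IsHomogeneous 0) (hq0 : q ≠ 0) :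
    ∃ c : K, c ≠ 0 ∧ q = C c := by
  have hqc := totalDegree_eq_zero_iff_eq_C.1 (Nat.le_zero.1 hq.totalDegree_le)
  exact ⟨coeff 0 q, fun h => hq0 (by rw [hqc, h, C_0]), hqc⟩

theorem C_mul_mem_iff {J : Ideal (MvPolynomial σ K)} {f : MvPolynomial σ K} {c : K} (hc : c ≠ 0) :
    C c * f ∈ J ↔ f ∈ J :=
  J.unit_mul_mem_iff_mem (hc.isUnit.map C)

theorem exists_eq_C_mul_X_pow_add {e : ℕ} {q : MvPolynomial (Fin 2) K}
    (hq : q.IsHomogeneous (e + 1)) :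
    ∃ (c : K) (q' : MvPolynomial (Fin 2) K), q'.IsHomogeneous e ∧
      q = C c * X 1 ^ (e + 1) + X 0 * q' := by
  induction e generalizing q with
  | zero =>
    obtain ⟨w, hw, hqw⟩ := exists_eq_sum_X_mul hq
    refine ⟨coeff 0 (w 1), w 0, hw 0, ?_⟩
    rw [hqw, Fin.sum_univ_two,
      ← totalDegree_eq_zero_iff_eq_C.1 (Nat.le_zero.1 (hw 1).totalDegree_le)]
    ring
  | succ e ih =>
    obtain ⟨w, hw, hqw⟩ := exists_eq_sum_X_mul hq
    obtain ⟨c, q', hq', hw1⟩ := ih (hw 1)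
    refine ⟨c, w 0 + X 1 * q', (hw 0).add (isHomogeneous_linear_mul (isHomogeneous_X K 1) hq'), ?_⟩
    rw [hqw, Fin.sum_univ_two, hw1]
    ring

/-- The substitution of the forms `L` and `l` for the two variables; it makes `K[x]` an algebra
over the polynomial ring in two variables. -/
noncomputable def pairEval (L l : MvPolynomial σ K) :
    MvPolynomial (Fin 2) K →ₐ[K] MvPolynomial σ K :=
  aeval ![L, l]

@[simp] theorem pairEval_X_zero (L l : MvPolynomial σ K) : pairEval L l (X 0) = L := by
  simp [pairEval]

@[simp] theorem pairEval_X_one (L l : MvPolynomial σ K) : pairEval L l (X 1) = l := by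
  simp [pairEval]

@[simp] theorem pairEval_C (L l : MvPolynomial σ K) (c : K) : pairEval L l (C c) = C c := by
  simp [pairEval, algebraMap_eq]

variable {L l : MvPolynomial σ K} (hL : L.IsHomogeneous 1) (hl : l.IsHomogeneous 1)
include hL hl

theorem isHomogeneous_cons_cons (i : Fin 2) : (![L, l] i).IsHomogeneous 1 := by
  fin_cases i <;> simpa

theorem isHomogeneous_pairEval {q : MvPolynomial (Fin 2) K} {e : ℕ} (hq : q.IsHomogeneous e) :
    (pairEval L l q).IsHomogeneous e :=
  isHomogeneous_aeval_of_linear (isHomogeneous_cons_cons hL hl) hq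

theorem homogeneousComponent_pairEval (q : MvPolynomial (Fin 2) K) (e : ℕ) :
    homogeneousComponent e (pairEval L l q) = pairEval L l (homogeneousComponent e q) :=
  homogeneousComponent_aeval_of_linear (isHomogeneous_cons_cons hL hl) q e

end BinaryForms

section TorsionIdeal

/-- The ideal of all polynomials whose classes in `K[x]/W` are annihilated by a nonzero form in
`L` and `l`, i.e. the homogeneous torsion of `K[x]/W` over `K[L, l]`. -/
def torsionIdeal (W : Ideal (MvPolynomial σ K)) (L l : MvPolynomial σ K) :
    Ideal (MvPolynomial σ K) where
  carrier := {f | ∃ (e : ℕ) (q : MvPolynomial (Fin 2) K), q.IsHomogeneous e ∧ q ≠ 0 ∧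
    pairEval L l q * f ∈ W}
  add_mem' := by
    rintro a b ⟨e, q, hq, hq0, ha⟩ ⟨e', q', hq', hq0', hb⟩
    refine ⟨e + e', q * q', hq.mul hq', mul_ne_zero hq0 hq0', ?_⟩
    rw [map_mul, mul_add]
    refine W.add_mem ?_ ?_
    · rw [mul_right_comm]
      exact W.mul_mem_right _ ha
    · rw [mul_assoc]
      exact W.mul_mem_left _ hb
  zero_mem' := ⟨0, 1, isHomogeneous_one _ _, one_ne_zero, by simp⟩
  smul_mem' := by
    rintro c f ⟨e, q, hq, hq0, hf⟩
    refine ⟨e, q, hq, hq0, ?_⟩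
    rw [smul_eq_mul, mul_left_comm]
    exact W.mul_mem_left _ hf

variable {W : Ideal (MvPolynomial σ K)} {L l f : MvPolynomial σ K}

theorem mem_torsionIdeal :
    f ∈ torsionIdeal W L l ↔ ∃ (e : ℕ) (q : MvPolynomial (Fin 2) K), q.IsHomogeneous e ∧ q ≠ 0 ∧
      pairEval L l q * f ∈ W :=
  Iff.rfl

theorem le_torsionIdeal (W : Ideal (MvPolynomial σ K)) (L l : MvPolynomial σ K) :
    W ≤ torsionIdeal W L l :=
  fun _ hf => ⟨0, 1, isHomogeneous_one _ _, one_ne_zero, W.mul_mem_left _ hf⟩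

theorem mem_torsionIdeal_of_mul_mem {a : MvPolynomial σ K} (h : ∀ f, a * f ∈ W → f ∈ W)
    (hf : a * f ∈ torsionIdeal W L l) : f ∈ torsionIdeal W L l := by
  obtain ⟨e, q, hq, hq0, hm⟩ := hf
  exact ⟨e, q, hq, hq0, h _ (by rwa [mul_left_comm])⟩

theorem isHomogeneous_torsionIdeal (hW : W.IsHomogeneous (homogeneousSubmodule σ K))
    (hL : L.IsHomogeneous 1) (hl : l.IsHomogeneous 1) :
    (torsionIdeal W L l).IsHomogeneous (homogeneousSubmodule σ K) := by
  refine isHomogeneous_of_forall_homogeneousComponent_mem ?_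
  rintro f ⟨e, q, hq, hq0, hf⟩ s
  refine ⟨e, q, hq, hq0, ?_⟩
  rw [← homogeneousComponent_add_mul (isHomogeneous_pairEval hL hl hq)]
  exact homogeneousComponent_mem_of_mem hW hf _

theorem mem_torsionIdeal_of_ne_zero (hW : W.IsHomogeneous (homogeneousSubmodule σ K))
    (hL : L.IsHomogeneous 1) (hl : l.IsHomogeneous 1) {s : ℕ} (hf : f.IsHomogeneous s)
    {q : MvPolynomial (Fin 2) K} (hq : q ≠ 0) (h : pairEval L l q * f ∈ W) :
    f ∈ torsionIdeal W L l := by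
  obtain ⟨e, he⟩ := exists_homogeneousComponent_ne_zero hq
  refine ⟨e, _, homogeneousComponent_isHomogeneous e q, he, ?_⟩
  rw [← homogeneousComponent_pairEval hL hl, mul_comm, ← homogeneousComponent_add_mul hf, mul_comm]
  exact homogeneousComponent_mem_of_mem hW h _

theorem exists_sub_pow_mul_mem {T : Ideal (MvPolynomial σ K)} {m : ℕ}
    (h : ∀ s, m ≤ s → ∀ f ∈ T, f.IsHomogeneous (s + 1) →
      ∃ g ∈ T, g.IsHomogeneous s ∧ f - L * g ∈ W) {j : ℕ} (hf : f.IsHomogeneous (m + j))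
    (hfT : f ∈ T) : ∃ g ∈ T, g.IsHomogeneous m ∧ f - L ^ j * g ∈ W := by
  induction j generalizing f with
  | zero => exact ⟨f, hfT, hf, by simp⟩
  | succ j ih =>
    obtain ⟨g, hgT, hg, hfg⟩ := h (m + j) (Nat.le_add_right m j) f hfT hf
    obtain ⟨g', hg'T, hg', hgg'⟩ := ih hg hgT
    refine ⟨g', hg'T, hg', ?_⟩
    have hsplit : f - L ^ (j + 1) * g' = (f - L * g) + L * (g - L ^ j * g') := by ring
    exact hsplit ▸ W.add_mem hfg (W.mul_mem_left _ hgg')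

end TorsionIdeal

/-- A pair of linear forms `L`, `l` which is a system of parameters for the two-dimensional ring
`K[x]/W` with uniform behaviour in high degrees: `W` is a homogeneous ideal generated in degrees at
most `n + 1`, `L` is a nonzerodivisor modulo `W`, and `K[x]/(W + (L))` has Hilbert function `d` and
multiplication by `l` bijective in high degrees. -/
structure IsParameterPair (W : Ideal (MvPolynomial σ K)) (n d : ℕ) (L l : MvPolynomial σ K) :
    Prop where
  isHomogeneous_ideal : W.IsHomogeneous (homogeneousSubmodule σ K)
  le_lowIdeal : W ≤ lowIdeal W (n + 1)
  isHomogeneous_fst : L.IsHomogeneous 1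
  isHomogeneous_snd : l.IsHomogeneous 1
  fst_ne_zero : L ≠ 0
  mem_of_fst_mul_mem : ∀ f, L * f ∈ W → f ∈ W
  mem_sup_of_snd_mul_mem : ∀ t, n + 1 ≤ t → ∀ f : MvPolynomial σ K, f.IsHomogeneous t →
    l * f ∈ W ⊔ Ideal.span {L} → f ∈ W ⊔ Ideal.span {L}
  exists_sub_sub_mem : ∀ t, n ≤ t → ∀ f : MvPolynomial σ K, f.IsHomogeneous (t + 1) →
    ∃ g g' : MvPolynomial σ K, g.IsHomogeneous t ∧ g'.IsHomogeneous t ∧ f - L * g - l * g' ∈ W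
  pos : 0 < d
  hilb_sup : ∀ t, n + 1 ≤ t → hilb (W ⊔ Ideal.span {L}) t = d

namespace IsParameterPair

variable {W : Ideal (MvPolynomial σ K)} {n d : ℕ} {L l f : MvPolynomial σ K} {s : ℕ}

theorem isHomogeneous_torsionIdeal (h : IsParameterPair W n d L l) :
    (torsionIdeal W L l).IsHomogeneous (homogeneousSubmodule σ K) :=
  PointsCurve.isHomogeneous_torsionIdeal h.isHomogeneous_ideal h.isHomogeneous_fst
    h.isHomogeneous_snd

theorem mem_torsionIdeal_of_fst_mul_mem (h : IsParameterPair W n d L l)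
    (hf : L * f ∈ torsionIdeal W L l) : f ∈ torsionIdeal W L l :=
  mem_torsionIdeal_of_mul_mem h.mem_of_fst_mul_mem hf

theorem mem_torsionIdeal_of_fst_pow_mul_mem (h : IsParameterPair W n d L l) {j : ℕ}
    (hf : L ^ j * f ∈ torsionIdeal W L l) : f ∈ torsionIdeal W L l := by
  induction j with
  | zero => simpa using hf
  | succ j ih => exact ih (h.mem_torsionIdeal_of_fst_mul_mem (by rwa [← mul_assoc, ← pow_succ']))

theorem mem_sup_of_snd_pow_mul_mem (h : IsParameterPair W n d L l) (hs : n + 1 ≤ s)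
    (hf : f.IsHomogeneous s) {j : ℕ} (hm : l ^ j * f ∈ W ⊔ Ideal.span {L}) :
    f ∈ W ⊔ Ideal.span {L} := by
  induction j generalizing s f with
  | zero => simpa using hm
  | succ j ih =>
    refine h.mem_sup_of_snd_mul_mem s hs f hf (ih (hs.trans s.le_succ)
      (isHomogeneous_linear_mul h.isHomogeneous_snd hf) ?_)
    rwa [← mul_assoc, ← pow_succ]

/- An annihilating form in `L` and `l` which is not divisible by `L` is a power of `l` modulo `L`,
and `l` is injective modulo `W + (L)` in high degrees. -/
theorem mem_sup_of_mem_torsionIdeal (h : IsParameterPair W n d L l) (hs : n + 1 ≤ s)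
    (hf : f.IsHomogeneous s) (hm : f ∈ torsionIdeal W L l) : f ∈ W ⊔ Ideal.span {L} := by
  obtain ⟨e, q, hq, hq0, hm⟩ := hm
  induction e generalizing q with
  | zero =>
    obtain ⟨c, hc, rfl⟩ := exists_ne_zero_eq_C hq hq0
    rw [pairEval_C, C_mul_mem_iff hc] at hm
    exact Ideal.mem_sup_left hm
  | succ e ih =>
    obtain ⟨c, q', hq', rfl⟩ := exists_eq_C_mul_X_pow_add hq
    rcases eq_or_ne c 0 with rfl | hc
    · rw [C_0, zero_mul, zero_add] at hq0 hm
      rw [map_mul, pairEval_X_zero, mul_assoc] at hm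
      exact ih q' hq' (right_ne_zero_of_mul hq0) (h.mem_of_fst_mul_mem _ hm)
    · rw [map_add, map_mul, map_mul, map_pow, pairEval_X_zero, pairEval_X_one, pairEval_C] at hm
      refine h.mem_sup_of_snd_pow_mul_mem hs hf (j := e + 1) ((C_mul_mem_iff hc).1 ?_)
      refine mem_sup_span_singleton_of_sub_mem (g := -(pairEval L l q' * f)) ?_
      convert hm using 1
      ring

theorem exists_mem_torsionIdeal_sub_mem (h : IsParameterPair W n d L l) (hs : n ≤ s)
    (hf : f.IsHomogeneous (s + 1)) (hm : f ∈ torsionIdeal W L l) :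
    ∃ g ∈ torsionIdeal W L l, g.IsHomogeneous s ∧ f - L * g ∈ W := by
  obtain ⟨g, hg, hgW⟩ := exists_sub_linear_mul_mem h.isHomogeneous_ideal h.isHomogeneous_fst hf
    (h.mem_sup_of_mem_torsionIdeal (Nat.succ_le_succ hs) hf hm)
  refine ⟨g, h.mem_torsionIdeal_of_fst_mul_mem ?_, hg, hgW⟩
  exact (Submodule.sub_mem_iff_right _ hm).1 (le_torsionIdeal W L l hgW)

theorem exists_mem_torsionIdeal_sub_pow_mul_mem (h : IsParameterPair W n d L l) {j : ℕ}
    (hf : f.IsHomogeneous (n + 1 + j)) (hm : f ∈ torsionIdeal W L l) :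
    ∃ g ∈ torsionIdeal W L l, g.IsHomogeneous (n + 1) ∧ f - L ^ j * g ∈ W :=
  exists_sub_pow_mul_mem (fun _ ht _ hfT hf =>
    h.exists_mem_torsionIdeal_sub_mem (n.le_succ.trans ht) hf hfT) hf hm

theorem one_notMem_torsionIdeal [Finite σ] (h : IsParameterPair W n d L l) :
    1 ∉ torsionIdeal W L l := by
  intro h1
  have hzero : hilb (W ⊔ Ideal.span {L}) (n + 1) = 0 := hilb_eq_zero_iff.2 fun f hf =>
    h.mem_sup_of_mem_torsionIdeal le_rfl hf ((Ideal.eq_top_iff_one _).2 h1 ▸ trivial)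
  exact h.pos.ne' (h.hilb_sup _ le_rfl ▸ hzero)

theorem eq_zero_of_pairEval_mem [Finite σ] (h : IsParameterPair W n d L l)
    {q : MvPolynomial (Fin 2) K} (hq : pairEval L l q ∈ W) : q = 0 := by
  by_contra h0
  exact h.one_notMem_torsionIdeal (mem_torsionIdeal_of_ne_zero h.isHomogeneous_ideal
    h.isHomogeneous_fst h.isHomogeneous_snd (isHomogeneous_one _ _) h0 (by simpa using hq))

theorem torsionIdeal_le_lowIdeal (h : IsParameterPair W n d L l) :
    torsionIdeal W L l ≤ lowIdeal (torsionIdeal W L l) (n + 1) := by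
  have hW : W ≤ lowIdeal (torsionIdeal W L l) (n + 1) :=
    h.le_lowIdeal.trans (lowIdeal_le_iff.2 fun t ht f hf hfW =>
      mem_lowIdeal hf ht (le_torsionIdeal W L l hfW))
  have hhom : ∀ t, ∀ f : MvPolynomial σ K, f.IsHomogeneous t → f ∈ torsionIdeal W L l →
      f ∈ lowIdeal (torsionIdeal W L l) (n + 1) := by
    intro t f hf hm
    rcases le_or_gt t (n + 1) with ht | ht
    · exact mem_lowIdeal hf ht hm
    · obtain ⟨j, rfl⟩ := Nat.exists_eq_add_of_le ht.le
      obtain ⟨g, hgT, hg, hfg⟩ := h.exists_mem_torsionIdeal_sub_pow_mul_mem hf hm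
      rw [← sub_add_cancel f (L ^ j * g)]
      exact Ideal.add_mem _ (hW hfg) (Ideal.mul_mem_left _ _ (mem_lowIdeal hg le_rfl hgT))
  intro f hf
  exact (mem_iff_homogeneousComponent_mem (isHomogeneous_lowIdeal _ _) f).2 fun t =>
    hhom t _ (homogeneousComponent_isHomogeneous t f)
      (homogeneousComponent_mem_of_mem h.isHomogeneous_torsionIdeal hf t)

theorem hilb_succ_torsionIdeal [Finite σ] (h : IsParameterPair W n d L l) {t : ℕ} (ht : n ≤ t) :
    hilb (torsionIdeal W L l) (t + 1) = hilb (torsionIdeal W L l) t + d := by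
  rw [hilb_succ h.isHomogeneous_torsionIdeal h.isHomogeneous_fst h.fst_ne_zero
    fun f _ => h.mem_torsionIdeal_of_fst_mul_mem, ← h.hilb_sup (t + 1) (Nat.succ_le_succ ht)]
  congr 1
  refine hilb_congr fun f hf => ⟨fun hm => ?_, fun hm =>
    sup_le_sup_right (le_torsionIdeal W L l) _ hm⟩
  obtain ⟨g, hg, hgm⟩ := exists_sub_linear_mul_mem h.isHomogeneous_torsionIdeal
    h.isHomogeneous_fst hf hm
  have hfg := h.mem_sup_of_mem_torsionIdeal (Nat.succ_le_succ ht)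
    (hf.sub (isHomogeneous_linear_mul h.isHomogeneous_fst hg)) hgm
  rw [← sub_add_cancel f (L * g)]
  exact Ideal.add_mem _ hfg (Ideal.mem_sup_right (Ideal.mem_span_singleton.2 (dvd_mul_right L g)))

theorem hilb_succ_ideal [Finite σ] (h : IsParameterPair W n d L l) {t : ℕ} (ht : n ≤ t) :
    hilb W (t + 1) = hilb W t + d := by
  rw [hilb_succ h.isHomogeneous_ideal h.isHomogeneous_fst h.fst_ne_zero
    fun f _ => h.mem_of_fst_mul_mem f, h.hilb_sup (t + 1) (Nat.succ_le_succ ht)]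

theorem exists_hilb_eq_linear [Finite σ] (h : IsParameterPair W n d L l) :
    ∃ c : ℤ, ∃ N : ℕ, ∀ t : ℕ, N ≤ t → (hilb W t : ℤ) = d * t + c := by
  refine ⟨(hilb W n : ℤ) - d * n, n, fun t ht => ?_⟩
  induction t, ht using Nat.le_induction with
  | base => ring
  | succ t ht ih =>
    rw [h.hilb_succ_ideal ht]
    push_cast
    rw [ih]
    ring

theorem saturate_eq (h : IsParameterPair W n d L l) : saturate W = W :=
  saturate_eq_of_forall_linear_mul_mem h.isHomogeneous_fst h.mem_of_fst_mul_mem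

end IsParameterPair

section GenericPair

variable {I J : Ideal (MvPolynomial σ K)} {L l : MvPolynomial σ K} {n d t : ℕ}

theorem isHomogeneous_compIdeal (I : Ideal (MvPolynomial σ K)) (n : ℕ) :
    (compIdeal I n).IsHomogeneous (homogeneousSubmodule σ K) :=
  Ideal.homogeneous_span _ _ fun _ hf => ⟨n, hf.2⟩

theorem hilb_sup_span_singleton_congr [Finite σ]
    (hI : I.IsHomogeneous (homogeneousSubmodule σ K))
    (hJ : J.IsHomogeneous (homogeneousSubmodule σ K)) (hL : L.IsHomogeneous 1)
    (h : ∀ f : MvPolynomial σ K, f.IsHomogeneous (t + 1) → (f ∈ I ↔ f ∈ J)) :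
    hilb (I ⊔ Ideal.span {L}) (t + 1) = hilb (J ⊔ Ideal.span {L}) (t + 1) := by
  refine hilb_congr fun f hf => ⟨fun hfI => ?_, fun hfJ => ?_⟩
  · obtain ⟨g, hg, hfg⟩ := exists_sub_linear_mul_mem hI hL hf hfI
    exact mem_sup_span_singleton_of_sub_mem
      ((h _ (hf.sub (isHomogeneous_linear_mul hL hg))).1 hfg)
  · obtain ⟨g, hg, hfg⟩ := exists_sub_linear_mul_mem hJ hL hf hfJ
    exact mem_sup_span_singleton_of_sub_mem
      ((h _ (hf.sub (isHomogeneous_linear_mul hL hg))).2 hfg)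

theorem exists_hilb_lowIdeal_sup_eq [Finite σ] (hL : L.IsHomogeneous 1)
    (h : ∃ N, ∀ t, N ≤ t → hilb (compIdeal I n ⊔ Ideal.span {L}) t = d) :
    ∃ N, ∀ t, N ≤ t → hilb (lowIdeal I n ⊔ Ideal.span {L}) t = d := by
  obtain ⟨N, hN⟩ := h
  refine ⟨max N n + 1, fun t ht => ?_⟩
  obtain ⟨t, rfl⟩ := Nat.exists_eq_add_of_le' (Nat.one_le_of_lt ht)
  rw [← hN (t + 1) (by omega)]
  exact hilb_sup_span_singleton_congr (isHomogeneous_lowIdeal I n) (isHomogeneous_compIdeal I n) hL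
    fun f hf => ⟨mem_compIdeal_of_mem_lowIdeal hf (by omega), fun hm => compIdeal_le_lowIdeal hm⟩

theorem hilb_lowIdeal_sup_eq_hvec [Finite σ] (hI : I.IsHomogeneous (homogeneousSubmodule σ K))
    (hL : L.IsHomogeneous 1) (hL0 : L ≠ 0)
    (hinj : ∀ t, ∀ f : MvPolynomial σ K, f.IsHomogeneous t → L * f ∈ I → f ∈ I) :
    hilb (lowIdeal I (n + 1) ⊔ Ideal.span {L}) (n + 1) = hvec I (n + 1) := by
  rw [hilb_sup_span_singleton_congr (isHomogeneous_lowIdeal I _) hI hL fun f hf =>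
    ⟨fun hm => lowIdeal_le hm, mem_lowIdeal hf le_rfl⟩, hvec, hilb_succ hI hL hL0 (hinj n),
    Nat.add_sub_cancel_left]

theorem exists_X_notMem_span_singleton [Finite σ] (hL : L ∈ I) (h : hilb I (t + 1) ≠ 0) :
    ∃ i, X i ∉ Submodule.span K {L} := by
  have := Fintype.ofFinite σ
  by_contra! hX
  refine h (hilb_eq_zero_iff.2 fun f hf => ?_)
  obtain ⟨w, -, rfl⟩ := exists_eq_sum_X_mul hf
  have hspan : Submodule.span K {L} ≤ I.restrictScalars K := by simpa using hL
  exact I.sum_mem fun i _ => I.mul_mem_right _ (hspan (hX i))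

theorem not_linear_dvd_of_notMem_span_singleton (hL : L.IsHomogeneous 1) (hl : l.IsHomogeneous 1)
    (h : l ∉ Submodule.span K {L}) : ¬ L ∣ l := by
  intro hd
  obtain ⟨g, hg, rfl⟩ := exists_isHomogeneous_of_linear_dvd (t := 0) hL hl hd
  refine h (Submodule.mem_span_singleton.2 ⟨coeff 0 g, ?_⟩)
  rw [smul_eq_C_mul, ← totalDegree_eq_zero_iff_eq_C.1 (Nat.le_zero.1 hg.totalDegree_le), mul_comm]

theorem isParameterPair_of_forall_notMem [Finite σ]
    (hinj : ∀ t, ∀ f : MvPolynomial σ K, f.IsHomogeneous t → L * f ∈ I → f ∈ I)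
    (hL : L.IsHomogeneous 1) (hL0 : L ≠ 0) (hl : l.IsHomogeneous 1)
    (hd0 : 0 < d) (hdn : d ≤ n + 1)
    (hn : hilb (lowIdeal I (n + 1) ⊔ Ideal.span {L}) (n + 1) = d)
    (hd : ∃ N, ∀ t, N ≤ t → hilb (lowIdeal I (n + 1) ⊔ Ideal.span {L}) t = d)
    (hlL : l ∉ Submodule.span K {L})
    (hlass : ∀ p ∈ associatedPrimes (MvPolynomial σ K)
      (MvPolynomial σ K ⧸ saturate (lowIdeal I (n + 1) ⊔ Ideal.span {L})), l ∉ p) :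
    IsParameterPair (lowIdeal I (n + 1)) n d L l := by
  have hW := isHomogeneous_lowIdeal I (n + 1)
  have hB := hW.sup (Ideal.homogeneous_span _ {L} fun _ hx => ⟨1, hx ▸ hL⟩)
  have hl0 : l ≠ 0 := fun h => hlL (h ▸ zero_mem _)
  have hlow : lowIdeal I (n + 1) ≤ lowIdeal (lowIdeal I (n + 1)) (n + 1) :=
    lowIdeal_le_iff.2 fun t ht f hf hfI => mem_lowIdeal hf ht (mem_lowIdeal hf ht hfI)
  have hlS : ∀ f, l * f ∈ saturate (lowIdeal I (n + 1) ⊔ Ideal.span {L}) → f ∈ saturate _ :=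
    fun f => mem_of_mul_mem_of_forall_notMem_associatedPrimes hlass
  have hlinj : ∀ t, n + 1 ≤ t → ∀ f : MvPolynomial σ K, f.IsHomogeneous t →
      l * f ∈ lowIdeal I (n + 1) ⊔ Ideal.span {L} → f ∈ lowIdeal I (n + 1) ⊔ Ideal.span {L} :=
    fun t ht f hf h =>
      mem_of_mem_saturate hB hl hl0 hlS hd hn hdn ht hf (hlS f (le_saturate _ h))
  have hdec : ∀ t, n ≤ t → ∀ f : MvPolynomial σ K, f.IsHomogeneous (t + 1) →
      ∃ g g' : MvPolynomial σ K, g.IsHomogeneous t ∧ g'.IsHomogeneous t ∧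
        f - L * g - l * g' ∈ lowIdeal I (n + 1) := by
    intro t ht f hf
    obtain ⟨g', hg', hfg'⟩ := exists_sub_linear_mul_mem_of_hilb_eq hB hl hl0 hlS hd hn hdn ht hf
    obtain ⟨g, hg, hfg⟩ := exists_sub_linear_mul_mem hW hL
      (hf.sub (isHomogeneous_linear_mul hl hg')) hfg'
    exact ⟨g, g', hg, hg', by rwa [sub_right_comm]⟩
  refine ⟨hW, hlow, hL, hl, hL0, fun f hf => ?_, hlinj, hdec, hd0,
    fun t => hilb_eq_of_hilb_eq hB hl hl0 hlS hd hn hdn⟩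
  refine (mem_iff_homogeneousComponent_mem hW f).2 fun t => ?_
  refine mem_of_linear_mul_mem hW hlow hL hL0 hl (not_linear_dvd_of_notMem_span_singleton hL hl hlL)
    (fun t ht f hf hm => mem_lowIdeal hf ht (hinj t f hf (lowIdeal_le hm))) hlinj hdec
    (homogeneousComponent_isHomogeneous t f) ?_
  rw [← homogeneousComponent_add_mul hL]
  exact homogeneousComponent_mem_of_mem hW hf _

theorem exists_finite_isParameterPair [Finite σ] (hI : I.IsHomogeneous (homogeneousSubmodule σ K))
    (hinj : ∀ t, ∀ f : MvPolynomial σ K, f.IsHomogeneous t → L * f ∈ I → f ∈ I)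
    (hL : L.IsHomogeneous 1) (hL0 : L ≠ 0) (hd0 : 0 < d) (hdn : d ≤ n + 1)
    (hn : hvec I (n + 1) = d)
    (hd : ∃ N, ∀ t, N ≤ t → hilb (compIdeal I (n + 1) ⊔ Ideal.span {L}) t = d) :
    ∃ s : Set (Submodule K (MvPolynomial σ K)), s.Finite ∧ (∀ p ∈ s, ∃ i, X i ∉ p) ∧
      ∀ l : MvPolynomial σ K, l.IsHomogeneous 1 → (∀ p ∈ s, l ∉ p) →
        IsParameterPair (lowIdeal I (n + 1)) n d L l := by
  have := Fintype.ofFinite σ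
  have hn' := (hilb_lowIdeal_sup_eq_hvec hI hL hL0 hinj).trans hn
  let B := lowIdeal I (n + 1) ⊔ Ideal.span {L}
  refine ⟨insert (Submodule.span K {L}) ((fun p => p.restrictScalars K) ''
    associatedPrimes (MvPolynomial σ K) (MvPolynomial σ K ⧸ saturate B)),
    ((associatedPrimes.finite _ _).image _).insert _, ?_, fun l hl hls => ?_⟩
  · rintro _ (rfl | ⟨p, hp, rfl⟩)
    · exact exists_X_notMem_span_singleton (I := B)
        (Ideal.mem_sup_right (Ideal.mem_span_singleton_self L)) (hn'.trans_ne hd0.ne')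
    · exact exists_X_notMem_of_mem_associatedPrimes hp
  · exact isParameterPair_of_forall_notMem hinj hL hL0 hl hd0 hdn hn'
      (exists_hilb_lowIdeal_sup_eq hL hd) (hls _ (Set.mem_insert _ _))
      fun p hp => hls _ (Set.mem_insert_of_mem _ (Set.mem_image_of_mem _ hp))

end GenericPair

section Interpolation

variable {m : ℕ} {Z : Finset (Fin m → K)} {L : MvPolynomial (Fin m) K}

theorem exists_linear_eval_eq_zero_eval_ne_zero {v w : Fin m → K} (hw0 : w ≠ 0)
    (h : ∀ c : K, v ≠ c • w) :
    ∃ f : MvPolynomial (Fin m) K, f.IsHomogeneous 1 ∧ eval w f = 0 ∧ eval v f ≠ 0 := by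
  obtain ⟨j, hj⟩ := Function.ne_iff.1 hw0
  obtain ⟨i, hi⟩ : ∃ i, w j * v i - w i * v j ≠ 0 := by
    by_contra! hminor
    refine h (v j / w j) (funext fun i => ?_)
    rw [Pi.smul_apply, smul_eq_mul, div_mul_eq_mul_div, eq_div_iff hj]
    linear_combination hminor i
  refine ⟨C (w j) * X i - C (w i) * X j,
    (isHomogeneous_C_mul_X _ _).sub (isHomogeneous_C_mul_X _ _), ?_, by simpa using hi⟩
  simp [mul_comm]

theorem exists_isHomogeneous_separating (hZ0 : ∀ v ∈ Z, v ≠ 0)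
    (hZ : ∀ v ∈ Z, ∀ w ∈ Z, v ≠ w → ∀ c : K, w ≠ c • v) {z : Fin m → K} (hz : z ∈ Z) :
    ∃ (e : ℕ) (f : MvPolynomial (Fin m) K), f.IsHomogeneous e ∧ eval z f ≠ 0 ∧
      ∀ w ∈ Z, w ≠ z → eval w f = 0 := by
  classical
  have hlin : ∀ w ∈ Z.erase z, ∃ f : MvPolynomial (Fin m) K, f.IsHomogeneous 1 ∧
      eval w f = 0 ∧ eval z f ≠ 0 := by
    intro w hw
    obtain ⟨hwz, hw⟩ := Finset.mem_erase.1 hw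
    exact exists_linear_eval_eq_zero_eval_ne_zero (hZ0 w hw) (hZ w hw z hz hwz)
  choose! F hF hFw hFz using hlin
  refine ⟨_, ∏ w ∈ Z.erase z, F w, IsHomogeneous.prod _ F _ hF, ?_, fun w hw hwz => ?_⟩
  · rw [map_prod]
    exact Finset.prod_ne_zero_iff.2 hFz
  · have hw' := Finset.mem_erase.2 ⟨hwz, hw⟩
    rw [map_prod, Finset.prod_eq_zero hw' (hFw w hw')]

theorem eval_eq_zero_iff_of_sub_pow_mul_mem {I : Ideal (MvPolynomial (Fin m) K)}
    {v : Fin m → K} (hI : ∀ f ∈ I, eval v f = 0) (hv : eval v L ≠ 0) {j : ℕ}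
    {f g : MvPolynomial (Fin m) K} (h : f - L ^ j * g ∈ I) : eval v g = 0 ↔ eval v f = 0 := by
  have heval := hI _ h
  rw [map_sub, map_mul, map_pow, sub_eq_zero] at heval
  rw [heval, mul_eq_zero, or_iff_right (pow_ne_zero j hv)]

/- A form separating one point from the others exists in some degree; multiplied by a power of `L`
it is pushed into degrees where division by powers of `L` is possible. -/
theorem exists_separating_of_exists_sub_pow_mul_mem (hZ0 : ∀ v ∈ Z, v ≠ 0)
    (hZ : ∀ v ∈ Z, ∀ w ∈ Z, v ≠ w → ∀ c : K, w ≠ c • v) (hL : L.IsHomogeneous 1)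
    (hLZ : ∀ v ∈ Z, eval v L ≠ 0) {T : Ideal (MvPolynomial (Fin m) K)}
    (hT : T.IsHomogeneous (homogeneousSubmodule (Fin m) K)) {N : ℕ}
    (hdiv : ∀ j, ∀ f ∈ T, f.IsHomogeneous (N + j) →
      ∃ g ∈ T, g.IsHomogeneous N ∧ f - L ^ j * g ∈ pointsIdeal (Z : Set (Fin m → K)))
    {z : Fin m → K} (hz : z ∈ Z) (hzT : ∃ f ∈ T, eval z f ≠ 0) :
    ∃ u ∈ T, u.IsHomogeneous N ∧ eval z u ≠ 0 ∧ ∀ w ∈ Z, w ≠ z → eval w u = 0 := by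
  obtain ⟨f, hfT, hfz⟩ := hzT
  obtain ⟨s, hs⟩ : ∃ s, eval z (homogeneousComponent s f) ≠ 0 := by
    by_contra! hzero
    exact hfz (by rw [← sum_homogeneousComponent f, map_sum, Finset.sum_eq_zero fun i _ => hzero i])
  obtain ⟨e, p, hp, hpz, hpw⟩ := exists_isHomogeneous_separating hZ0 hZ hz
  have hhom : (L ^ N * (p * homogeneousComponent s f)).IsHomogeneous (N + (e + s)) := by
    simpa using (hL.pow N).mul (hp.mul (homogeneousComponent_isHomogeneous s f))
  obtain ⟨u, huT, hu, hsub⟩ := hdiv _ _ (T.mul_mem_left _ (T.mul_mem_left _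
    (homogeneousComponent_mem_of_mem hT hfT s))) hhom
  have heval : ∀ v ∈ Z, eval v u = 0 ↔ eval v (L ^ N * (p * homogeneousComponent s f)) = 0 :=
    fun v hv => eval_eq_zero_iff_of_sub_pow_mul_mem
      (fun f hf => eval_eq_zero_of_mem_pointsIdeal hf (Finset.mem_coe.2 hv)) (hLZ v hv) hsub
  refine ⟨u, huT, hu, ?_, fun w hw hwz => (heval w hw).2 ?_⟩
  · rw [Ne, heval z hz, map_mul, map_mul, map_pow]
    exact mul_ne_zero (pow_ne_zero _ (hLZ z hz)) (mul_ne_zero hpz hs)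
  · rw [map_mul, map_mul, hpw w hw hwz, zero_mul, mul_zero]

theorem exists_mem_forall_eval_eq {T : Ideal (MvPolynomial (Fin m) K)} {N : ℕ}
    {φ : (Fin m → K) → K} (hsep : ∀ z ∈ Z, φ z ≠ 0 →
      ∃ u ∈ T, u.IsHomogeneous N ∧ eval z u ≠ 0 ∧ ∀ w ∈ Z, w ≠ z → eval w u = 0) :
    ∃ p ∈ T, p.IsHomogeneous N ∧ ∀ v ∈ Z, eval v p = φ v := by
  have hone : ∀ z ∈ Z, ∃ u ∈ T, u.IsHomogeneous N ∧ eval z u = φ z ∧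
      ∀ w ∈ Z, w ≠ z → eval w u = 0 := by
    intro z hz
    rcases eq_or_ne (φ z) 0 with h0 | h0
    · exact ⟨0, zero_mem T, isHomogeneous_zero _ _ _, by simp [h0], fun _ _ _ => map_zero _⟩
    · obtain ⟨u, huT, hu, huz, huw⟩ := hsep z hz h0
      refine ⟨C (φ z / eval z u) * u, T.mul_mem_left _ huT, ?_, ?_, fun w hw hwz => ?_⟩
      · simpa using (isHomogeneous_C (Fin m) (φ z / eval z u)).mul hu
      · rw [map_mul, eval_C, div_mul_cancel₀ _ huz]
      · rw [map_mul, huw w hw hwz, mul_zero]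
  choose! u huT hu huz huw using hone
  refine ⟨∑ z ∈ Z, u z, T.sum_mem huT, IsHomogeneous.sum _ _ _ hu, fun v hv => ?_⟩
  rw [map_sum, Finset.sum_eq_single v (fun z hz hzv => huw z hz v hv hzv.symm)
    (fun h => absurd hv h), huz v hv]

end Interpolation

/-- `Z` consists of representatives of distinct points of projective space, its `h`-vector takes a
value `d` with `0 < d ≤ n + 1` in degree `n + 1` and vanishes in higher degrees, and for every
linear form `L` missing `Z` the base locus of the degree `n + 1` component of the artinian reduction
by `L` is zero-dimensional of degree `d`. -/
structure HasBaseLocusDegree {m : ℕ} (Z : Finset (Fin m → K)) (n d : ℕ) : Prop where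
  ne_zero : ∀ v ∈ Z, v ≠ 0
  ne_smul : ∀ v ∈ Z, ∀ w ∈ Z, v ≠ w → ∀ c : K, w ≠ c • v
  pos : 0 < d
  le_succ : d ≤ n + 1
  hvec_succ : hvec (pointsIdeal (Z : Set (Fin m → K))) (n + 1) = d
  hvec_eq_zero : ∀ t, n + 2 ≤ t → hvec (pointsIdeal (Z : Set (Fin m → K))) t = 0
  exists_hilb_eq : ∀ L : MvPolynomial (Fin m) K, L.IsHomogeneous 1 → L ≠ 0 →
    (∀ v ∈ Z, eval v L ≠ 0) → ∃ N : ℕ, ∀ t, N ≤ t →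
      hilb (compIdeal (pointsIdeal (Z : Set (Fin m → K))) (n + 1) ⊔ Ideal.span {L}) t = d

variable {m n d t : ℕ} {Z : Finset (Fin m → K)} {L l f : MvPolynomial (Fin m) K}

theorem IsParameterPair.mem_lowIdeal_of_mem_torsionIdeal
    (h : IsParameterPair (lowIdeal (pointsIdeal (Z : Set (Fin m → K))) (n + 1)) n d L l)
    (hLZ : ∀ v ∈ Z, eval v L ≠ 0) (hf : f.IsHomogeneous t)
    (hfT : f ∈ torsionIdeal (lowIdeal (pointsIdeal (Z : Set (Fin m → K))) (n + 1)) L l)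
    (hfZ : f ∈ pointsIdeal (Z : Set (Fin m → K))) :
    f ∈ lowIdeal (pointsIdeal (Z : Set (Fin m → K))) (n + 1) := by
  rcases le_or_gt t (n + 1) with ht | ht
  · exact mem_lowIdeal hf ht hfZ
  · obtain ⟨j, rfl⟩ := Nat.exists_eq_add_of_le ht.le
    obtain ⟨g, -, hg, hfg⟩ := h.exists_mem_torsionIdeal_sub_pow_mul_mem hf hfT
    have hgZ : g ∈ pointsIdeal (Z : Set (Fin m → K)) := by
      refine mem_pointsIdeal_of_mul_mem (h.isHomogeneous_fst.pow j)
        (fun v hv => by simpa using pow_ne_zero j (hLZ v hv)) hg ?_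
      exact (Submodule.sub_mem_iff_right _ hfZ).1 (lowIdeal_le hfg)
    rw [← sub_add_cancel f (L ^ j * g)]
    exact Ideal.add_mem _ hfg (Ideal.mul_mem_left _ _ (mem_lowIdeal hg le_rfl hgZ))

namespace HasBaseLocusDegree

theorem exists_finite_isParameterPair [Infinite K] (hZ : HasBaseLocusDegree Z n d)
    (hL : L.IsHomogeneous 1) (hL0 : L ≠ 0) (hLZ : ∀ v ∈ Z, eval v L ≠ 0) :
    ∃ s : Set (Submodule K (MvPolynomial (Fin m) K)), s.Finite ∧ (∀ p ∈ s, ∃ i, X i ∉ p) ∧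
      ∀ l : MvPolynomial (Fin m) K, l.IsHomogeneous 1 → (∀ p ∈ s, l ∉ p) →
        IsParameterPair (lowIdeal (pointsIdeal (Z : Set (Fin m → K))) (n + 1)) n d L l :=
  PointsCurve.exists_finite_isParameterPair (isHomogeneous_pointsIdeal _)
    (fun _ _ hf h => mem_pointsIdeal_of_mul_mem hL hLZ hf h) hL hL0 hZ.pos hZ.le_succ hZ.hvec_succ
    (hZ.exists_hilb_eq L hL hL0 hLZ)

theorem exists_sub_linear_mul_mem [Infinite K] (hZ : HasBaseLocusDegree Z n d)
    (hL : L.IsHomogeneous 1) (hL0 : L ≠ 0) (hLZ : ∀ v ∈ Z, eval v L ≠ 0) (ht : n + 1 ≤ t)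
    (hf : f.IsHomogeneous (t + 1)) :
    ∃ g : MvPolynomial (Fin m) K, g.IsHomogeneous t ∧
      f - L * g ∈ pointsIdeal (Z : Set (Fin m → K)) := by
  have hI := isHomogeneous_pointsIdeal (Z : Set (Fin m → K))
  have hsucc := hilb_succ hI hL hL0 fun f hf h => mem_pointsIdeal_of_mul_mem (t := t) hL hLZ hf h
  have hzero := hZ.hvec_eq_zero (t + 1) (Nat.succ_le_succ ht)
  rw [hvec, hsucc, Nat.add_sub_cancel_left] at hzero
  exact PointsCurve.exists_sub_linear_mul_mem hI hL hf (hilb_eq_zero_iff.1 hzero f hf)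

theorem exists_separating_mem_torsionIdeal (hZ : HasBaseLocusDegree Z n d)
    (h : IsParameterPair (lowIdeal (pointsIdeal (Z : Set (Fin m → K))) (n + 1)) n d L l)
    (hLZ : ∀ v ∈ Z, eval v L ≠ 0) {z : Fin m → K} (hz : z ∈ Z)
    (hzT : ∃ f ∈ torsionIdeal (lowIdeal (pointsIdeal (Z : Set (Fin m → K))) (n + 1)) L l,
      eval z f ≠ 0) :
    ∃ u ∈ torsionIdeal (lowIdeal (pointsIdeal (Z : Set (Fin m → K))) (n + 1)) L l,
      u.IsHomogeneous (n + 1) ∧ eval z u ≠ 0 ∧ ∀ w ∈ Z, w ≠ z → eval w u = 0 :=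
  exists_separating_of_exists_sub_pow_mul_mem hZ.ne_zero hZ.ne_smul h.isHomogeneous_fst hLZ
    h.isHomogeneous_torsionIdeal (fun _ _ hfT hf =>
      let ⟨g, hgT, hg, hfg⟩ := h.exists_mem_torsionIdeal_sub_pow_mul_mem hf hfT
      ⟨g, hgT, hg, lowIdeal_le hfg⟩) hz hzT

theorem mem_torsionIdeal_of_forall_eval_eq_zero (hZ : HasBaseLocusDegree Z n d)
    (h : IsParameterPair (lowIdeal (pointsIdeal (Z : Set (Fin m → K))) (n + 1)) n d L l)
    (hLZ : ∀ v ∈ Z, eval v L ≠ 0) (ht : t ≤ n + 1) (hf : f.IsHomogeneous t)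
    (hfv : ∀ v ∈ Z, (∀ p ∈ torsionIdeal (lowIdeal (pointsIdeal (Z : Set (Fin m → K))) (n + 1)) L l,
      eval v p = 0) → eval v f = 0) :
    f ∈ torsionIdeal (lowIdeal (pointsIdeal (Z : Set (Fin m → K))) (n + 1)) L l := by
  obtain ⟨j, hj⟩ := Nat.exists_eq_add_of_le' ht
  have hLf : (L ^ j * f).IsHomogeneous (n + 1) := by
    simpa [hj] using (h.isHomogeneous_fst.pow j).mul hf
  obtain ⟨p, hpT, hp, hpv⟩ := exists_mem_forall_eval_eq (φ := fun v => eval v (L ^ j * f))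
    fun z hz hφ => hZ.exists_separating_mem_torsionIdeal h hLZ hz <| by
      by_contra! hzT
      exact hφ (by rw [map_mul, hfv z hz hzT, mul_zero])
  have hsub : L ^ j * f - p ∈ pointsIdeal (Z : Set (Fin m → K)) :=
    (mem_pointsIdeal_iff_of_isHomogeneous (hLf.sub hp)).2 fun v hv => by
      rw [map_sub, hpv v hv, sub_self]
  have hLfT := (Submodule.sub_mem_iff_left _ hpT).1
    (le_torsionIdeal _ L l (mem_lowIdeal (hLf.sub hp) le_rfl hsub))
  exact h.mem_torsionIdeal_of_fst_pow_mul_mem hLfT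

end HasBaseLocusDegree

section KrullDimension

theorem ringKrullDim_le_of_isIntegral {A S : Type*} [CommRing A] [CommRing S] {f : A →+* S}
    (hf : f.IsIntegral) : ringKrullDim S ≤ ringKrullDim A := by
  algebraize [f]
  exact Order.krullDim_le_of_strictMono (PrimeSpectrum.comap (algebraMap A S)) fun P Q hPQ =>
    Ideal.IsIntegral.comap_lt_comap (R := A) (I := P.asIdeal) (J := Q.asIdeal) hPQ

theorem ringKrullDim_eq_of_isIntegral_of_injective {A S : Type*} [CommRing A] [CommRing S]
    {f : A →+* S} (hf : f.IsIntegral) (hinj : Function.Injective f) :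
    ringKrullDim S = ringKrullDim A := by
  refine le_antisymm (ringKrullDim_le_of_isIntegral hf) (iSup_le fun p => ?_)
  algebraize [f]
  have hbot : (⊥ : Ideal S).comap (algebraMap A S) ≤ (RelSeries.head p).asIdeal := fun a ha =>
    (map_eq_zero_iff (algebraMap A S) hinj).1 ha ▸ zero_mem _
  obtain ⟨Q, -, _, hQ⟩ := Ideal.exists_ideal_over_prime_of_isIntegral _ _ hbot
  have : Q.LiesOver (RelSeries.head p).asIdeal := ⟨hQ.symm⟩
  obtain ⟨q, hq, -⟩ := Ideal.exists_ltSeries_of_hasGoingUp (S := S) p Q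
  exact hq ▸ le_iSup (fun q : LTSeries (PrimeSpectrum S) => ((q.length : ℕ) : WithBot ℕ∞)) q

end KrullDimension

section MinimalPrimes

theorem isHomogeneous_of_mem_minimalPrimes {I P : Ideal (MvPolynomial σ K)}
    (hI : I.IsHomogeneous (homogeneousSubmodule σ K)) (hP : P ∈ I.minimalPrimes) :
    P.IsHomogeneous (homogeneousSubmodule σ K) := by
  have : P.IsPrime := hP.1.1
  have hle := Ideal.toIdeal_homogeneousCore_le (homogeneousSubmodule σ K) P
  have hcore : I ≤ (P.homogeneousCore (homogeneousSubmodule σ K)).toIdeal := by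
    rw [← hI.toIdeal_homogeneousCore_eq_self]
    exact Ideal.homogeneousCore_mono _ hP.1.2
  rw [hle.antisymm' (hP.2 ⟨Ideal.IsPrime.homogeneousCore ‹_›, hcore⟩ hle)]
  exact HomogeneousIdeal.isHomogeneous _

theorem isHomogeneous_curvePart {W : Ideal (MvPolynomial σ K)}
    (hW : W.IsHomogeneous (homogeneousSubmodule σ K)) :
    (curvePart W).IsHomogeneous (homogeneousSubmodule σ K) :=
  Ideal.IsHomogeneous.sInf fun _ hP => isHomogeneous_of_mem_minimalPrimes hW hP.1

theorem mem_curvePart {W : Ideal (MvPolynomial σ K)} {f : MvPolynomial σ K} :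
    f ∈ curvePart W ↔
      ∀ P ∈ W.minimalPrimes, ringKrullDim (MvPolynomial σ K ⧸ P) = 2 → f ∈ P := by
  simp [curvePart, Submodule.mem_sInf]

theorem radical_le_curvePart (W : Ideal (MvPolynomial σ K)) : W.radical ≤ curvePart W :=
  fun _ hf => mem_curvePart.2 fun _ hP _ => (hP.1.1.radical_le_iff.2 hP.1.2) hf

theorem torsionIdeal_le_of_isPrime {W P : Ideal (MvPolynomial σ K)} {L l : MvPolynomial σ K}
    (hP : P.IsPrime) (hWP : W ≤ P) (hinj : ∀ q, pairEval L l q ∈ P → q = 0) :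
    torsionIdeal W L l ≤ P := by
  rintro f ⟨e, q, -, hq, hf⟩
  exact (hP.mem_or_mem (hWP hf)).resolve_left fun h => hq (hinj q h)

end MinimalPrimes

/-- The structure map of `K[x]/P` as an algebra over the polynomial ring in two variables, which
act as `L` and `l`. -/
noncomputable def pairEvalQuotient (P : Ideal (MvPolynomial σ K)) (L l : MvPolynomial σ K) :
    MvPolynomial (Fin 2) K →ₐ[K] MvPolynomial σ K ⧸ P :=
  (Ideal.Quotient.mkₐ K P).comp (pairEval L l)

theorem pairEvalQuotient_apply (P : Ideal (MvPolynomial σ K)) (L l : MvPolynomial σ K)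
    (q : MvPolynomial (Fin 2) K) :
    pairEvalQuotient P L l q = Ideal.Quotient.mk P (pairEval L l q) :=
  rfl

theorem pairEvalQuotient_eq_zero_iff {P : Ideal (MvPolynomial σ K)} {L l : MvPolynomial σ K}
    {q : MvPolynomial (Fin 2) K} : pairEvalQuotient P L l q = 0 ↔ pairEval L l q ∈ P :=
  Ideal.Quotient.eq_zero_iff_mem

theorem ringKrullDim_mvPolynomial_fin_two : ringKrullDim (MvPolynomial (Fin 2) K) = 2 := by
  rw [MvPolynomial.ringKrullDim_of_isNoetherianRing, ringKrullDim_eq_zero_of_field]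
  simp

namespace IsParameterPair

variable {W P : Ideal (MvPolynomial σ K)} {n d : ℕ} {L l : MvPolynomial σ K}

theorem mk_mem_of_forall_isHomogeneous_le (h : IsParameterPair W n d L l)
    {N : AddSubgroup (MvPolynomial σ K ⧸ W)}
    (hN : ∀ q, ∀ y ∈ N, pairEvalQuotient W L l q * y ∈ N)
    (hlow : ∀ t ≤ n, ∀ f : MvPolynomial σ K, f.IsHomogeneous t → Ideal.Quotient.mk W f ∈ N)
    (f : MvPolynomial σ K) : Ideal.Quotient.mk W f ∈ N := by
  suffices hhom : ∀ t, ∀ f : MvPolynomial σ K, f.IsHomogeneous t → Ideal.Quotient.mk W f ∈ N by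
    rw [← sum_homogeneousComponent f, map_sum]
    exact N.sum_mem fun i _ => hhom i _ (homogeneousComponent_isHomogeneous i f)
  intro t
  induction t with
  | zero => exact hlow 0 (Nat.zero_le n)
  | succ t ih =>
    intro f hf
    rcases Nat.lt_or_ge t n with ht | ht
    · exact hlow (t + 1) ht f hf
    obtain ⟨g, g', hg, hg', hm⟩ := h.exists_sub_sub_mem t ht f hf
    have hf : Ideal.Quotient.mk W f = pairEvalQuotient W L l (X 0) * Ideal.Quotient.mk W g +
        pairEvalQuotient W L l (X 1) * Ideal.Quotient.mk W g' := by
      rw [pairEvalQuotient_apply, pairEvalQuotient_apply, pairEval_X_zero, pairEval_X_one,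
        ← map_mul, ← map_mul, ← map_add, Ideal.Quotient.eq, ← sub_sub]
      exact hm
    exact hf ▸ N.add_mem (hN _ _ (ih g hg)) (hN _ _ (ih g' hg'))

theorem eq_zero_of_pairEval_mem_of_mem_minimalPrimes (h : IsParameterPair W n d L l)
    {Q : Ideal (MvPolynomial σ K)} (hQ : Q ∈ (torsionIdeal W L l).minimalPrimes)
    {q : MvPolynomial (Fin 2) K} (hq : pairEval L l q ∈ Q) : q = 0 := by
  by_contra hq0
  obtain ⟨i, hi⟩ := exists_homogeneousComponent_ne_zero hq0
  have hqi := homogeneousComponent_mem_of_mem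
    (isHomogeneous_of_mem_minimalPrimes h.isHomogeneous_torsionIdeal hQ) hq i
  rw [homogeneousComponent_pairEval h.isHomogeneous_fst h.isHomogeneous_snd] at hqi
  obtain ⟨y, hy, e, u, hu, hu0, hm⟩ := Ideal.exists_mul_mem_of_mem_minimalPrimes hQ hqi
  refine hy ⟨e + i, u * homogeneousComponent i q,
    hu.mul (homogeneousComponent_isHomogeneous i q), mul_ne_zero hu0 hi, ?_⟩
  rwa [map_mul, mul_assoc]

section Finite

variable [Finite σ]

theorem finite_pairEvalQuotient_self (h : IsParameterPair W n d L l) :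
    (pairEvalQuotient W L l).Finite := by
  let _ := (pairEvalQuotient W L l).toRingHom.toAlgebra
  let _ : Module (MvPolynomial (Fin 2) K) (MvPolynomial σ K ⧸ W) := Algebra.toModule
  have hsmul : ∀ (q : MvPolynomial (Fin 2) K) (y : MvPolynomial σ K ⧸ W),
      q • y = pairEvalQuotient W L l q * y := fun q y => Algebra.smul_def q y
  choose B hB using fun t : ℕ => homogeneousSubmodule_fg σ K t
  classical
  let U := (Finset.range (n + 1)).biUnion fun t => (B t).image (Ideal.Quotient.mk W)
  set N := Submodule.span (MvPolynomial (Fin 2) K) (U : Set (MvPolynomial σ K ⧸ W))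
  have hN : ∀ q, ∀ y ∈ N.toAddSubgroup, pairEvalQuotient W L l q * y ∈ N.toAddSubgroup :=
    fun q y hy => hsmul q y ▸ N.smul_mem q hy
  have hlow : ∀ t ≤ n, ∀ f : MvPolynomial σ K, f.IsHomogeneous t →
      Ideal.Quotient.mk W f ∈ N.toAddSubgroup := by
    intro t ht f hf
    rw [← mem_homogeneousSubmodule, ← hB t] at hf
    induction hf using Submodule.span_induction with
    | mem f hf =>
      refine Submodule.subset_span (Finset.mem_coe.2 (Finset.mem_biUnion.2 ⟨t, ?_, ?_⟩))
      exacts [Finset.mem_range.2 (Nat.lt_succ_of_le ht), Finset.mem_image_of_mem _ hf]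
    | zero => exact map_zero (Ideal.Quotient.mk W) ▸ zero_mem _
    | add f g _ _ hf hg => exact map_add (Ideal.Quotient.mk W) f g ▸ add_mem hf hg
    | smul a f _ hf =>
      rw [MvPolynomial.smul_eq_C_mul, map_mul, ← pairEval_C L l]
      exact hN _ _ hf
  refine ⟨U, eq_top_iff.2 fun y _ => ?_⟩
  obtain ⟨f, rfl⟩ := Ideal.Quotient.mk_surjective y
  exact h.mk_mem_of_forall_isHomogeneous_le hN hlow f

theorem isIntegral_pairEvalQuotient (h : IsParameterPair W n d L l) (hWP : W ≤ P) :
    (pairEvalQuotient P L l).toRingHom.IsIntegral := by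
  have hfactor := RingHom.Finite.of_surjective _ (Ideal.Quotient.factor_surjective hWP)
  exact (RingHom.Finite.comp hfactor h.finite_pairEvalQuotient_self).to_isIntegral

theorem ringKrullDim_quotient_eq_two (h : IsParameterPair W n d L l) (hWP : W ≤ P)
    (hinj : ∀ q, pairEval L l q ∈ P → q = 0) : ringKrullDim (MvPolynomial σ K ⧸ P) = 2 :=
  ringKrullDim_mvPolynomial_fin_two (K := K) ▸
    ringKrullDim_eq_of_isIntegral_of_injective (h.isIntegral_pairEvalQuotient hWP)
      ((injective_iff_map_eq_zero (pairEvalQuotient P L l)).2 fun q hq =>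
        hinj q (pairEvalQuotient_eq_zero_iff.1 hq))

theorem eq_zero_of_pairEval_mem_of_ringKrullDim_eq (h : IsParameterPair W n d L l) (hWP : W ≤ P)
    (hdim : ringKrullDim (MvPolynomial σ K ⧸ P) = 2) {q : MvPolynomial (Fin 2) K}
    (hq : pairEval L l q ∈ P) : q = 0 := by
  by_contra hq0
  have hlt := ringKrullDim_quotient_succ_le_of_nonZeroDivisor (mem_nonZeroDivisors_of_ne_zero hq0)
  rw [ringKrullDim_mvPolynomial_fin_two] at hlt
  have hker : ∀ a ∈ Ideal.span {q}, (pairEvalQuotient P L l).toRingHom a = 0 := by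
    intro a ha
    obtain ⟨b, rfl⟩ := Ideal.mem_span_singleton'.1 ha
    exact pairEvalQuotient_eq_zero_iff.2 (map_mul (pairEval L l) b q ▸ P.mul_mem_left _ hq)
  have hle := ringKrullDim_le_of_isIntegral <| RingHom.IsIntegral.tower_top
    (Ideal.Quotient.mk (Ideal.span {q})) (Ideal.Quotient.lift _ _ hker) <| by
      rw [Ideal.Quotient.lift_comp_mk]
      exact h.isIntegral_pairEvalQuotient hWP
  rw [hdim] at hle
  have : (2 : WithBot ℕ∞) + 1 ≤ 2 := le_trans (by gcongr) hlt
  exact absurd this (by decide)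

theorem torsionIdeal_le_curvePart (h : IsParameterPair W n d L l) :
    torsionIdeal W L l ≤ curvePart W :=
  le_sInf fun _ hP => torsionIdeal_le_of_isPrime hP.1.1.1 hP.1.1.2 fun _ =>
    h.eq_zero_of_pairEval_mem_of_ringKrullDim_eq hP.1.1.2 hP.2

theorem curvePart_le_radical_torsionIdeal (h : IsParameterPair W n d L l) :
    curvePart W ≤ (torsionIdeal W L l).radical := by
  rw [← Ideal.sInf_minimalPrimes]
  refine le_sInf fun Q hQ => ?_
  have : Q.IsPrime := hQ.1.1
  obtain ⟨P, hP, hPQ⟩ := Ideal.exists_minimalPrimes_le ((le_torsionIdeal W L l).trans hQ.1.2)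
  refine (sInf_le ⟨hP, ?_⟩ : curvePart W ≤ P).trans hPQ
  exact h.ringKrullDim_quotient_eq_two hP.1.2 fun q hq =>
    h.eq_zero_of_pairEval_mem_of_mem_minimalPrimes hQ (hPQ hq)

theorem eval_eq_zero_of_mem_curvePart (h : IsParameterPair W n d L l) {v : σ → K}
    (hv : ∀ f ∈ torsionIdeal W L l, eval v f = 0) {f : MvPolynomial σ K} (hf : f ∈ curvePart W) :
    eval v f = 0 := by
  obtain ⟨m, hm⟩ := h.curvePart_le_radical_torsionIdeal hf
  exact eq_zero_of_pow_eq_zero (map_pow (eval v) f m ▸ hv _ hm)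

end Finite

end IsParameterPair

section Differentials

open KaehlerDifferential

open scoped TensorProduct

theorem derivation_eq_zero_of_separable {F A M : Type*} [CommRing F] [CommRing A] [Algebra F A]
    [AddCommGroup M] [Module A M] [Module F M] (D : Derivation F A M) {q : Polynomial F}
    (hq : q.Separable) {y : A} (hy : Polynomial.aeval y q = 0) : D y = 0 := by
  obtain ⟨a, b, hab⟩ := hq
  have hunit : Polynomial.aeval y b * Polynomial.aeval y (Polynomial.derivative q) = 1 := by
    simpa [hy] using congrArg (Polynomial.aeval y) hab
  have hder : Polynomial.aeval y (Polynomial.derivative q) • D y = 0 := by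
    rw [← D.map_aeval, hy, map_zero]
  rw [← one_smul A (D y), ← hunit, mul_smul, hder, smul_zero]

theorem formallyUnramified_of_adjoin_eq_top {F A : Type*} [CommRing F] [CommRing A] [Algebra F A]
    {s : Set A} (hs : Algebra.adjoin F s = ⊤)
    (h : ∀ y ∈ s, ∃ q : Polynomial F, q.Separable ∧ Polynomial.aeval y q = 0) :
    Algebra.FormallyUnramified F A := by
  have hD : D F A = 0 := Derivation.ext_of_adjoin_eq_top s hs fun y hy => by
    obtain ⟨q, hq, hqy⟩ := h y hy
    exact derivation_eq_zero_of_separable _ hq hqy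
  have hspan := span_range_derivation F A
  rw [hD, Submodule.span_eq_bot.2 (by rintro _ ⟨y, rfl⟩; rfl)] at hspan
  exact (Algebra.formallyUnramified_iff F A).2
    ((Submodule.subsingleton_iff A).1 (subsingleton_of_bot_eq_top hspan))

theorem one_tmul_fractionRing_eq_zero_iff {T M : Type*} [CommRing T] [IsDomain T] [AddCommGroup M]
    [Module T M] (y : M) : (1 : FractionRing T) ⊗ₜ[T] y = 0 ↔ ∃ t : T, t ≠ 0 ∧ t • y = 0 := by
  have h := IsLocalizedModule.eq_zero_iff (nonZeroDivisors T)
    (TensorProduct.mk T (FractionRing T) M 1) (m := y)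
  rw [TensorProduct.mk_apply] at h
  rw [h]
  exact ⟨fun ⟨s, hs⟩ => ⟨s, nonZeroDivisors.coe_ne_zero s, hs⟩,
    fun ⟨t, ht, hty⟩ => ⟨⟨t, mem_nonZeroDivisors_of_ne_zero ht⟩, hty⟩⟩

theorem exists_smul_eq_zero_of_smul_pow_eq_zero {T M : Type*} [CommRing T] [IsDomain T] [CommRing M]
    [Algebra T M] [Module.Finite T M] {s : Set M} (hs : Algebra.adjoin T s = ⊤)
    (h : ∀ y ∈ s, ∃ g : Polynomial T, (g.map (algebraMap T (FractionRing T))).Separable ∧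
      ∃ t : T, t ≠ 0 ∧ t • Polynomial.aeval y g = 0)
    {f : M} {e : ℕ} {t : T} (ht : t ≠ 0) (hf : t • f ^ e = 0) : ∃ t' : T, t' ≠ 0 ∧ t' • f = 0 := by
  have : Algebra.FormallyUnramified (FractionRing T) (FractionRing T ⊗[T] M) := by
    refine formallyUnramified_of_adjoin_eq_top
      (Algebra.TensorProduct.adjoin_one_tmul_image_eq_top s hs) ?_
    rintro _ ⟨y, hy, rfl⟩
    obtain ⟨g, hg, hgy⟩ := h y hy
    refine ⟨_, hg, ?_⟩
    rw [Polynomial.aeval_map_algebraMap]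
    exact (Polynomial.aeval_algHom_apply Algebra.TensorProduct.includeRight y g).trans
      ((one_tmul_fractionRing_eq_zero_iff _).2 hgy)
  have : IsReduced (FractionRing T ⊗[T] M) :=
    Algebra.FormallyUnramified.isReduced_of_field (FractionRing T) _
  refine (one_tmul_fractionRing_eq_zero_iff f).1 (IsReduced.eq_zero _ ⟨e, ?_⟩)
  rw [Algebra.TensorProduct.tmul_pow, one_pow]
  exact (one_tmul_fractionRing_eq_zero_iff _).2 ⟨t, ht, hf⟩

theorem ker_map_eq_span_D_algebraMap (R A B : Type*) [CommRing R] [CommRing A] [CommRing B]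
    [Algebra R A] [Algebra A B] [Algebra R B] [IsScalarTower R A B] :
    LinearMap.ker (KaehlerDifferential.map R A B B) =
      Submodule.span B (Set.range fun a : A => D R B (algebraMap A B a)) := by
  refine le_antisymm ?_ (Submodule.span_le.2 ?_)
  · rw [← range_mapBaseChange]
    rintro _ ⟨z, rfl⟩
    induction z using TensorProduct.induction_on with
    | zero => simp
    | add y z hy hz => rw [map_add]; exact add_mem hy hz
    | tmul b w =>
      rw [mapBaseChange_tmul]
      refine Submodule.smul_mem _ b ?_
      have hw : w ∈ Submodule.span A (Set.range (D R A)) := by simp [span_range_derivation]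
      induction hw using Submodule.span_induction with
      | mem _ hx =>
        obtain ⟨a, rfl⟩ := hx
        rw [map_D]
        exact Submodule.subset_span ⟨a, rfl⟩
      | zero => simp
      | add y z _ _ hy hz => rw [map_add]; exact add_mem hy hz
      | smul a y _ hy =>
        rw [map_smul, ← algebraMap_smul B a]
        exact Submodule.smul_mem _ _ hy
  · rintro _ ⟨a, rfl⟩
    simp [map_D]

theorem formallyUnramified_iff_span_D_algebraMap (R A B : Type*) [CommRing R] [CommRing A]
    [CommRing B] [Algebra R A] [Algebra A B] [Algebra R B] [IsScalarTower R A B] :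
    Algebra.FormallyUnramified A B ↔
      Submodule.span B (Set.range fun a : A => D R B (algebraMap A B a)) = ⊤ := by
  rw [Algebra.formallyUnramified_iff, ← ker_map_eq_span_D_algebraMap, LinearMap.ker_eq_top]
  refine ⟨fun _ => LinearMap.ext fun _ => Subsingleton.elim _ _, fun h => ?_⟩
  refine subsingleton_of_forall_eq 0 fun y => ?_
  obtain ⟨z, rfl⟩ := map_surjective R A B y
  rw [h, LinearMap.zero_apply]

theorem span_D_image_eq_top_of_isSeparable {K E : Type*} [Field K] [Field E] [Algebra K E]
    (s : Set E) [Algebra.IsSeparable (IntermediateField.adjoin K s) E] :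
    Submodule.span E (D K E '' s) = ⊤ := by
  rw [← top_le_iff, ← (formallyUnramified_iff_span_D_algebraMap K (IntermediateField.adjoin K s)
    E).1 (Algebra.FormallyUnramified.of_isSeparable _ E), Submodule.span_le]
  rintro _ ⟨⟨y, hy⟩, rfl⟩
  change D K E y ∈ Submodule.span E (D K E '' s)
  induction hy using IntermediateField.adjoin_induction with
  | mem x hx => exact Submodule.subset_span ⟨x, hx, rfl⟩
  | algebraMap x => rw [Derivation.map_algebraMap]; exact zero_mem _
  | add x y _ _ hx hy => rw [map_add]; exact add_mem hx hy
  | inv x _ hx => rw [Derivation.leibniz_inv]; exact Submodule.smul_mem _ _ hx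
  | mul x y _ _ hx hy =>
    rw [Derivation.leibniz]
    exact add_mem (Submodule.smul_mem _ _ hy) (Submodule.smul_mem _ _ hx)

theorem rank_kaehlerDifferential_le_trdeg (K E : Type*) [Field K] [Field E] [Algebra K E]
    [PerfectField K] [Algebra.EssFiniteType K E] :
    Module.rank E (Ω[E⁄K]) ≤ Algebra.trdeg K E := by
  obtain ⟨s, hs, _⟩ := exists_isTranscendenceBasis_and_isSeparable_of_perfectField K E
  calc Module.rank E (Ω[E⁄K])
      = Module.rank E (Submodule.span E (D K E '' s)) := by
        rw [span_D_image_eq_top_of_isSeparable, rank_top]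
    _ ≤ Cardinal.mk (D K E '' s) := rank_span_le _
    _ ≤ Cardinal.mk s := Cardinal.mk_image_le
    _ = Algebra.trdeg K E := hs.cardinalMk_eq_trdeg

theorem separable_map_minpoly {K T E : Type*} [Field K] [CommRing T] [IsDomain T]
    [IsIntegrallyClosed T] [Field E] [Algebra K T] [Algebra K E] [Algebra T E] [IsScalarTower K T E]
    [FaithfulSMul T E] [Algebra.EssFiniteType K E]
    (hspan : Submodule.span E (Set.range fun t : T => D K E (algebraMap T E t)) = ⊤) {y : E}
    (hy : IsIntegral T y) : ((minpoly T y).map (algebraMap T (FractionRing T))).Separable := by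
  let _ : Algebra (FractionRing T) E := FractionRing.liftAlgebra T E
  have : IsScalarTower K (FractionRing T) E := .of_algebraMap_eq fun c => by
    rw [IsScalarTower.algebraMap_apply K T (FractionRing T),
      ← IsScalarTower.algebraMap_apply T (FractionRing T) E, ← IsScalarTower.algebraMap_apply]
  have : Algebra.EssFiniteType (FractionRing T) E := .of_comp K (FractionRing T) E
  have : Algebra.FormallyUnramified (FractionRing T) E := by
    rw [formallyUnramified_iff_span_D_algebraMap K, ← top_le_iff, ← hspan]
    refine Submodule.span_mono ?_
    rintro _ ⟨t, rfl⟩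
    exact ⟨algebraMap T (FractionRing T) t,
      congrArg (D K E) (IsScalarTower.algebraMap_apply T (FractionRing T) E t).symm⟩
  have := Algebra.FormallyUnramified.isSeparable (FractionRing T) E
  rw [← minpoly.isIntegrallyClosed_eq_field_fractions' (FractionRing T) hy]
  exact Algebra.IsSeparable.isSeparable (FractionRing T) y

end Differentials

section ResidueField

open KaehlerDifferential Algebra

universe u v w

theorem lift_trdeg_fractionRing_eq_of_isIntegral {K : Type w} {A : Type u} {B : Type v} [Field K]
    [CommRing A] [Algebra K A] [CommRing B] [IsDomain B] [Algebra K B] {f : A →ₐ[K] B}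
    (hf : f.toRingHom.IsIntegral) (hinj : Function.Injective f) :
    Cardinal.lift.{u} (Algebra.trdeg K (FractionRing B)) =
      Cardinal.lift.{v} (Algebra.trdeg K A) := by
  let _ := f.toRingHom.toAlgebra
  have : IsScalarTower K A B := .of_algebraMap_eq fun c => (f.commutes c).symm
  have : FaithfulSMul A B := (faithfulSMul_iff_algebraMap_injective A B).2 hinj
  have : Algebra.IsIntegral A B := ⟨hf⟩
  have : IsDomain A := hinj.isDomain f.toRingHom
  have : Algebra.IsAlgebraic B (FractionRing B) := IsLocalization.isAlgebraic _ (nonZeroDivisors B)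
  have : Algebra.IsAlgebraic A (FractionRing B) := .trans A B _
  have : FaithfulSMul A (FractionRing B) := .trans A B _
  rw [← lift_trdeg_add_eq K A (FractionRing B), trdeg_eq_zero (R := A), Cardinal.lift_zero,
    add_zero]

open Algebra

theorem span_pair_eq_top {E V : Type*} [Field E] [AddCommGroup V] [Module E V]
    (hrank : Module.rank E V ≤ 2) {u v : V} (hu : (⊥ : Submodule E V) ≠ ⊤ → u ∉ (⊥ : Submodule E V))
    (hv : Submodule.span E {u} ≠ ⊤ → v ∉ Submodule.span E {u}) :
    Submodule.span E {u, v} = ⊤ := by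
  have : Module.Finite E V := Module.rank_lt_aleph0_iff.1 (hrank.trans_lt Cardinal.ofNat_lt_aleph0)
  by_cases hbot : (⊥ : Submodule E V) = ⊤
  · exact eq_top_iff.2 (hbot ▸ bot_le)
  by_cases hspan : Submodule.span E {u} = ⊤
  · exact eq_top_iff.2 (hspan ▸ Submodule.span_mono (by simp))
  have hind : LinearIndependent E ![u, v] := (LinearIndependent.pair_iff' (hu hbot)).2
    fun a ha => hv hspan (Submodule.mem_span_singleton.2 ⟨a, ha⟩)
  have hcard := hind.span_eq_top_of_card_eq_finrank' <|
    le_antisymm hind.fintype_card_le_finrank (Module.finrank_le_of_rank_le hrank)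
  rwa [Matrix.range_cons_cons_empty] at hcard

variable {E : Type*} [Field E] [Algebra K E]
  [Algebra (MvPolynomial σ K) E] [IsScalarTower K (MvPolynomial σ K) E]

theorem span_D_algebraMap_X_eq_top [Algebra.FormallyUnramified (MvPolynomial σ K) E] :
    Submodule.span E (Set.range fun j : σ => D K E (algebraMap (MvPolynomial σ K) E (X j))) =
      ⊤ := by
  rw [← top_le_iff, ← (formallyUnramified_iff_span_D_algebraMap K (MvPolynomial σ K) E).1 ‹_›,
    Submodule.span_le]
  rintro _ ⟨f, rfl⟩
  dsimp only
  induction f using MvPolynomial.induction_on with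
  | C a =>
    rw [← algebraMap_eq, ← IsScalarTower.algebraMap_apply, Derivation.map_algebraMap]
    exact zero_mem _
  | add p q hp hq =>
    rw [map_add, map_add]
    exact add_mem hp hq
  | mul_X p j hp =>
    rw [map_mul, Derivation.leibniz]
    exact add_mem (Submodule.smul_mem _ _ (Submodule.subset_span ⟨j, rfl⟩))
      (Submodule.smul_mem _ _ hp)

theorem exists_submodule_forall_D_notMem [Nonempty σ]
    [Algebra.FormallyUnramified (MvPolynomial σ K) E] (N : Submodule E (Ω[E⁄K])) :
    ∃ p : Submodule K (MvPolynomial σ K), (∃ i, X i ∉ p) ∧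
      ∀ f ∉ p, N ≠ ⊤ → D K E (algebraMap (MvPolynomial σ K) E f) ∉ N := by
  by_cases hN : N = ⊤
  · exact ⟨⊥, ⟨Classical.arbitrary σ, X_ne_zero _⟩, fun f _ hne => absurd hN hne⟩
  let δ := (D K E).toLinearMap ∘ₗ (IsScalarTower.toAlgHom K (MvPolynomial σ K) E).toLinearMap
  refine ⟨(N.restrictScalars K).comap δ, ?_, fun f hf _ => hf⟩
  by_contra! hX
  refine hN (eq_top_iff.2 ?_)
  rw [← span_D_algebraMap_X_eq_top (σ := σ), Submodule.span_le]
  rintro _ ⟨i, rfl⟩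
  exact hX i

end ResidueField

section SeparableMinpoly

variable {P : Ideal (MvPolynomial σ K)} {L l x : MvPolynomial σ K}

/-- Evaluation of a polynomial in one variable over the coordinate ring `K[y₀, y₁]` of the plane,
at `x` for the variable and at `L` and `l` for `y₀` and `y₁`. -/
noncomputable def polyEval (L l x : MvPolynomial σ K) :
    Polynomial (MvPolynomial (Fin 2) K) →ₐ[K] MvPolynomial σ K :=
  Polynomial.eval₂AlgHom (pairEval L l) x fun _ => Commute.all _ _

theorem polyEval_monomial (L l x : MvPolynomial σ K) (i : ℕ) (a : MvPolynomial (Fin 2) K) :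
    polyEval L l x (Polynomial.monomial i a) = pairEval L l a * x ^ i :=
  Polynomial.eval₂_monomial _ _

theorem map_polyEval {S : Type*} [CommRing S] (φ : MvPolynomial σ K →+* S)
    (L l x : MvPolynomial σ K) (q : Polynomial (MvPolynomial (Fin 2) K)) :
    φ (polyEval L l x q) = q.eval₂ (φ.comp (pairEval L l : MvPolynomial (Fin 2) K →+* _)) (φ x) :=
  Polynomial.hom_eval₂ _ _ _ _

/-- `p` is the minimal polynomial of the class of `x` in `K[x]/P` over the polynomial ring in the
two elements `L` and `l`, and it is separable over the field of rational functions in them. It is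
characterised by divisibility, which suffices because the base ring is integrally closed. -/
structure IsSeparableMinpoly (P : Ideal (MvPolynomial σ K)) (L l x : MvPolynomial σ K)
    (p : Polynomial (MvPolynomial (Fin 2) K)) : Prop where
  monic : p.Monic
  mem : polyEval L l x p ∈ P
  dvd : ∀ q, polyEval L l x q ∈ P → p ∣ q
  separable : (p.map (algebraMap _ (FractionRing (MvPolynomial (Fin 2) K)))).Separable
  irreducible : Irreducible (p.map (algebraMap _ (FractionRing (MvPolynomial (Fin 2) K))))

theorem exists_isSeparableMinpoly {E : Type*} [Field E] [Algebra K E]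
    [Algebra (MvPolynomial σ K) E] [IsScalarTower K (MvPolynomial σ K) E]
    [Algebra.EssFiniteType K E] (hker : ∀ f, algebraMap (MvPolynomial σ K) E f = 0 ↔ f ∈ P)
    (hint : (pairEvalQuotient P L l).toRingHom.IsIntegral)
    (hinj : ∀ q, pairEval L l q ∈ P → q = 0)
    (hspan : Submodule.span E {KaehlerDifferential.D K E (algebraMap (MvPolynomial σ K) E L),
      KaehlerDifferential.D K E (algebraMap (MvPolynomial σ K) E l)} = ⊤) (x : MvPolynomial σ K) :
    ∃ p, IsSeparableMinpoly P L l x p := by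
  let ψ := (IsScalarTower.toAlgHom K (MvPolynomial σ K) E).comp (pairEval L l)
  let _ : Algebra (MvPolynomial (Fin 2) K) E := ψ.toRingHom.toAlgebra
  have : IsScalarTower K (MvPolynomial (Fin 2) K) E :=
    .of_algebraMap_eq fun c => (ψ.commutes c).symm
  have : FaithfulSMul (MvPolynomial (Fin 2) K) E :=
    (faithfulSMul_iff_algebraMap_injective _ _).2 <|
      (injective_iff_map_eq_zero _).2 fun q hq => hinj q ((hker _).1 hq)
  have haeval : ∀ q, Polynomial.aeval (algebraMap (MvPolynomial σ K) E x) q = 0 ↔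
      polyEval L l x q ∈ P := fun q => by
    rw [← hker, map_polyEval]
    rfl
  have hx : IsIntegral (MvPolynomial (Fin 2) K) (algebraMap (MvPolynomial σ K) E x) := by
    obtain ⟨q, hq, hqx⟩ := hint (Ideal.Quotient.mk P x)
    exact ⟨q, hq, (haeval q).2 <|
      Ideal.Quotient.eq_zero_iff_mem.1 ((map_polyEval _ L l x q).trans hqx)⟩
  have hspan' : Submodule.span E (Set.range fun q : MvPolynomial (Fin 2) K =>
      KaehlerDifferential.D K E (algebraMap _ E q)) = ⊤ := by
    rw [← top_le_iff, ← hspan]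
    refine Submodule.span_mono ?_
    rintro _ (rfl | rfl)
    exacts [⟨X 0, by simp [RingHom.algebraMap_toAlgebra, ψ]⟩,
      ⟨X 1, by simp [RingHom.algebraMap_toAlgebra, ψ]⟩]
  have hmonic := minpoly.monic hx
  exact ⟨_, hmonic, (haeval _).1 (minpoly.aeval _ _),
    fun q hq => minpoly.isIntegrallyClosed_dvd hx ((haeval q).2 hq),
    separable_map_minpoly hspan' hx,
    hmonic.irreducible_iff_irreducible_map_fraction_map.1 (minpoly.irreducible hx)⟩

theorem rank_kaehlerDifferential_residueField_le_two [PerfectField K] [Finite σ] [P.IsPrime]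
    (hint : (pairEvalQuotient P L l).toRingHom.IsIntegral)
    (hinj : ∀ q, pairEval L l q ∈ P → q = 0) :
    Module.rank (FractionRing (MvPolynomial σ K ⧸ P))
      (Ω[FractionRing (MvPolynomial σ K ⧸ P)⁄K]) ≤ 2 := by
  have htrdeg := lift_trdeg_fractionRing_eq_of_isIntegral hint
    ((injective_iff_map_eq_zero _).2 fun q hq => hinj q (pairEvalQuotient_eq_zero_iff.1 hq))
  refine (rank_kaehlerDifferential_le_trdeg _ _).trans ?_
  rw [MvPolynomial.trdeg_of_isDomain] at htrdeg
  simpa using htrdeg.le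

theorem exists_submodule_forall_isSeparableMinpoly [PerfectField K] [Finite σ] [Nonempty σ]
    {W : Ideal (MvPolynomial σ K)} {n d : ℕ} (h : IsParameterPair W n d L l) [P.IsPrime]
    (hWP : W ≤ P) (hdim : ringKrullDim (MvPolynomial σ K ⧸ P) = 2) :
    ∃ p : Submodule K (MvPolynomial σ K), (∃ i, X i ∉ p) ∧ ∀ L' ∉ p,
      ∃ p' : Submodule K (MvPolynomial σ K), (∃ i, X i ∉ p') ∧ ∀ l' ∉ p',
        IsParameterPair W n d L' l' → ∀ x, ∃ q, IsSeparableMinpoly P L' l' x q := by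
  let E := FractionRing (MvPolynomial σ K ⧸ P)
  have hker : ∀ f, algebraMap (MvPolynomial σ K) E f = 0 ↔ f ∈ P := fun f => by
    rw [IsScalarTower.algebraMap_apply _ (MvPolynomial σ K ⧸ P), IsFractionRing.to_map_eq_zero_iff,
      Ideal.Quotient.algebraMap_eq, Ideal.Quotient.eq_zero_iff_mem]
  have : Algebra.FormallyUnramified (MvPolynomial σ K) E := inferInstance
  have hrank := rank_kaehlerDifferential_residueField_le_two (h.isIntegral_pairEvalQuotient hWP)
    fun q => h.eq_zero_of_pairEval_mem_of_ringKrullDim_eq hWP hdim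
  obtain ⟨p, hp, hpD⟩ := exists_submodule_forall_D_notMem (σ := σ) (⊥ : Submodule E (Ω[E⁄K]))
  refine ⟨p, hp, fun L' hL' => ?_⟩
  obtain ⟨p', hp', hpD'⟩ := exists_submodule_forall_D_notMem (σ := σ)
    (Submodule.span E {KaehlerDifferential.D K E (algebraMap (MvPolynomial σ K) E L')})
  refine ⟨p', hp', fun l' hl' h' x => exists_isSeparableMinpoly hker
    (h'.isIntegral_pairEvalQuotient hWP)
    (fun q => h'.eq_zero_of_pairEval_mem_of_ringKrullDim_eq hWP hdim) ?_ x⟩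
  exact span_pair_eq_top hrank (hpD L' hL') (hpD' l' hl')

end SeparableMinpoly

namespace HasBaseLocusDegree

variable {m n d : ℕ} {Z : Finset (Fin m → K)}

theorem exists_finite_forall_eval_ne_zero [NeZero m] (hZ : HasBaseLocusDegree Z n d) :
    ∃ s : Set (Submodule K (MvPolynomial (Fin m) K)), s.Finite ∧ (∀ p ∈ s, ∃ i, X i ∉ p) ∧
      ∀ f, (∀ p ∈ s, f ∉ p) → f ≠ 0 ∧ ∀ v ∈ Z, eval v f ≠ 0 := by
  refine ⟨insert ⊥ ((fun v => LinearMap.ker (aeval v : _ →ₐ[K] K).toLinearMap) '' Z),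
    (Z.finite_toSet.image _).insert _, ?_, fun f hf => ⟨?_, fun v hv hfv => ?_⟩⟩
  · rintro _ (rfl | ⟨v, hv, rfl⟩)
    · exact ⟨0, X_ne_zero _⟩
    · obtain ⟨i, hi⟩ := Function.ne_iff.1 (hZ.ne_zero v hv)
      exact ⟨i, by simpa using hi⟩
  · exact hf ⊥ (Set.mem_insert _ _)
  · exact hf _ (Set.mem_insert_of_mem _ ⟨v, hv, rfl⟩) (by simpa [aeval_eq_eval] using hfv)

theorem exists_isParameterPair_isSeparableMinpoly [NeZero m] [Infinite K] [PerfectField K]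
    (hZ : HasBaseLocusDegree Z n d) :
    ∃ L l : MvPolynomial (Fin m) K, (∀ v ∈ Z, eval v L ≠ 0) ∧
      IsParameterPair (lowIdeal (pointsIdeal (Z : Set (Fin m → K))) (n + 1)) n d L l ∧
      ∀ P ∈ (lowIdeal (pointsIdeal (Z : Set (Fin m → K))) (n + 1)).minimalPrimes,
        ringKrullDim (MvPolynomial (Fin m) K ⧸ P) = 2 → ∀ x, ∃ p, IsSeparableMinpoly P L l x p := by
  set W := lowIdeal (pointsIdeal (Z : Set (Fin m → K))) (n + 1)
  obtain ⟨s, hs, hsX, hsZ⟩ := hZ.exists_finite_forall_eval_ne_zero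
  obtain ⟨L₀, hL₀, hL₀s⟩ := exists_isHomogeneous_one_forall_notMem hs hsX
  obtain ⟨s₀, hs₀, hs₀X, hs₀pair⟩ :=
    hZ.exists_finite_isParameterPair hL₀ (hsZ L₀ hL₀s).1 (hsZ L₀ hL₀s).2
  obtain ⟨l₀, hl₀, hl₀s⟩ := exists_isHomogeneous_one_forall_notMem hs₀ hs₀X
  let curves := {P | P ∈ W.minimalPrimes ∧ ringKrullDim (MvPolynomial (Fin m) K ⧸ P) = 2}
  have : Finite curves :=
    (W.finite_minimalPrimes_of_isNoetherianRing _ |>.subset fun _ hP => hP.1).to_subtype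
  choose p hpX hp using fun P : curves =>
    have := P.2.1.1.1
    exists_submodule_forall_isSeparableMinpoly (hs₀pair l₀ hl₀ hl₀s) P.2.1.1.2 P.2.2
  obtain ⟨L, hL, hLs⟩ := exists_isHomogeneous_one_forall_notMem (hs.union (Set.finite_range p)) <|
    fun q hq => hq.elim (hsX q) (by rintro ⟨P, rfl⟩; exact hpX P)
  obtain ⟨hL0, hLZ⟩ := hsZ L fun q hq => hLs q (.inl hq)
  obtain ⟨s', hs', hsX', hpair⟩ := hZ.exists_finite_isParameterPair hL hL0 hLZ
  choose p' hpX' hp' using fun P => hp P L (hLs _ (.inr ⟨P, rfl⟩))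
  obtain ⟨l, hl, hls⟩ := exists_isHomogeneous_one_forall_notMem (hs'.union (Set.finite_range p')) <|
    fun q hq => hq.elim (hsX' q) (by rintro ⟨P, rfl⟩; exact hpX' P)
  have h := hpair l hl fun q hq => hls q (.inl hq)
  exact ⟨L, l, hLZ, h, fun P hP hdim x =>
    hp' ⟨P, hP, hdim⟩ l (hls _ (.inr ⟨_, rfl⟩)) h x⟩

end HasBaseLocusDegree

section HomogeneousPart

variable {L l x : MvPolynomial σ K} {e : ℕ}
  {q : Polynomial (MvPolynomial (Fin 2) K)}

/-- The component of degree `e` of a polynomial over `K[y₀, y₁]`, all three variables having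
degree one. -/
noncomputable def homogeneousPart (e : ℕ) (q : Polynomial (MvPolynomial (Fin 2) K)) :
    Polynomial (MvPolynomial (Fin 2) K) :=
  ∑ i ∈ Finset.range (e + 1), Polynomial.monomial i (homogeneousComponent (e - i) (q.coeff i))

theorem coeff_homogeneousPart (e : ℕ) (q : Polynomial (MvPolynomial (Fin 2) K)) (i : ℕ) :
    (homogeneousPart e q).coeff i =
      if i ≤ e then homogeneousComponent (e - i) (q.coeff i) else 0 := by
  simp [homogeneousPart, Polynomial.finsetSum_coeff, Polynomial.coeff_monomial]

theorem natDegree_homogeneousPart_le (e : ℕ) (q : Polynomial (MvPolynomial (Fin 2) K)) :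
    (homogeneousPart e q).natDegree ≤ e :=
  Polynomial.natDegree_le_iff_coeff_eq_zero.2 fun i hi => by
    rw [coeff_homogeneousPart, if_neg hi.not_ge]

theorem monic_homogeneousPart (hq : q.Monic) : (homogeneousPart q.natDegree q).Monic := by
  refine Polynomial.monic_of_natDegree_le_of_coeff_eq_one _ (natDegree_homogeneousPart_le _ q) ?_
  simp [coeff_homogeneousPart, hq]

theorem polyEval_homogeneousPart (hL : L.IsHomogeneous 1) (hl : l.IsHomogeneous 1)
    (hx : x.IsHomogeneous 1) (hq : q.natDegree ≤ e) :
    polyEval L l x (homogeneousPart e q) = homogeneousComponent e (polyEval L l x q) := by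
  have hsum : polyEval L l x q = ∑ i ∈ Finset.range (e + 1), x ^ i * pairEval L l (q.coeff i) := by
    conv_lhs => rw [q.as_sum_range' (e + 1) (Nat.lt_succ_of_le hq)]
    simp only [map_sum, polyEval_monomial, mul_comm]
  rw [hsum, homogeneousPart, map_sum, map_sum]
  refine Finset.sum_congr rfl fun i hi => ?_
  obtain ⟨j, rfl⟩ := Nat.exists_eq_add_of_le' (Finset.mem_range_succ_iff.1 hi)
  rw [homogeneousComponent_add_mul (by simpa using hx.pow i),
    homogeneousComponent_pairEval hL hl, Nat.add_sub_cancel, polyEval_monomial, mul_comm]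

theorem IsSeparableMinpoly.isHomogeneous_polyEval {P : Ideal (MvPolynomial σ K)}
    {p : Polynomial (MvPolynomial (Fin 2) K)} (h : IsSeparableMinpoly P L l x p)
    (hP : P.IsHomogeneous (homogeneousSubmodule σ K)) (hL : L.IsHomogeneous 1)
    (hl : l.IsHomogeneous 1) (hx : x.IsHomogeneous 1) :
    (polyEval L l x p).IsHomogeneous p.natDegree := by
  have hpart := polyEval_homogeneousPart hL hl hx (le_refl p.natDegree)
  have hdvd : p ∣ homogeneousPart p.natDegree p :=
    h.dvd _ (hpart ▸ homogeneousComponent_mem_of_mem hP h.mem _)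
  have heq := Polynomial.eq_of_monic_of_dvd_of_natDegree_le h.monic
    (monic_homogeneousPart h.monic) hdvd (natDegree_homogeneousPart_le _ p)
  rw [heq] at hpart
  exact hpart ▸ homogeneousComponent_isHomogeneous _ _

end HomogeneousPart

section Relation

variable {L l x : MvPolynomial σ K}

theorem succ_le_finrank_homogeneousSubmodule_fin_two (K : Type*) [Field K] (e : ℕ) :
    e + 1 ≤ Module.finrank K (homogeneousSubmodule (Fin 2) K e) := by
  let s : Fin (e + 1) → Fin 2 →₀ ℕ := fun i =>
    Finsupp.single 0 (i : ℕ) + Finsupp.single 1 (e - i : ℕ)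
  have hs : Function.Injective s := fun i j hij =>
    Fin.ext (by simpa [s] using DFunLike.congr_fun hij 0)
  let b : Fin (e + 1) → homogeneousSubmodule (Fin 2) K e := fun i =>
    ⟨monomial (s i) 1, isHomogeneous_monomial _ (by simp [s, Finsupp.degree_eq_sum]; omega)⟩
  have hb : LinearIndependent K b := .of_comp (Submodule.subtype _) <| by
    simpa [Function.comp_def, b] using (basisMonomials (Fin 2) K).linearIndependent.comp s hs
  simpa using hb.fintype_card_le_finrank

theorem isHomogeneous_polyEval_ofFn [DecidableEq (MvPolynomial (Fin 2) K)]
    (hL : L.IsHomogeneous 1) (hl : l.IsHomogeneous 1) (hx : x.IsHomogeneous 1) {N e : ℕ}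
    {a : Fin e → MvPolynomial (Fin 2) K} (he : e ≤ N + 1) (ha : ∀ i, (a i).IsHomogeneous (N - i)) :
    (polyEval L l x (Polynomial.ofFn e a)).IsHomogeneous N := by
  rw [Polynomial.ofFn_eq_sum_monomial, map_sum]
  refine IsHomogeneous.sum _ _ _ fun i _ => ?_
  have hprod := (isHomogeneous_pairEval hL hl (ha i)).mul (hx.pow (i : ℕ))
  rwa [one_mul, Nat.sub_add_cancel (by omega), ← polyEval_monomial] at hprod

-- The forms of degree `N` in `L, l, x` of degree at most `d` in `x` outnumber `hilb W N`, as
-- `(d + 1) * N` outgrows `d * N + c`.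
theorem IsParameterPair.exists_polyEval_mem [Finite σ] {W : Ideal (MvPolynomial σ K)} {n d : ℕ}
    (h : IsParameterPair W n d L l) (hx : x.IsHomogeneous 1) :
    ∃ q : Polynomial (MvPolynomial (Fin 2) K),
      q ≠ 0 ∧ q.natDegree ≤ d ∧ polyEval L l x q ∈ W := by
  classical
  obtain ⟨c, N₀, hc⟩ := h.exists_hilb_eq_linear
  let N := N₀ + d * d + d + c.natAbs
  let F := fun i : Fin (d + 1) => homogeneousSubmodule (Fin 2) K (N - i)
  have hfinrank : (d + 1) * (N - d + 1) ≤ Module.finrank K (∀ i, F i) := by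
    rw [Module.finrank_pi_fintype]
    simpa using Finset.card_nsmul_le_sum Finset.univ (fun i => Module.finrank K (F i)) (N - d + 1)
      fun i _ => le_trans (by omega) (succ_le_finrank_homogeneousSubmodule_fin_two K (N - i))
  have hlt : hilb W N < Module.finrank K (∀ i, F i) := by
    refine lt_of_lt_of_le ?_ hfinrank
    have hN : N - d = N₀ + d * d + c.natAbs := by omega
    zify
    rw [hc N (by omega), hN]
    push_cast [N]
    nlinarith [le_abs_self c, Int.natCast_nonneg N₀, Int.natCast_nonneg d]
  let Q : (∀ i, F i) →ₗ[K] Polynomial (MvPolynomial (Fin 2) K) :=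
    (Polynomial.ofFn (d + 1)).restrictScalars K ∘ₗ
      LinearMap.pi fun i => (F i).subtype ∘ₗ LinearMap.proj i
  let Φ : (∀ i, F i) →ₗ[K]
      (homogeneousSubmodule σ K N).map (Ideal.Quotient.mkₐ K W).toLinearMap :=
    ((Ideal.Quotient.mkₐ K W).toLinearMap ∘ₗ (polyEval L l x).toLinearMap ∘ₗ Q).codRestrict _
      fun a => Submodule.mem_map_of_mem <| isHomogeneous_polyEval_ofFn h.isHomogeneous_fst
        h.isHomogeneous_snd hx (by omega) fun i => (a i).2
  obtain ⟨a, ha, ha0⟩ := Submodule.exists_mem_ne_zero_of_ne_bot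
    (LinearMap.ker_ne_bot_of_finrank_lt (f := Φ) hlt)
  refine ⟨Q a, fun hQ => ha0 (funext fun i => Subtype.ext ?_), ?_, ?_⟩
  · calc
      (a i : MvPolynomial (Fin 2) K) = (Q a).coeff i :=
        (Polynomial.ofFn_coeff_eq_val_of_lt (fun j => (a j : MvPolynomial (Fin 2) K)) i.2).symm
      _ = 0 := by rw [hQ, Polynomial.coeff_zero]
  · exact Nat.le_of_lt_succ (Polynomial.ofFn_natDegree_lt (Nat.le_add_left 1 d) _)
  · exact Ideal.Quotient.eq_zero_iff_mem.1 (congrArg Subtype.val (LinearMap.mem_ker.1 ha))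

end Relation

section ProductOfMinpolys

variable {W P Q : Ideal (MvPolynomial σ K)}
  {L l x : MvPolynomial σ K} {p q : Polynomial (MvPolynomial (Fin 2) K)}

theorem IsSeparableMinpoly.isCoprime_map (hp : IsSeparableMinpoly P L l x p)
    (hq : IsSeparableMinpoly Q L l x q) (hne : p ≠ q) :
    IsCoprime (p.map (algebraMap _ (FractionRing (MvPolynomial (Fin 2) K))))
      (q.map (algebraMap _ (FractionRing (MvPolynomial (Fin 2) K)))) := by
  refine (hp.irreducible.isCoprime_or_dvd _).resolve_right fun hdvd => hne ?_
  exact Polynomial.map_injective _ (IsFractionRing.injective _ _) <|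
    Polynomial.eq_of_monic_of_associated (hp.monic.map _) (hq.monic.map _)
      (hp.irreducible.associated_of_dvd hq.irreducible hdvd)

variable {B : Finset (Polynomial (MvPolynomial (Fin 2) K))}

theorem separable_map_prod (hB : ∀ p ∈ B, ∃ P, IsSeparableMinpoly P L l x p) :
    ((∏ p ∈ B, p).map
      (algebraMap _ (FractionRing (MvPolynomial (Fin 2) K)))).Separable := by
  choose! P hP using hB
  rw [Polynomial.map_prod]
  exact Polynomial.separable_prod' (fun p hp q hq => (hP p hp).isCoprime_map (hP q hq))
    fun p hp => (hP p hp).separable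

theorem natDegree_prod_le_natDegree
    (hB : ∀ p ∈ B, ∃ P, IsSeparableMinpoly P L l x p ∧ polyEval L l x q ∈ P) (hq : q ≠ 0) :
    (∏ p ∈ B, p).natDegree ≤ q.natDegree := by
  choose! P hP hPq using hB
  have hinj := IsFractionRing.injective (MvPolynomial (Fin 2) K)
    (FractionRing (MvPolynomial (Fin 2) K))
  rw [← Polynomial.natDegree_map_eq_of_injective hinj,
    ← Polynomial.natDegree_map_eq_of_injective hinj q]
  refine Polynomial.natDegree_le_of_dvd ?_ ((Polynomial.map_ne_zero_iff hinj).2 hq)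
  rw [Polynomial.map_prod]
  exact Finset.prod_dvd_of_coprime (fun p hp q hq => (hP p hp).isCoprime_map (hP q hq))
    fun p hp => Polynomial.map_dvd _ ((hP p hp).dvd q (hPq p hp))

theorem isHomogeneous_polyEval_prod (hB : ∀ p ∈ B, ∃ P : Ideal (MvPolynomial σ K),
      P.IsHomogeneous (homogeneousSubmodule σ K) ∧ IsSeparableMinpoly P L l x p)
    (hL : L.IsHomogeneous 1) (hl : l.IsHomogeneous 1) (hx : x.IsHomogeneous 1) :
    (polyEval L l x (∏ p ∈ B, p)).IsHomogeneous (∏ p ∈ B, p).natDegree := by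
  choose! P hhom hP using hB
  rw [map_prod, Polynomial.natDegree_prod_of_monic _ _ fun p hp => (hP p hp).monic]
  exact IsHomogeneous.prod _ _ _ fun p hp =>
    (hP p hp).isHomogeneous_polyEval (hhom p hp) hL hl hx

theorem IsParameterPair.exists_separable_polyEval_mem_curvePart [Finite σ] {n d : ℕ}
    (h : IsParameterPair W n d L l) (hx : x.IsHomogeneous 1)
    (hmin : ∀ P ∈ W.minimalPrimes, ringKrullDim (MvPolynomial σ K ⧸ P) = 2 →
      ∃ p, IsSeparableMinpoly P L l x p) :
    ∃ g : Polynomial (MvPolynomial (Fin 2) K),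
      (g.map (algebraMap _ (FractionRing (MvPolynomial (Fin 2) K)))).Separable ∧
      g.natDegree ≤ d ∧ (polyEval L l x g).IsHomogeneous g.natDegree ∧
      polyEval L l x g ∈ curvePart W := by
  classical
  let curves := {P | P ∈ W.minimalPrimes ∧ ringKrullDim (MvPolynomial σ K ⧸ P) = 2}
  have : Fintype curves :=
    (W.finite_minimalPrimes_of_isNoetherianRing _ |>.subset fun _ hP => hP.1).fintype
  choose p hp using fun P : curves => hmin P.1 P.2.1 P.2.2
  obtain ⟨q, hq0, hqd, hq⟩ := h.exists_polyEval_mem hx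
  refine ⟨∏ b ∈ Finset.univ.image p, b, separable_map_prod (L := L) (l := l) (x := x) ?_,
    (natDegree_prod_le_natDegree (L := L) (l := l) (x := x) ?_ hq0).trans hqd,
    isHomogeneous_polyEval_prod ?_ h.isHomogeneous_fst h.isHomogeneous_snd hx, ?_⟩
  · simpa using fun b P hP hb => ⟨P, hb ▸ hp ⟨P, hP⟩⟩
  · simpa using fun b P hP hb => ⟨P, hb ▸ hp ⟨P, hP⟩, hP.1.1.2 hq⟩
  · simpa using fun b P hP hb =>
      ⟨P, isHomogeneous_of_mem_minimalPrimes h.isHomogeneous_ideal hP.1, hb ▸ hp ⟨P, hP⟩⟩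
  · refine mem_curvePart.2 fun P hP hdim => ?_
    rw [map_prod]
    exact P.mem_of_dvd (Finset.dvd_prod_of_mem _
      (Finset.mem_image_of_mem p (Finset.mem_univ ⟨P, hP, hdim⟩))) (hp ⟨P, hP, hdim⟩).mem

end ProductOfMinpolys

section Radical

variable {W : Ideal (MvPolynomial σ K)}
  {L l f : MvPolynomial σ K} {n d t e : ℕ}

theorem adjoin_range_mk_X_eq_top (W : Ideal (MvPolynomial σ K)) (A : Type*) [CommSemiring A]
    [Algebra K A] [Algebra A (MvPolynomial σ K ⧸ W)] [IsScalarTower K A (MvPolynomial σ K ⧸ W)] :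
    Algebra.adjoin A (Set.range fun j => Ideal.Quotient.mk W (X j)) = ⊤ := by
  set s := Set.range fun j => Ideal.Quotient.mk W (X j)
  have hK : Algebra.adjoin K s = ⊤ := by
    rw [← (AlgHom.range_eq_top _).2 (Ideal.Quotient.mkₐ_surjective K W), ← Algebra.map_top,
      ← adjoin_range_X, AlgHom.map_adjoin, ← Set.range_comp]
    rfl
  have hle : Algebra.adjoin K s ≤ (Algebra.adjoin A s).restrictScalars K :=
    Algebra.adjoin_le Algebra.subset_adjoin
  exact eq_top_iff.2 fun y _ => hle (hK ▸ Algebra.mem_top)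

theorem IsParameterPair.mem_torsionIdeal_of_pow_mem [Finite σ] (h : IsParameterPair W n d L l)
    (hX : ∀ j, ∃ g : Polynomial (MvPolynomial (Fin 2) K),
      (g.map (algebraMap _ (FractionRing (MvPolynomial (Fin 2) K)))).Separable ∧
      polyEval L l (X j) g ∈ torsionIdeal W L l)
    (hf : f.IsHomogeneous t) (hfe : f ^ e ∈ torsionIdeal W L l) : f ∈ torsionIdeal W L l := by
  let _ := (pairEvalQuotient W L l).toRingHom.toAlgebra
  let _ : Module (MvPolynomial (Fin 2) K) (MvPolynomial σ K ⧸ W) := Algebra.toModule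
  have : Module.Finite (MvPolynomial (Fin 2) K) (MvPolynomial σ K ⧸ W) :=
    h.finite_pairEvalQuotient_self
  have : IsScalarTower K (MvPolynomial (Fin 2) K) (MvPolynomial σ K ⧸ W) :=
    .of_algebraMap_eq fun c => ((pairEvalQuotient W L l).commutes c).symm
  have hsmul : ∀ (q : MvPolynomial (Fin 2) K) (f : MvPolynomial σ K),
      q • Ideal.Quotient.mk W f = 0 ↔ pairEval L l q * f ∈ W := fun q f => by
    rw [← Ideal.Quotient.eq_zero_iff_mem, Algebra.smul_def, map_mul]
    rfl
  obtain ⟨_, q, -, hq0, hq⟩ := mem_torsionIdeal.1 hfe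
  obtain ⟨q', hq'0, hq'⟩ := exists_smul_eq_zero_of_smul_pow_eq_zero (f := Ideal.Quotient.mk W f)
    (T := MvPolynomial (Fin 2) K) (adjoin_range_mk_X_eq_top W _) (by
      rintro _ ⟨j, rfl⟩
      obtain ⟨g, hg, hgX⟩ := hX j
      obtain ⟨_, a, -, ha0, ha⟩ := mem_torsionIdeal.1 hgX
      exact ⟨g, hg, a, ha0,
        (congrArg (a • ·) (map_polyEval _ L l _ g)).symm.trans ((hsmul a _).2 ha)⟩)
    hq0 (map_pow (Ideal.Quotient.mk W) f e ▸ (hsmul q _).2 hq)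
  exact mem_torsionIdeal_of_ne_zero h.isHomogeneous_ideal h.isHomogeneous_fst h.isHomogeneous_snd
    hf hq'0 ((hsmul q' f).1 hq')

end Radical

namespace HasBaseLocusDegree

variable {m n d : ℕ} {Z : Finset (Fin m → K)} {L l : MvPolynomial (Fin m) K}

theorem curvePart_eq_torsionIdeal (hZ : HasBaseLocusDegree Z n d)
    (h : IsParameterPair (lowIdeal (pointsIdeal (Z : Set (Fin m → K))) (n + 1)) n d L l)
    (hLZ : ∀ v ∈ Z, eval v L ≠ 0)
    (hmin : ∀ P ∈ (lowIdeal (pointsIdeal (Z : Set (Fin m → K))) (n + 1)).minimalPrimes,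
      ringKrullDim (MvPolynomial (Fin m) K ⧸ P) = 2 → ∀ x, ∃ p, IsSeparableMinpoly P L l x p) :
    curvePart (lowIdeal (pointsIdeal (Z : Set (Fin m → K))) (n + 1)) =
      torsionIdeal (lowIdeal (pointsIdeal (Z : Set (Fin m → K))) (n + 1)) L l := by
  refine le_antisymm (fun f hf => ?_) h.torsionIdeal_le_curvePart
  rw [mem_iff_homogeneousComponent_mem h.isHomogeneous_torsionIdeal f]
  intro t
  obtain ⟨e, he⟩ := h.curvePart_le_radical_torsionIdeal
    (homogeneousComponent_mem_of_mem (isHomogeneous_curvePart h.isHomogeneous_ideal) hf t)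
  refine h.mem_torsionIdeal_of_pow_mem (fun j => ?_) (homogeneousComponent_isHomogeneous t f) he
  obtain ⟨g, hg, hgd, hghom, hgmem⟩ := h.exists_separable_polyEval_mem_curvePart
    (isHomogeneous_X K j) fun P hP hdim => hmin P hP hdim (X j)
  exact ⟨g, hg, hZ.mem_torsionIdeal_of_forall_eval_eq_zero h hLZ (hgd.trans hZ.le_succ) hghom
    fun v _ hv => h.eval_eq_zero_of_mem_curvePart hv hgmem⟩

end HasBaseLocusDegree

theorem IsParameterPair.isRadical_lowIdeal {m n d : ℕ}
    {Z : Finset (Fin m → K)} {L l : MvPolynomial (Fin m) K}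
    (h : IsParameterPair (lowIdeal (pointsIdeal (Z : Set (Fin m → K))) (n + 1)) n d L l)
    (hLZ : ∀ v ∈ Z, eval v L ≠ 0)
    (hcurve : curvePart (lowIdeal (pointsIdeal (Z : Set (Fin m → K))) (n + 1)) ≤
      torsionIdeal (lowIdeal (pointsIdeal (Z : Set (Fin m → K))) (n + 1)) L l) :
    (lowIdeal (pointsIdeal (Z : Set (Fin m → K))) (n + 1)).IsRadical := by
  intro f hf
  rw [mem_iff_homogeneousComponent_mem h.isHomogeneous_ideal f]
  intro t
  have hft := homogeneousComponent_mem_of_mem h.isHomogeneous_ideal.radical hf t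
  refine h.mem_lowIdeal_of_mem_torsionIdeal hLZ (homogeneousComponent_isHomogeneous t f)
    (hcurve (radical_le_curvePart _ hft)) ?_
  exact (isRadical_pointsIdeal _).radical_le_iff.2 lowIdeal_le hft

section PointsOnCurve

theorem lowIdeal_eq_of_forall_mem_iff {I J : Ideal (MvPolynomial σ K)} {n : ℕ}
    (hJ : J ≤ lowIdeal J n)
    (h : ∀ t ≤ n, ∀ f : MvPolynomial σ K, f.IsHomogeneous t → (f ∈ I ↔ f ∈ J)) :
    lowIdeal I n = J :=
  le_antisymm (lowIdeal_le_iff.2 fun t ht f hf => (h t ht f hf).1) <|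
    hJ.trans <| lowIdeal_le_iff.2 fun t ht f hf hfJ => mem_lowIdeal hf ht ((h t ht f hf).2 hfJ)

variable {m n d t : ℕ} {Z : Finset (Fin m → K)} {L l f : MvPolynomial (Fin m) K}

namespace HasBaseLocusDegree

theorem mem_pointsIdeal_iff_mem_torsionIdeal (hZ : HasBaseLocusDegree Z n d)
    (h : IsParameterPair (lowIdeal (pointsIdeal (Z : Set (Fin m → K))) (n + 1)) n d L l)
    (hLZ : ∀ v ∈ Z, eval v L ≠ 0) (ht : t ≤ n + 1) (hf : f.IsHomogeneous t) :
    f ∈ pointsIdeal {v ∈ (Z : Set (Fin m → K)) |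
        ∀ p ∈ torsionIdeal (lowIdeal (pointsIdeal (Z : Set (Fin m → K))) (n + 1)) L l,
          eval v p = 0} ↔
      f ∈ torsionIdeal (lowIdeal (pointsIdeal (Z : Set (Fin m → K))) (n + 1)) L l := by
  rw [mem_pointsIdeal_iff_of_isHomogeneous hf]
  exact ⟨fun hfv => hZ.mem_torsionIdeal_of_forall_eval_eq_zero h hLZ ht hf
    fun v hv hvT => hfv v ⟨hv, hvT⟩, fun hfT v hv => hv.2 f hfT⟩

theorem hvec_pointsIdeal_eq_zero [Infinite K] (hZ : HasBaseLocusDegree Z n d)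
    (hL : L.IsHomogeneous 1) (hL0 : L ≠ 0) (hLZ : ∀ v ∈ Z, eval v L ≠ 0)
    {Y : Set (Fin m → K)} (hYZ : Y ⊆ Z) (ht : n + 2 ≤ t) : hvec (pointsIdeal Y) t = 0 := by
  obtain ⟨t, rfl⟩ := Nat.exists_eq_add_of_le' (Nat.one_le_of_lt ht)
  have hsup : hilb (pointsIdeal Y ⊔ Ideal.span {L}) (t + 1) = 0 :=
    hilb_eq_zero_iff.2 fun f hf => by
      obtain ⟨g, _, hg⟩ := hZ.exists_sub_linear_mul_mem hL hL0 hLZ (Nat.le_of_succ_le_succ ht) hf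
      exact mem_sup_span_singleton_of_sub_mem (pointsIdeal_anti hYZ hg)
  rw [hvec, hilb_succ (isHomogeneous_pointsIdeal Y) hL hL0 fun f hf =>
    mem_pointsIdeal_of_mul_mem hL (fun v hv => hLZ v (hYZ hv)) hf, hsup, add_zero, Nat.sub_self]

theorem hvec_pointsIdeal_eq [Infinite K] (hZ : HasBaseLocusDegree Z n d)
    (h : IsParameterPair (lowIdeal (pointsIdeal (Z : Set (Fin m → K))) (n + 1)) n d L l)
    (hLZ : ∀ v ∈ Z, eval v L ≠ 0) (ht : n + 1 ≤ t) :
    hvec (pointsIdeal {v ∈ (Z : Set (Fin m → K)) |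
        ∀ p ∈ torsionIdeal (lowIdeal (pointsIdeal (Z : Set (Fin m → K))) (n + 1)) L l,
          eval v p = 0}) t = hvec (pointsIdeal (Z : Set (Fin m → K))) t := by
  rcases ht.eq_or_lt with rfl | ht
  · rw [hvec_congr fun s hs f hf => hZ.mem_pointsIdeal_iff_mem_torsionIdeal h hLZ hs hf,
      hvec, h.hilb_succ_torsionIdeal le_rfl, Nat.add_sub_cancel_left, hZ.hvec_succ]
  · rw [hZ.hvec_eq_zero t ht, hZ.hvec_pointsIdeal_eq_zero h.isHomogeneous_fst h.fst_ne_zero hLZ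
      (Set.sep_subset _ _) ht]

end HasBaseLocusDegree

end PointsOnCurve

end PointsCurve

open PointsCurve in
theorem points_baseLocus_kminus1_curve_general
    {K : Type*} [Field K] [Infinite K] [PerfectField K] {r n d : ℕ}
    (Z : Finset (Fin (r + 1) → K))
    (hZ0 : ∀ v ∈ Z, v ≠ 0)
    (hZdist : ∀ v ∈ Z, ∀ w ∈ Z, v ≠ w → ∀ c : K, w ≠ c • v)
    (hd : 0 < d) (hdn : d ≤ n + 1)
    (hhn1 : hvec (pointsIdeal (Z : Set (Fin (r + 1) → K))) (n + 1) = d)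
    (hhtail : ∀ t, n + 2 ≤ t → hvec (pointsIdeal (Z : Set (Fin (r + 1) → K))) t = 0)
    (hbase : ∀ L : MvPolynomial (Fin (r + 1)) K, L.IsHomogeneous 1 → L ≠ 0 →
      (∀ v ∈ Z, eval v L ≠ 0) → ∃ N : ℕ, ∀ t, N ≤ t →
        hilb (compIdeal (pointsIdeal (Z : Set (Fin (r + 1) → K))) (n + 1) ⊔ Ideal.span {L}) t = d)
    (V C : Ideal (MvPolynomial (Fin (r + 1)) K))
    (hV : V = saturate (lowIdeal (pointsIdeal (Z : Set (Fin (r + 1) → K))) (n + 1)))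
    (hC : C = curvePart V)
    (Z1 : Set (Fin (r + 1) → K))
    (hZ1 : Z1 = {v ∈ (Z : Set (Fin (r + 1) → K)) | ∀ f ∈ C, eval v f = 0}) :
    V.IsRadical ∧
    ringKrullDim (MvPolynomial (Fin (r + 1)) K ⧸ V) = 2 ∧
    (∃ c : ℤ, ∃ N : ℕ, ∀ t : ℕ, N ≤ t → (hilb V t : ℤ) = d * t + c) ∧
    lowIdeal (pointsIdeal Z1) (n + 1) = C ∧
    (∀ t, t ≤ n + 1 → hvec (pointsIdeal Z1) t = hvec C t) ∧
    (∀ t, n + 1 ≤ t →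
      hvec (pointsIdeal Z1) t = hvec (pointsIdeal (Z : Set (Fin (r + 1) → K))) t) := by
  have hZ : HasBaseLocusDegree Z n d := ⟨hZ0, hZdist, hd, hdn, hhn1, hhtail, hbase⟩
  obtain ⟨L, l, hLZ, h, hmin⟩ := hZ.exists_isParameterPair_isSeparableMinpoly
  have hcurve := hZ.curvePart_eq_torsionIdeal h hLZ hmin
  rw [h.saturate_eq] at hV
  rw [hV, hcurve] at hC
  subst hV hC hZ1
  have hmem := fun t (ht : t ≤ n + 1) f hf =>
    hZ.mem_pointsIdeal_iff_mem_torsionIdeal (f := f) h hLZ ht hf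
  exact ⟨h.isRadical_lowIdeal hLZ hcurve.le,
    h.ringKrullDim_quotient_eq_two le_rfl fun q => h.eq_zero_of_pairEval_mem,
    h.exists_hilb_eq_linear,
    lowIdeal_eq_of_forall_mem_iff h.torsionIdeal_le_lowIdeal hmem,
    fun t ht => hvec_congr fun s hs => hmem s (hs.trans ht),
    fun t => hZ.hvec_pointsIdeal_eq h hLZ⟩

/-- **Corollary.**  Let `Z ⊂ ℙ^r` be a finite reduced set of points whose `h`-vector has value
`k` in degree `n` and `k-1` in degree `n+1` (`n ≥ k ≥ 2`) and is `0` in all degrees `≥ n+2`.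
Assume that the base locus of `[J]_{n+1}` (`J` the artinian reduction of `I_Z` by a general
linear form `L`, here: any linear form missing the points of `Z`) is a zero-dimensional scheme
of degree `k-1` in `ℙ^{r-1}`.  Then the saturation `V` of `⟨[I_Z]_{≤ n+1}⟩` is the homogeneous
ideal of a reduced curve of degree `k-1` (not necessarily unmixed): `V` is radical,
`dim R/V = 2`, and the Hilbert function of `R/V` is eventually `(k-1)·t + c`.  Moreover, if `C`
is the unmixed one-dimensional part of `V` and `Z₁` is the subset of `Z` lying on `C`, then
`⟨[I_{Z₁}]_{≤ n+1}⟩ = I_C`, `Δh_{Z₁}(t) = Δh_C(t)` for `t ≤ n+1`, and `Δh_{Z₁}(t) = Δh_Z(t)`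
in all degrees `t ≥ n+1`. -/
theorem points_baseLocus_kminus1_curve
    {K : Type*} [Field K] [IsAlgClosed K] {r n k : ℕ}
    (Z : Finset (Fin (r + 1) → K))
    (hZ0 : ∀ v ∈ Z, v ≠ (0 : Fin (r + 1) → K))
    (hZdist : ∀ v ∈ Z, ∀ w ∈ Z, v ≠ w → ∀ c : K, w ≠ c • v)
    (hk : 2 ≤ k) (hkn : k ≤ n)
    (hhn : hvec (pointsIdeal (↑Z : Set (Fin (r + 1) → K))) n = k)
    (hhn1 : hvec (pointsIdeal (↑Z : Set (Fin (r + 1) → K))) (n + 1) + 1 = k)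
    (hhtail : ∀ t, n + 2 ≤ t → hvec (pointsIdeal (↑Z : Set (Fin (r + 1) → K))) t = 0)
    (hbase : ∀ L : MvPolynomial (Fin (r + 1)) K, L.IsHomogeneous 1 → L ≠ 0 →
      (∀ v ∈ Z, eval v L ≠ 0) →
      ∃ N : ℕ, ∀ t, N ≤ t →
        hilb (compIdeal (pointsIdeal (↑Z : Set (Fin (r + 1) → K))) (n + 1) ⊔ Ideal.span {L}) t
          = k - 1)
    (V C : Ideal (MvPolynomial (Fin (r + 1)) K))
    (hV : V = saturate (lowIdeal (pointsIdeal (↑Z : Set (Fin (r + 1) → K))) (n + 1)))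
    (hC : C = curvePart V)
    (Z1 : Set (Fin (r + 1) → K))
    (hZ1 : Z1 = {v ∈ (↑Z : Set (Fin (r + 1) → K)) | ∀ f ∈ C, eval v f = 0}) :
    V.IsRadical ∧
    ringKrullDim (MvPolynomial (Fin (r + 1)) K ⧸ V) = 2 ∧
    (∃ c : ℤ, ∃ N : ℕ, ∀ t : ℕ, N ≤ t → (hilb V t : ℤ) = (k - 1 : ℕ) * t + c) ∧
    lowIdeal (pointsIdeal Z1) (n + 1) = C ∧
    (∀ t, t ≤ n + 1 → hvec (pointsIdeal Z1) t = hvec C t) ∧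
    (∀ t, n + 1 ≤ t →
      hvec (pointsIdeal Z1) t = hvec (pointsIdeal (↑Z : Set (Fin (r + 1) → K))) t) := by
  have : Infinite K := IsAlgClosed.instInfinite
  exact points_baseLocus_kminus1_curve_general Z hZ0 hZdist (by omega) (by omega) (by omega) hhtail
    hbase V C hV hC Z1 hZ1
end

section
/- Let K be an algebraically closed field, S = K[x_1,…,x_r], and J ⊆ S a homogeneous artinian ideal such that dim_K [S/J]_n = k and dim_K [S/J]_{n+1} = k−1 with 2 ≤ k ≤ n, [S/J]_t = 0 for t ≥ n+2, J has no minimal generator in degree n+1, and the forms in [J]_n have no common zero in ℙ^{r−1} (basepoint freeness). Then for every linear form ℓ ∈ [S]_1, the multiplication map ×ℓ : [S/J]_n → [S/J]_{n+1} is either surjective or the zero map; moreover, whenever it is the zero map, the multiplication ×ℓ : [S/J]_{n−1} → [S/J]_n is also zero, i.e. ℓ·[S]_{n−1} ⊆ J and ℓ·[S]_n ⊆ J. -/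
open MvPolynomial

/-!
Dually, the claim concerns the Macaulay inverse system: `[S/J]_t` is dual to the space `V_t` of
functionals on `S_t` vanishing on `J`, and `×ℓ` is dual to the contraction `φ ↦ φ (ℓ * ·)`.
Contractions by linear forms satisfy a Green–Gotzmann principle: if `dim V_t ≤ t`, then some linear
form `a` contracts `V_t` injectively, hence also `V_{t+1}` into `V_t`. If `dim V_{t+1} = dim V_t`,
the operators `a⁻¹ ∘ b` on `V_{t+1}`, for `b` linear, commute and have a common eigenvector; it is a
multiple of the evaluation at a point of `ℙ^{r-1}`, which has to be a base point of `[J]_n`. So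
without base points the dimension drops strictly from `V_t` to `V_{t+1} ≠ 0`.

If `×ℓ` is not surjective, then `ℓ` kills a nonzero element of `V_{n+1}`. The strict drop, applied
to the kernels of `ℓ`, uses up the whole difference `dim V_n - dim V_{n+1} ≤ 1`, so the images
`ℓ V_n` and `ℓ V_{n+1}` have the same dimension, and applied to these images it gives
`ℓ V_{n+1} = 0`, whence `ℓ V_n = 0`.
-/

section LinearAlgebra

theorem finrank_map_add_finrank_inf_ker {K M N : Type*} [DivisionRing K] [AddCommGroup M]
    [Module K M] [AddCommGroup N] [Module K N] (V : Submodule K M) [FiniteDimensional K V]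
    (f : M →ₗ[K] N) :
    Module.finrank K (V.map f) + Module.finrank K (V ⊓ LinearMap.ker f : Submodule K M) =
      Module.finrank K V := by
  rw [← (f.domRestrict V).finrank_range_add_finrank_ker, LinearMap.range_domRestrict,
    LinearMap.ker_domRestrict, ← Submodule.finrank_map_subtype_eq V, Submodule.map_comap_subtype]

theorem inf_ker_le_of_disjoint_map_ker {R M : Type*} [Semiring R] [AddCommMonoid M]
    [Module R M] {V : Submodule R M} {a b : Module.End R M}
    (hab : Commute a b) (hb : Disjoint (V.map a) (LinearMap.ker b)) :
    V ⊓ LinearMap.ker b ≤ V ⊓ LinearMap.ker a := by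
  rintro x ⟨hxV, hbx : b x = 0⟩
  refine ⟨hxV, LinearMap.disjoint_ker.mp hb _ (Submodule.mem_map_of_mem hxV) ?_⟩
  rw [← Module.End.mul_apply, ← hab.eq, Module.End.mul_apply, hbx, map_zero]

variable {K M N : Type*} [Field K] [AddCommGroup M] [Module K M] [AddCommGroup N] [Module K N]

theorem exists_ne_zero_disjoint_ker_add_smul [Infinite K] {U : Submodule K M}
    [FiniteDimensional K U] {p : M →ₗ[K] N} (hp : Disjoint U (LinearMap.ker p)) (m : M →ₗ[K] N) :
    ∃ t : K, t ≠ 0 ∧ Disjoint U (LinearMap.ker (p + t • m)) := by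
  have hker : LinearMap.ker (p.domRestrict U) = ⊥ :=
    LinearMap.ker_eq_bot.mpr (LinearMap.injective_domRestrict_iff.mpr hp)
  obtain ⟨g, hg⟩ := LinearMap.exists_leftInverse_of_injective _ hker
  let T : Module.End K U := g ∘ₗ m ∘ₗ U.subtype
  -- `p + t • m` has a nonzero kernel on `U` only if `-t⁻¹` is an eigenvalue of `T`.
  obtain ⟨s, hs⟩ := (T.finite_hasEigenvalue.union (Set.finite_singleton 0)).infinite_compl.nonempty
  obtain ⟨hs_eig, hs0 : s ≠ 0⟩ := not_or.mp hs
  refine ⟨-s⁻¹, by simpa using hs0, LinearMap.disjoint_ker.mpr fun x hx hpx => ?_⟩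
  by_contra hx0
  have hgp : g (p x) = ⟨x, hx⟩ := LinearMap.congr_fun hg ⟨x, hx⟩
  have hmx : m x = s • p x := by
    have : p x = s⁻¹ • m x := by simpa [← sub_eq_add_neg, sub_eq_zero] using hpx
    rw [this, smul_inv_smul₀ hs0]
  have hTx : T ⟨x, hx⟩ = s • ⟨x, hx⟩ := by
    rw [← hgp, ← map_smul, ← hmx, hgp]
    rfl
  exact hs_eig (Module.End.hasEigenvalue_of_hasEigenvector
    (Module.End.hasEigenvector_iff.mpr
      ⟨Module.End.mem_eigenspace_iff.mpr hTx, fun h => hx0 (congrArg Subtype.val h)⟩))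

theorem apply_eq_zero_of_forall_disjoint_ker [Infinite K] {L : Submodule K (M →ₗ[K] N)}
    {U : Submodule K M} [FiniteDimensional K U] (hU : ∃ p ∈ L, Disjoint U (LinearMap.ker p))
    {x : M} (hx : ∀ q ∈ L, Disjoint U (LinearMap.ker q) → q x = 0) {m : M →ₗ[K] N} (hm : m ∈ L) :
    m x = 0 := by
  obtain ⟨p, hpL, hp⟩ := hU
  obtain ⟨t, ht, hpt⟩ := exists_ne_zero_disjoint_ker_add_smul hp m
  have hptx : (p + t • m) x = 0 := hx _ (L.add_mem hpL (L.smul_mem t hm)) hpt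
  simpa [hx p hpL hp, ht] using hptx

theorem exists_common_eigenvector [IsAlgClosed K] [FiniteDimensional K M] [Nontrivial M]
    {ι : Type*} {T : ι → Module.End K M} (hT : ∀ i j, Commute (T i) (T j)) :
    ∃ x : M, x ≠ 0 ∧ ∀ i, ∃ c : K, T i x = c • x := by
  obtain ⟨E, ⟨hE, hTE⟩, hmin⟩ := exists_minimal_of_wellFoundedLT
    (fun E : Submodule K M => E ≠ ⊥ ∧ ∀ i, ∀ x ∈ E, T i x ∈ E) ⟨⊤, top_ne_bot, by simp⟩
  obtain ⟨x, hxE, hx⟩ := Submodule.exists_mem_ne_zero_of_ne_bot hE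
  refine ⟨x, hx, fun i => ?_⟩
  have : Nontrivial E := Submodule.nontrivial_iff_ne_bot.mpr hE
  obtain ⟨c, hc⟩ := Module.End.exists_eigenvalue ((T i).restrict (hTE i))
  obtain ⟨y, hy⟩ := hc.exists_hasEigenvector
  have hyc : (y : M) ∈ (T i).eigenspace c :=
    Module.End.mem_eigenspace_iff.mpr (congrArg Subtype.val hy.apply_eq_smul)
  have hne : E ⊓ (T i).eigenspace c ≠ ⊥ :=
    (Submodule.ne_bot_iff _).mpr ⟨y, ⟨y.2, hyc⟩, fun h => hy.2 (Subtype.ext h)⟩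
  have hinv : ∀ j, ∀ z ∈ E ⊓ (T i).eigenspace c, T j z ∈ E ⊓ (T i).eigenspace c :=
    fun j z hz => ⟨hTE j z hz.1, Module.End.mapsTo_genEigenspace_of_comm (hT i j) c 1 hz.2⟩
  exact ⟨c, Module.End.mem_eigenspace_iff.mp (hmin ⟨hne, hinv⟩ inf_le_left hxE).2⟩

end LinearAlgebra

section LoweringSystem

/-- A linear space `L` of commuting operators lowering the degree of the subspaces `D n` by one,
with no common kernel in positive degree. The model is the space of linear forms acting by
contraction on the graded dual of a polynomial ring; the `D n` are not required to be independent,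
nor to be of finite dimension. -/
structure IsLoweringSystem {R M : Type*} [CommSemiring R] [AddCommMonoid M] [Module R M]
    (L : Submodule R (Module.End R M)) (D : ℕ → Submodule R M) : Prop where
  commute : ∀ a ∈ L, ∀ b ∈ L, Commute a b
  map_le : ∀ n, ∀ a ∈ L, (D (n + 1)).map a ≤ D n
  eq_zero : ∀ n, ∀ x ∈ D (n + 1), (∀ a ∈ L, a x = 0) → x = 0

/-- A vector whose images under the operators in `L` are all multiples of one of them. In the dual
of a polynomial ring, with linear forms acting by contraction, such a functional is on forms of each
given degree a multiple of the evaluation at a point; these are the analogues of the pure powers of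
linear forms. -/
def IsPureVector {R M : Type*} [CommSemiring R] [AddCommMonoid M] [Module R M]
    (L : Submodule R (Module.End R M)) (x : M) : Prop :=
  ∃ a ∈ L, ∀ b ∈ L, ∃ c : R, b x = c • a x

variable {K M : Type*} [Field K] [AddCommGroup M] [Module K M]

theorem exists_isPureVector_of_map_eq [IsAlgClosed K] {L : Submodule K (Module.End K M)}
    (hL : ∀ a ∈ L, ∀ b ∈ L, Commute a b) {V W : Submodule K M} [FiniteDimensional K W]
    (hWV : ∀ b ∈ L, W.map b ≤ V) (hW : W ≠ ⊥) {a : Module.End K M} (ha : a ∈ L)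
    (haV : Disjoint V (LinearMap.ker a)) (haW : Disjoint W (LinearMap.ker a)) (hmap : W.map a = V) :
    ∃ x ∈ W, x ≠ 0 ∧ IsPureVector L x := by
  have hmaps : ∀ b ∈ L, ∀ x ∈ W, b x ∈ V := fun b hb => Submodule.map_le_iff_le_comap.mp (hWV b hb)
  have hinj : Function.Injective (a.restrict (hmaps a ha)) := fun x y hxy =>
    Subtype.ext (LinearMap.disjoint_ker_iff_injOn.mp haW x.2 y.2 (congrArg Subtype.val hxy))
  have hsurj : Function.Surjective (a.restrict (hmaps a ha)) := by
    rintro ⟨y, hy⟩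
    obtain ⟨x, hx, rfl⟩ := hmap ▸ hy
    exact ⟨⟨x, hx⟩, rfl⟩
  let e : W ≃ₗ[K] V := LinearEquiv.ofBijective _ ⟨hinj, hsurj⟩
  let T : L → Module.End K W := fun b => e.symm.toLinearMap ∘ₗ b.1.restrict (hmaps b b.2)
  have haT (b : L) (x : W) : a (T b x) = b.1 x := congrArg Subtype.val (e.apply_symm_apply _)
  have hT (b c : L) : Commute (T b) (T c) := by
    have hcomm {a b} (ha : a ∈ L) (hb : b ∈ L) (x : M) : a (b x) = b (a x) :=
      LinearMap.congr_fun (hL a ha b hb) x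
    refine LinearMap.ext fun x => Subtype.ext (LinearMap.disjoint_ker_iff_injOn.mp haW
      (T b (T c x)).2 (T c (T b x)).2 (LinearMap.disjoint_ker_iff_injOn.mp haV
      (hmaps a ha _ (T b (T c x)).2) (hmaps a ha _ (T c (T b x)).2) ?_))
    change a (a (T b (T c x))) = a (a (T c (T b x)))
    rw [haT, haT, hcomm ha b.2, hcomm ha c.2, haT, haT, hcomm b.2 c.2]
  have : Nontrivial W := Submodule.nontrivial_iff_ne_bot.mpr hW
  obtain ⟨x, hx, hc⟩ := exists_common_eigenvector hT
  refine ⟨x, x.2, fun h => hx (Subtype.ext h), a, ha, fun b hb => ?_⟩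
  obtain ⟨c, hc⟩ := hc ⟨b, hb⟩
  exact ⟨c, by rw [← haT ⟨b, hb⟩, hc, Submodule.coe_smul, map_smul]⟩

namespace IsLoweringSystem

variable {L : Submodule K (Module.End K M)} {D : ℕ → Submodule K M} {V W : Submodule K M} {n : ℕ}

theorem exists_disjoint_ker [Infinite K] (h : IsLoweringSystem L D) [FiniteDimensional K V]
    (hV : V ≤ D n) (hn : Module.finrank K V ≤ n) : ∃ a ∈ L, Disjoint V (LinearMap.ker a) := by
  induction n generalizing V with
  | zero =>
    obtain rfl : V = ⊥ := Submodule.finrank_eq_zero.mp (Nat.le_zero.mp hn)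
    exact ⟨0, L.zero_mem, disjoint_bot_left⟩
  | succ n ih =>
    by_contra! hL
    obtain ⟨a, ha, hmin⟩ := exists_minimalFor_of_wellFoundedLT (· ∈ L)
      (fun a => Module.finrank K (V ⊓ LinearMap.ker a : Submodule K M)) ⟨0, L.zero_mem⟩
    have hne : V ⊓ LinearMap.ker a ≠ ⊥ := fun hbot => hL a ha (disjoint_iff.mpr hbot)
    obtain ⟨x, hx, hx0⟩ := Submodule.exists_mem_ne_zero_of_ne_bot hne
    have hfin : FiniteDimensional K (V ⊓ LinearMap.ker a : Submodule K M) :=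
      Submodule.finiteDimensional_inf_left _ _
    have hlt : Module.finrank K (V.map a) ≤ n := by
      have := finrank_map_add_finrank_inf_ker V a
      have := Submodule.one_le_finrank_iff.mpr hne
      omega
    have hVa : ∃ p ∈ L, Disjoint (V.map a) (LinearMap.ker p) :=
      ih ((Submodule.map_mono hV).trans (h.map_le n a ha)) hlt
    refine hx0 (h.eq_zero n x (hV hx.1) fun m hm =>
      apply_eq_zero_of_forall_disjoint_ker hVa (fun q hq hVq => ?_) hm)
    have hle := inf_ker_le_of_disjoint_map_ker (h.commute a ha q hq) hVq
    have heq := Submodule.eq_of_le_of_finrank_le hle (hmin hq (Submodule.finrank_mono hle))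
    exact (heq ▸ hx).2

theorem disjoint_ker_of_map_le (h : IsLoweringSystem L D) (hW : W ≤ D (n + 1))
    (hWV : ∀ b ∈ L, W.map b ≤ V) {a : Module.End K M} (ha : a ∈ L)
    (haV : Disjoint V (LinearMap.ker a)) : Disjoint W (LinearMap.ker a) := by
  refine LinearMap.disjoint_ker.mpr fun x hx hax => h.eq_zero n x (hW hx) fun b hb => ?_
  refine LinearMap.disjoint_ker.mp haV _ (hWV b hb (Submodule.mem_map_of_mem hx)) ?_
  rw [← Module.End.mul_apply, (h.commute a ha b hb).eq, Module.End.mul_apply, hax, map_zero]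

theorem finiteDimensional_of_map_le [Infinite K] (h : IsLoweringSystem L D) [FiniteDimensional K V]
    (hV : V ≤ D n) (hW : W ≤ D (n + 1)) (hWV : ∀ b ∈ L, W.map b ≤ V)
    (hn : Module.finrank K V ≤ n) : FiniteDimensional K W := by
  obtain ⟨a, ha, haV⟩ := h.exists_disjoint_ker hV hn
  have haW := LinearMap.disjoint_ker_iff_injOn.mp (h.disjoint_ker_of_map_le hW hWV ha haV)
  refine FiniteDimensional.of_injective
    (a.restrict (Submodule.map_le_iff_le_comap.mp (hWV a ha))) fun x y hxy => ?_
  exact Subtype.ext (haW x.2 y.2 (congrArg Subtype.val hxy))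

theorem eq_bot_or_finrank_lt [IsAlgClosed K] (h : IsLoweringSystem L D) [FiniteDimensional K V]
    (hV : V ≤ D n) (hW : W ≤ D (n + 1)) (hWV : ∀ b ∈ L, W.map b ≤ V)
    (hn : Module.finrank K V ≤ n) (hpure : ∀ x ∈ W, IsPureVector L x → x = 0) :
    W = ⊥ ∨ Module.finrank K W < Module.finrank K V := by
  have : Infinite K := IsAlgClosed.instInfinite
  have hWfin : FiniteDimensional K W := h.finiteDimensional_of_map_le hV hW hWV hn
  by_contra! ⟨hWbot, hVW⟩
  obtain ⟨a, ha, haV⟩ := h.exists_disjoint_ker hV hn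
  have haW := h.disjoint_ker_of_map_le hW hWV ha haV
  have hmap : W.map a = V := by
    refine Submodule.eq_of_le_of_finrank_le (hWV a ha) ?_
    rwa [← finrank_map_add_finrank_inf_ker W a, haW.eq_bot, finrank_bot, add_zero] at hVW
  obtain ⟨x, hx, hx0, hxpure⟩ := exists_isPureVector_of_map_eq h.commute hWV hWbot ha haV haW hmap
  exact hx0 (hpure x hx hxpure)

theorem disjoint_ker_or_le_ker [IsAlgClosed K] (h : IsLoweringSystem L D) [FiniteDimensional K V]
    (hV : V ≤ D (n + 1)) (hW : W ≤ D (n + 2)) (hWV : ∀ b ∈ L, W.map b ≤ V)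
    (hn : Module.finrank K V ≤ n + 1) (hdrop : Module.finrank K V ≤ Module.finrank K W + 1)
    (hpureV : ∀ x ∈ V, IsPureVector L x → x = 0) (hpureW : ∀ x ∈ W, IsPureVector L x → x = 0)
    {m : Module.End K M} (hm : m ∈ L) :
    Disjoint W (LinearMap.ker m) ∨ V ≤ LinearMap.ker m ∧ W ≤ LinearMap.ker m := by
  have : Infinite K := IsAlgClosed.instInfinite
  have hWfin : FiniteDimensional K W := h.finiteDimensional_of_map_le hV hW hWV hn
  have hVker : FiniteDimensional K (V ⊓ LinearMap.ker m : Submodule K M) :=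
    Submodule.finiteDimensional_inf_left _ _
  have hrankV := finrank_map_add_finrank_inf_ker V m
  have hrankW := finrank_map_add_finrank_inf_ker W m
  have hcomm (b) (hb : b ∈ L) (x : M) : b (m x) = m (b x) :=
    LinearMap.congr_fun (h.commute b hb m hm) x
  refine or_iff_not_imp_left.mpr fun hWker => ?_
  have hker : Module.finrank K (W ⊓ LinearMap.ker m : Submodule K M) <
      Module.finrank K (V ⊓ LinearMap.ker m : Submodule K M) := by
    refine (h.eq_bot_or_finrank_lt (inf_le_left.trans hV) (inf_le_left.trans hW) ?_ (by omega)
      fun x hx => hpureW x hx.1).resolve_left (disjoint_iff.not.mp hWker)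
    rintro b hb _ ⟨x, ⟨hxW, hmx : m x = 0⟩, rfl⟩
    refine ⟨hWV b hb (Submodule.mem_map_of_mem hxW), ?_⟩
    rw [SetLike.mem_coe, LinearMap.mem_ker, ← hcomm b hb, hmx, map_zero]
  have hmW : W.map m = ⊥ := by
    refine (h.eq_bot_or_finrank_lt (n := n) (V := V.map m) ((Submodule.map_mono hV).trans
      (h.map_le n m hm)) ((Submodule.map_mono hW).trans (h.map_le (n + 1) m hm)) ?_ (by omega)
      fun x hx => hpureV x (hWV m hm hx)).resolve_right (by omega)
    rintro b hb _ ⟨_, ⟨x, hx, rfl⟩, rfl⟩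
    exact ⟨b x, hWV b hb (Submodule.mem_map_of_mem hx), (hcomm b hb x).symm⟩
  have hmV : V.map m = ⊥ := by
    rw [hmW, finrank_bot] at hrankW
    exact Submodule.finrank_eq_zero.mp (by omega)
  exact ⟨LinearMap.le_ker_iff_map.mpr hmV, LinearMap.le_ker_iff_map.mpr hmW⟩

end IsLoweringSystem

end LoweringSystem

section InverseSystem

/-- The contraction action of a commutative algebra on its dual: `f` sends the functional `φ` to
`g ↦ φ (f * g)`. -/
noncomputable def contraction (R A : Type*) [CommSemiring R] [CommSemiring A] [Algebra R A] :
    A →ₐ[R] Module.End R (Module.Dual R A) :=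
  AlgHom.ofLinearMap (Module.Dual.transpose ∘ₗ LinearMap.mul R A)
    (LinearMap.ext₂ fun φ g => congrArg φ (one_mul g))
    (fun f g => LinearMap.ext₂ fun φ h => congrArg φ (by simp [mul_left_comm, mul_assoc]))

theorem contraction_apply_apply {R A : Type*} [CommSemiring R] [CommSemiring A] [Algebra R A]
    (f g : A) (φ : Module.Dual R A) : contraction R A f φ g = φ (f * g) :=
  rfl

section CommSemiring

variable {σ R : Type*} [CommSemiring R]

theorem homogeneousComponent_add_mul {f : MvPolynomial σ R} {m : ℕ} (hf : f.IsHomogeneous m)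
    (n : ℕ) (g : MvPolynomial σ R) :
    homogeneousComponent (m + n) (f * g) = f * homogeneousComponent n g := by
  let _ := MvPolynomial.gradedAlgebra (σ := σ) (R := R)
  simpa only [← decomposition.decompose'_apply, DirectSum.Decomposition.decompose'_eq] using
    DirectSum.coe_decompose_mul_add_of_left_mem (homogeneousSubmodule σ R) (j := n) (b := g) hf

/-- The degree `t` part of the Macaulay inverse system of a submodule `N` of the polynomial ring,
i.e. the dual of `[S/N]_t`. It is encoded as a space of functionals on the whole polynomial ring
that vanish in all degrees other than `t`. -/
noncomputable def inverseSystem (N : Submodule R (MvPolynomial σ R)) (t : ℕ) :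
    Submodule R (Module.Dual R (MvPolynomial σ R)) :=
  (N.comap (homogeneousComponent t)).dualAnnihilator

variable (σ R) in
/-- The operators on the dual of the polynomial ring given by contraction by linear forms. -/
noncomputable def linearContractions :
    Submodule R (Module.End R (Module.Dual R (MvPolynomial σ R))) :=
  (homogeneousSubmodule σ R 1).map (contraction R (MvPolynomial σ R)).toLinearMap

theorem eval_zero_of_isHomogeneous {f : MvPolynomial σ R} {t : ℕ} (hf : f.IsHomogeneous t)
    (ht : t ≠ 0) : eval 0 f = 0 := by
  rw [eval_zero, constantCoeff_eq]
  exact hf.coeff_eq_zero (by simpa using ht.symm)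

variable {N N' : Submodule R (MvPolynomial σ R)} {φ : Module.Dual R (MvPolynomial σ R)}
  {f ℓ : MvPolynomial σ R} {t : ℕ}

theorem mem_inverseSystem : φ ∈ inverseSystem N t ↔ ∀ f, homogeneousComponent t f ∈ N → φ f = 0 :=
  Submodule.mem_dualAnnihilator φ

theorem inverseSystem_anti (h : N ≤ N') : inverseSystem N' t ≤ inverseSystem N t :=
  Submodule.dualAnnihilator_anti (Submodule.comap_mono h)

theorem apply_eq_zero_of_mem_inverseSystem (hφ : φ ∈ inverseSystem N t) (hf : f.IsHomogeneous t)
    (hfN : f ∈ N) : φ f = 0 :=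
  mem_inverseSystem.mp hφ f (by rwa [homogeneousComponent_eq_self hf])

theorem contraction_mem_inverseSystem (hℓ : ℓ.IsHomogeneous 1) (hN : ∀ f ∈ N, ℓ * f ∈ N)
    (hφ : φ ∈ inverseSystem N (t + 1)) : contraction R _ ℓ φ ∈ inverseSystem N t := by
  refine mem_inverseSystem.mpr fun f hf => mem_inverseSystem.mp hφ (ℓ * f) ?_
  rw [add_comm, homogeneousComponent_add_mul hℓ]
  exact hN _ hf

theorem contraction_eq_eval_smul {v : σ → R}
    (h : ∀ i, contraction R _ (X i) φ = v i • contraction R _ ℓ φ) (hf : f.IsHomogeneous t) :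
    contraction R _ f φ = eval v f • contraction R _ (ℓ ^ t) φ := by
  have hlin (x : MvPolynomial σ R) (hx : x ∈ homogeneousSubmodule σ R 1) :
      contraction R _ x φ = eval v x • contraction R _ ℓ φ := by
    rw [homogeneousSubmodule_one_eq_span_X] at hx
    induction hx using Submodule.span_induction with
    | mem x hx =>
      obtain ⟨i, rfl⟩ := hx
      rw [h, eval_X]
    | zero => simp
    | add x y _ _ hx hy => simp only [map_add, LinearMap.add_apply, hx, hy, add_smul]
    | smul c x _ hx => simp only [map_smul, LinearMap.smul_apply, hx, smul_eval, mul_smul]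
  rw [← mem_homogeneousSubmodule, ← homogeneousSubmodule_one_pow] at hf
  induction hf using Submodule.pow_induction_on_left' with
  | algebraMap c => simp [← algebraMap_eq]
  | add f g t _ _ hf hg => simp only [map_add, LinearMap.add_apply, hf, hg, add_smul]
  | mem_mul x hx t f _ hf =>
    have hswap : contraction R _ x (contraction R _ (ℓ ^ t) φ) =
        contraction R _ (ℓ ^ t) (contraction R _ x φ) := by
      simp only [← Module.End.mul_apply, ← map_mul, mul_comm x]
    rw [map_mul, Module.End.mul_apply, hf, map_smul, hswap, hlin x hx, map_smul, smul_smul,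
      map_mul, mul_comm (eval v f), pow_succ, map_mul, Module.End.mul_apply]

theorem IsPureVector.exists_apply_eq_eval_mul (hφ : IsPureVector (linearContractions σ R) φ)
    (t : ℕ) :
    ∃ (v : σ → R) (c : R), ∀ f : MvPolynomial σ R, f.IsHomogeneous t → φ f = eval v f * c := by
  obtain ⟨_, ⟨ℓ, -, rfl⟩, h⟩ := hφ
  choose v hv using fun i => h _ ⟨X i, isHomogeneous_X R i, rfl⟩
  refine ⟨v, φ (ℓ ^ t), fun f hf => ?_⟩
  simpa only [contraction_apply_apply, LinearMap.smul_apply, smul_eq_mul, mul_one] using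
    LinearMap.congr_fun (contraction_eq_eval_smul (f := f) hv hf) 1

end CommSemiring

section CommRing

variable {σ R : Type*} [CommRing R]

theorem eq_zero_of_mem_inverseSystem {N : Submodule R (MvPolynomial σ R)}
    {φ : Module.Dual R (MvPolynomial σ R)} {t : ℕ} (hφ : φ ∈ inverseSystem N t)
    (h : ∀ f : MvPolynomial σ R, f.IsHomogeneous t → φ f = 0) : φ = 0 := by
  refine LinearMap.ext fun f => ?_
  have hcomp : φ (f - homogeneousComponent t f) = 0 := by
    refine mem_inverseSystem.mp hφ _ ?_
    rw [map_sub, homogeneousComponent_eq_self (homogeneousComponent_mem t f), sub_self]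
    exact N.zero_mem
  rw [map_sub, h _ (homogeneousComponent_mem t f), sub_zero] at hcomp
  exact hcomp

theorem isLoweringSystem_inverseSystem_bot :
    IsLoweringSystem (linearContractions σ R) (inverseSystem ⊥) where
  commute := by
    rintro _ ⟨a, -, rfl⟩ _ ⟨b, -, rfl⟩
    exact (Commute.all a b).map (contraction R (MvPolynomial σ R))
  map_le := by
    rintro n _ ⟨a, ha, rfl⟩ _ ⟨φ, hφ, rfl⟩
    exact contraction_mem_inverseSystem ha (by simp) hφ
  eq_zero n φ hφ h := by
    refine eq_zero_of_mem_inverseSystem hφ fun f hf => ?_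
    have hX (i : σ) : contraction R _ (X i) φ = (0 : σ → R) i • contraction R _ 0 φ := by
      have hXφ : contraction R _ (X i) φ = 0 := h _ ⟨X i, isHomogeneous_X R i, rfl⟩
      rw [hXφ, Pi.zero_apply, zero_smul]
    simpa [eval_zero_of_isHomogeneous hf, contraction_apply_apply] using
      LinearMap.congr_fun (contraction_eq_eval_smul hX hf) 1

theorem eq_zero_of_isPureVector_of_mem_inverseSystem [IsDomain R] {J : Ideal (MvPolynomial σ R)}
    {n t : ℕ} {φ : Module.Dual R (MvPolynomial σ R)}
    (hbpf : ∀ v : σ → R, v ≠ 0 → ∃ f ∈ J, f.IsHomogeneous n ∧ eval v f ≠ 0) (ht : t ≠ 0)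
    (hnt : n ≤ t) (hφ : φ ∈ inverseSystem (J.restrictScalars R) t)
    (hpure : IsPureVector (linearContractions σ R) φ) : φ = 0 := by
  obtain ⟨v, c, hφv⟩ := hpure.exists_apply_eq_eval_mul t
  refine eq_zero_of_mem_inverseSystem hφ fun f hf => ?_
  rw [hφv f hf]
  obtain rfl | hv := eq_or_ne v 0
  · rw [eval_zero_of_isHomogeneous hf ht, zero_mul]
  · obtain ⟨g, hgJ, hg, hgv⟩ := hbpf v hv
    obtain ⟨i, hi⟩ := Function.ne_iff.mp hv
    have hgX : (g * X i ^ (t - n)).IsHomogeneous t := by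
      simpa [Nat.add_sub_cancel' hnt] using hg.mul (isHomogeneous_X_pow i (t - n))
    have hzero : eval v (g * X i ^ (t - n)) * c = 0 := by
      rw [← hφv _ hgX]
      exact apply_eq_zero_of_mem_inverseSystem hφ hgX (J.mul_mem_right _ hgJ)
    have hne : eval v (g * X i ^ (t - n)) ≠ 0 := by simpa using ⟨hgv, fun h => absurd h hi⟩
    rw [(mul_eq_zero.mp hzero).resolve_left hne, mul_zero]

end CommRing

section Field

variable {σ K : Type*} [Field K] {N : Submodule K (MvPolynomial σ K)}
  {f ℓ : MvPolynomial σ K} {t : ℕ}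

theorem mem_of_forall_mem_inverseSystem (hf : f.IsHomogeneous t)
    (h : ∀ φ ∈ inverseSystem N t, φ f = 0) : f ∈ N := by
  have := (Subspace.forall_mem_dualAnnihilator_apply_eq_zero_iff _ f).mp h
  rwa [Submodule.mem_comap, homogeneousComponent_eq_self hf] at this

theorem finrank_inverseSystem (J : Ideal (MvPolynomial σ K)) (t : ℕ) :
    Module.finrank K (inverseSystem (J.restrictScalars K) t) = hilb J t := by
  let q := (Ideal.Quotient.mkₐ K J).toLinearMap ∘ₗ homogeneousComponent t
  have hker : (J.restrictScalars K).comap (homogeneousComponent t) = LinearMap.ker q := by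
    ext f
    exact Ideal.Quotient.eq_zero_iff_mem.symm
  have hrange : LinearMap.range (homogeneousComponent t) = homogeneousSubmodule σ K t :=
    le_antisymm (LinearMap.range_le_iff_comap.mpr <| Submodule.eq_top_iff'.mpr <|
      homogeneousComponent_mem t) fun f hf => ⟨f, homogeneousComponent_eq_self hf⟩
  rw [inverseSystem, hker, ← (LinearMap.ker q).dualQuotEquivDualAnnihilator.finrank_eq,
    Subspace.dual_finrank_eq, q.quotKerEquivRange.finrank_eq, LinearMap.range_comp, hrange, hilb]

theorem mul_mem_of_inverseSystem_le_ker (hℓ : ℓ.IsHomogeneous 1)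
    (h : inverseSystem N (t + 1) ≤ LinearMap.ker (contraction K _ ℓ)) (hf : f.IsHomogeneous t) :
    ℓ * f ∈ N := by
  refine mem_of_forall_mem_inverseSystem (add_comm t 1 ▸ hℓ.mul hf) fun φ hφ => ?_
  exact LinearMap.congr_fun (LinearMap.mem_ker.mp (h hφ)) f

theorem exists_sub_mul_mem_of_disjoint_ker (hℓ : ℓ.IsHomogeneous 1)
    (h : Disjoint (inverseSystem N (t + 1)) (LinearMap.ker (contraction K _ ℓ)))
    (hf : f.IsHomogeneous (t + 1)) : ∃ g : MvPolynomial σ K, g.IsHomogeneous t ∧ f - ℓ * g ∈ N := by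
  let ℓS := (homogeneousSubmodule σ K t).map (LinearMap.mulLeft K ℓ)
  suffices f ∈ ℓS ⊔ N by
    obtain ⟨_, ⟨g, hg, rfl⟩, p, hp, rfl⟩ := Submodule.mem_sup.mp this
    exact ⟨g, hg, by simpa using hp⟩
  refine mem_of_forall_mem_inverseSystem hf fun φ hφ => ?_
  have hφℓ : contraction K _ ℓ φ = 0 := by
    refine LinearMap.ext fun g => mem_inverseSystem.mp hφ (ℓ * g) (Submodule.mem_sup_left ?_)
    rw [add_comm, homogeneousComponent_add_mul hℓ]
    exact Submodule.mem_map_of_mem (homogeneousComponent_mem t g)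
  rw [LinearMap.disjoint_ker.mp h φ (inverseSystem_anti le_sup_right hφ) hφℓ, LinearMap.zero_apply]

end Field

end InverseSystem

theorem artinian_multiplication_surjective_or_zero_general
    {σ K : Type*} [Field K] [IsAlgClosed K] {n : ℕ} (J : Ideal (MvPolynomial σ K))
    (hpos : 0 < hilb J n) (hn : hilb J n ≤ n) (hdrop : hilb J n ≤ hilb J (n + 1) + 1)
    (hbpf : ∀ v : σ → K, v ≠ 0 → ∃ f ∈ J, f.IsHomogeneous n ∧ eval v f ≠ 0)
    (ℓ : MvPolynomial σ K) (hℓ : ℓ.IsHomogeneous 1) :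
    (∀ g : MvPolynomial σ K, g.IsHomogeneous (n + 1) →
      ∃ h : MvPolynomial σ K, h.IsHomogeneous n ∧ g - ℓ * h ∈ J) ∨
    ((∀ h : MvPolynomial σ K, h.IsHomogeneous n → ℓ * h ∈ J) ∧
      (∀ h : MvPolynomial σ K, h.IsHomogeneous (n - 1) → ℓ * h ∈ J)) := by
  obtain ⟨n, rfl⟩ : ∃ m, n = m + 1 := ⟨n - 1, by omega⟩
  simp only [← finrank_inverseSystem] at hpos hn hdrop
  have hfin : FiniteDimensional K (inverseSystem (J.restrictScalars K) (n + 1)) :=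
    FiniteDimensional.of_finrank_pos hpos
  have hlower : ∀ b ∈ linearContractions σ K,
      (inverseSystem (J.restrictScalars K) (n + 2)).map b ≤
        inverseSystem (J.restrictScalars K) (n + 1) := by
    rintro _ ⟨a, ha, rfl⟩ _ ⟨φ, hφ, rfl⟩
    exact contraction_mem_inverseSystem ha (fun f hf => J.mul_mem_left a hf) hφ
  have hpure (t : ℕ) (ht : n + 1 ≤ t) : ∀ φ ∈ inverseSystem (J.restrictScalars K) t,
      IsPureVector (linearContractions σ K) φ → φ = 0 := fun φ =>
    eq_zero_of_isPureVector_of_mem_inverseSystem hbpf (by omega) ht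
  have hL : IsLoweringSystem (linearContractions σ K) (inverseSystem ⊥) :=
    isLoweringSystem_inverseSystem_bot
  obtain hdisj | ⟨hV, hW⟩ := hL.disjoint_ker_or_le_ker
    (inverseSystem_anti bot_le) (inverseSystem_anti bot_le) hlower hn hdrop
    (hpure (n + 1) le_rfl) (hpure (n + 2) (by omega)) (Submodule.mem_map_of_mem hℓ)
  · exact .inl fun g hg => exists_sub_mul_mem_of_disjoint_ker hℓ hdisj hg
  · exact .inr ⟨fun h hh => mul_mem_of_inverseSystem_le_ker hℓ hW hh,
      fun h hh => mul_mem_of_inverseSystem_le_ker hℓ hV hh⟩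

/-- **Proposition (multiplication by linear forms is surjective or zero).**
Let `K` be algebraically closed, `S = K[x_1,…,x_r]`, and `J ⊆ S` a homogeneous artinian ideal
with `dim [S/J]_n = k`, `dim [S/J]_{n+1} = k-1` (`2 ≤ k ≤ n`), `[S/J]_t = 0` for `t ≥ n+2`,
no minimal generator of `J` in degree `n+1`, and such that the forms in `[J]_n` have no common
zero in `ℙ^{r-1}`.  Then for every linear form `ℓ`, the multiplication map
`×ℓ : [S/J]_n → [S/J]_{n+1}` is either surjective or the zero map; and whenever it is the zero
map, `×ℓ : [S/J]_{n-1} → [S/J]_n` is also zero, i.e. `ℓ·[S]_{n-1} ⊆ J` and `ℓ·[S]_n ⊆ J`. -/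
theorem artinian_multiplication_surjective_or_zero
    {K : Type*} [Field K] [IsAlgClosed K] {r n k : ℕ}
    (J : Ideal (MvPolynomial (Fin r) K))
    (hJhom : ∀ f ∈ J, ∀ t : ℕ, homogeneousComponent t f ∈ J)
    (hk : 2 ≤ k) (hkn : k ≤ n)
    (hn : hilb J n = k) (hn1 : hilb J (n + 1) + 1 = k)
    (htail : ∀ t, n + 2 ≤ t → hilb J t = 0)
    (hnomingen : ∀ f ∈ J, f.IsHomogeneous (n + 1) → f ∈ compIdeal J n)
    (hbpf : ∀ v : Fin r → K, v ≠ 0 → ∃ f ∈ J, f.IsHomogeneous n ∧ eval v f ≠ 0) :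
    ∀ ℓ : MvPolynomial (Fin r) K, ℓ.IsHomogeneous 1 →
      (∀ g : MvPolynomial (Fin r) K, g.IsHomogeneous (n + 1) →
        ∃ h : MvPolynomial (Fin r) K, h.IsHomogeneous n ∧ g - ℓ * h ∈ J) ∨
      ((∀ h : MvPolynomial (Fin r) K, h.IsHomogeneous n → ℓ * h ∈ J) ∧
        (∀ h : MvPolynomial (Fin r) K, h.IsHomogeneous (n - 1) → ℓ * h ∈ J)) := by
  exact artinian_multiplication_surjective_or_zero_general J (by omega) (by omega) (by omega) hbpf
end
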